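/- Let r,s ∈ (4/3,∞] with 1 < 2/r + 3/s < 3/2. Suppose that for some ν > 0 the set of data u₀ ∈ L²_σ admitting a weak solution u ∈ W_ν(u₀) with ‖u‖_{L^r(0,∞;L^s)} < ∞ is non-meagre in L²_σ. Then there exists C > 0 such that for every ν > 0 and every u₀ ∈ L²_σ there exists a weak solution u^ν ∈ W_ν(u₀) with ‖u^ν‖_{L^∞(0,∞;L²)} + √ν ‖∇u^ν‖_{L²(0,∞;L²)} ≤ C ‖u₀‖_{L²} and ‖u^ν‖_{L^r(0,∞;L^s)} ≤ C ν^{−3(5/(3r)+2/s−1)} ‖u₀‖_{L²}^{2(2/r+3/s−1)}. (This is the implication (i) ⇒ (ii) of the main theorem in the case X = L^s(ℝ³;ℝ³), Z = L²_σ.) -/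

import Mathlib

open MeasureTheory ENNReal Set Filter

noncomputable section

abbrev E3 : Type := EuclideanSpace ℝ (Fin 3)

/-- Spatial partial derivative of a scalar function in the `j`-th coordinate direction. -/
def pd (f : E3 → ℝ) (j : Fin 3) (x : E3) : ℝ :=
  fderiv ℝ f x (EuclideanSpace.single j 1)

/-- Divergence-free in the sense of distributions. -/
def IsDivFree (v : E3 → E3) : Prop :=
  ∀ φ : E3 → ℝ, ContDiff ℝ (⊤ : ℕ∞) φ → HasCompactSupport φ →
    ∫ x : E3, ∑ i, v x i * pd φ i x = 0

/-- The space-time measure on `(0,∞) × ℝ³`. -/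
def μST : Measure (ℝ × E3) := (volume.restrict (Ioi (0:ℝ))).prod volume

/-- Mixed norm `L^r(I; L^s)`. -/
def mixedNorm (r s : ℝ≥0∞) (I : Set ℝ) (u : ℝ → E3 → E3) : ℝ≥0∞ :=
  if r = ∞ then essSup (fun t => eLpNorm (u t) s volume) (volume.restrict I)
  else (∫⁻ t in I, (eLpNorm (u t) s volume) ^ r.toReal) ^ (1 / r.toReal)

/-- Squared spatial `L²` norm of the (matrix-valued) gradient at time `t`. -/
def gradSq (G : ℝ → E3 → Fin 3 → Fin 3 → ℝ) (t : ℝ) : ℝ≥0∞ :=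
  ∫⁻ x : E3, ∑ i, ∑ j, ENNReal.ofReal ((G t x i j) ^ 2)

/-- `L²((0,∞); L²)` norm of the gradient. -/
def gradL2 (G : ℝ → E3 → Fin 3 → Fin 3 → ℝ) : ℝ≥0∞ :=
  (∫⁻ t in Ioi (0:ℝ), gradSq G t) ^ (1/2 : ℝ)

/-- `G` is the distributional spatial gradient of `u` on `ℝ³ × (0,∞)`. -/
def IsDistGrad (u : ℝ → E3 → E3) (G : ℝ → E3 → Fin 3 → Fin 3 → ℝ) : Prop :=
  ∀ ψ : ℝ × E3 → ℝ, ContDiff ℝ (⊤ : ℕ∞) ψ → HasCompactSupport ψ →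
    tsupport ψ ⊆ {p | 0 < p.1} → ∀ i j,
    (∫ p, u p.1 p.2 i * pd (fun y => ψ (p.1, y)) j p.2 ∂μST)
      = - ∫ p, G p.1 p.2 i j * ψ p ∂μST

/-- Admissible space-time test function: smooth, compactly supported in `ℝ³ × [0,∞)`
and divergence-free. -/
def IsTest (φ : ℝ × E3 → E3) : Prop :=
  ContDiff ℝ (⊤ : ℕ∞) φ ∧ HasCompactSupport φ ∧
    ∀ p : ℝ × E3, ∑ i, pd (fun y => φ (p.1, y) i) i p.2 = 0

def timeDeriv (φ : ℝ × E3 → E3) (p : ℝ × E3) (i : Fin 3) : ℝ :=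
  deriv (fun τ => φ (τ, p.2) i) p.1

def spaceLap (φ : ℝ × E3 → E3) (p : ℝ × E3) (i : Fin 3) : ℝ :=
  ∑ j, pd (fun y => pd (fun z => φ (p.1, z) i) j y) j p.2

def spaceGrad (φ : ℝ × E3 → E3) (p : ℝ × E3) (i j : Fin 3) : ℝ :=
  pd (fun y => φ (p.1, y) i) j p.2

/-- Weak solution of the Navier–Stokes equations on `ℝ³ × (0,∞)` with viscosity `ν`,
datum `u₀` and distributional spatial gradient `G`. -/
def IsWeakNS (ν : ℝ) (u₀ : E3 → E3) (u : ℝ → E3 → E3)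
    (G : ℝ → E3 → Fin 3 → Fin 3 → ℝ) : Prop :=
  AEStronglyMeasurable (Function.uncurry u) μST ∧
  mixedNorm ∞ 2 (Ioi 0) u < ∞ ∧
  (∀ᵐ t ∂(volume.restrict (Ioi (0:ℝ))), IsDivFree (u t)) ∧
  AEStronglyMeasurable (Function.uncurry G) μST ∧
  (∫⁻ t in Ioi (0:ℝ), gradSq G t) < ∞ ∧
  IsDistGrad u G ∧
  ∀ φ : ℝ × E3 → E3, IsTest φ →
    (∫ p,
        ((∑ i, u p.1 p.2 i * (timeDeriv φ p i + ν * spaceLap φ p i)) +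
         ∑ i, ∑ j, u p.1 p.2 i * u p.1 p.2 j * spaceGrad φ p i j) ∂μST)
      = - ∫ x : E3, ∑ i, u₀ x i * φ (0, x) i

/-- Leray–Hopf solution: weak solution satisfying the energy inequality. -/
def IsLerayHopf (ν : ℝ) (u₀ : E3 → E3) (u : ℝ → E3 → E3)
    (G : ℝ → E3 → Fin 3 → Fin 3 → ℝ) : Prop :=
  IsWeakNS ν u₀ u G ∧
  ∀ᵐ t ∂(volume.restrict (Ioi (0:ℝ))),
    ENNReal.ofReal (1/2) * (eLpNorm (u t) 2 volume) ^ (2:ℕ)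
        + ENNReal.ofReal ν * ∫⁻ τ in Ioc (0:ℝ) t, gradSq G τ
      ≤ ENNReal.ofReal (1/2) * (eLpNorm u₀ 2 volume) ^ (2:ℕ)

/-- `L²_σ`: divergence-free fields in `L²(ℝ³;ℝ³)`, as a subset of `L²`. -/
def L2σ : Set (Lp E3 2 (volume : Measure E3)) := {v | IsDivFree ⇑v}

/-!
For fixed `n`, the set of data admitting a weak solution whose norms are bounded by `n` is closed,
so by the Baire category theorem a non-meagre union of these sets contains a ball of `L²_σ`, centred
at some `v₀`, on which one bound holds. Translation invariance removes the centre: for small `w` the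
data `v₀(· + z) + w` obey this bound and converge weakly to `w` as `z → ∞`. Scaling then
carries the bound from small data at one viscosity to all data at all viscosities.

The closedness holds even for weak limits of data, by compactness of bounded families of solutions.
The nonlinearity needs local strong compactness. The error made by mollifying `u` at scale `ε` is at
most `C ε ‖∇u‖`. The mollifier is built from smoothed Newtonian potentials, so its dilates at scales
`ε` and `R` differ by a Laplacian `Δη`. The part at scale `R` vanishes in `L²` as `R → ∞`, whereas
`u * Δη` is, up to sign, the pairing of `u` with the solenoidal kernels `curl curl (η eᵢ)`, hence
Lipschitz in time by the equation with the pressure eliminated.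
-/

open scoped Topology

/-! ### Partial derivatives and the Laplacian -/

section PartialDerivative

variable {f g : E3 → ℝ} {j : Fin 3} {x : E3}

lemma pd_const_mul (c : ℝ) (f : E3 → ℝ) (j : Fin 3) (x : E3) :
    pd (fun y => c * f y) j x = c * pd f j x := by
  rw [pd, show (fun y => c * f y) = c • f from rfl, fderiv_const_smul_field]
  rfl

lemma pd_mul (hf : DifferentiableAt ℝ f x) (hg : DifferentiableAt ℝ g x) :
    pd (fun y => f y * g y) j x = f x * pd g j x + pd f j x * g x := by
  simp [pd, fderiv_fun_mul hf hg, mul_comm (g x)]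

lemma pd_sub (hf : DifferentiableAt ℝ f x) (hg : DifferentiableAt ℝ g x) :
    pd (fun y => f y - g y) j x = pd f j x - pd g j x := by
  simp [pd, fderiv_fun_sub hf hg]

lemma pd_comp_smul (c : ℝ) (f : E3 → ℝ) (j : Fin 3) (x : E3) :
    pd (fun y => f (c • y)) j x = c * pd f j (c • x) := by
  simp [pd, fderiv_comp_smul (f := f) c]

lemma pd_comp_add_right (z : E3) (f : E3 → ℝ) (j : Fin 3) (x : E3) :
    pd (fun y => f (y + z)) j x = pd f j (x + z) := by
  simp [pd, fderiv_comp_add_right]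

lemma contDiff_pd (hf : ContDiff ℝ (⊤ : ℕ∞) f) (j : Fin 3) : ContDiff ℝ (⊤ : ℕ∞) (pd f j) :=
  (hf.fderiv_right (m := (⊤ : ℕ∞)) (by simp)).clm_apply contDiff_const

lemma differentiable_pd (hf : ContDiff ℝ (⊤ : ℕ∞) f) (j : Fin 3) : Differentiable ℝ (pd f j) :=
  (contDiff_pd hf j).differentiable (by simp)

lemma hasCompactSupport_pd (hf : HasCompactSupport f) (j : Fin 3) : HasCompactSupport (pd f j) :=
  (hf.fderiv ℝ).mono' fun x hx => by
    contrapose! hx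
    simp [pd, image_eq_zero_of_notMem_tsupport hx]

lemma pd_apply (i j : Fin 3) (x : E3) : pd (fun y => y i) j x = if i = j then 1 else 0 := by
  have h : HasFDerivAt (fun y : E3 => y i) (EuclideanSpace.proj i : E3 →L[ℝ] ℝ) x :=
    (EuclideanSpace.proj i : E3 →L[ℝ] ℝ).hasFDerivAt
  simp [pd, h.fderiv]

lemma pd_comp_norm_sq {q : ℝ → ℝ} (hq : Differentiable ℝ q) (j : Fin 3) (x : E3) :
    pd (fun y : E3 => q (‖y‖ ^ 2)) j x = 2 * deriv q (‖x‖ ^ 2) * x j := by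
  have h := (hq (‖x‖ ^ 2)).hasDerivAt.comp_hasFDerivAt x (hasStrictFDerivAt_norm_sq x).hasFDerivAt
  rw [pd, show (fun y : E3 => q (‖y‖ ^ 2)) = q ∘ fun y => ‖y‖ ^ 2 from rfl, h.fderiv]
  simp only [smul_apply, coe_innerSL_apply, EuclideanSpace.inner_single_right,
    Real.ringHom_apply, one_mul, nsmul_eq_mul, Nat.cast_ofNat, smul_eq_mul]
  ring

/-- The Laplacian of a scalar function on `ℝ³`, written with the partial derivatives `pd`. -/
def lap (f : E3 → ℝ) (x : E3) : ℝ := ∑ j, pd (pd f j) j x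

lemma contDiff_lap (hf : ContDiff ℝ (⊤ : ℕ∞) f) : ContDiff ℝ (⊤ : ℕ∞) (lap f) :=
  ContDiff.sum fun j _ => contDiff_pd (contDiff_pd hf j) j

lemma lap_const_mul (c : ℝ) (f : E3 → ℝ) (x : E3) :
    lap (fun y => c * f y) x = c * lap f x := by
  simp only [lap, funext (pd_const_mul c f _), pd_const_mul, Finset.mul_sum]

lemma lap_comp_smul (c : ℝ) (f : E3 → ℝ) (x : E3) :
    lap (fun y => f (c • y)) x = c ^ 2 * lap f (c • x) := by
  simp only [lap, funext (pd_comp_smul c f _), pd_const_mul, pd_comp_smul, Finset.mul_sum]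
  exact Finset.sum_congr rfl fun j _ => by ring

lemma lap_comp_add_right (z : E3) (f : E3 → ℝ) (x : E3) :
    lap (fun y => f (y + z)) x = lap f (x + z) := by
  simp only [lap, funext (pd_comp_add_right z f _), pd_comp_add_right]

lemma lap_sub (hf : ContDiff ℝ (⊤ : ℕ∞) f) (hg : ContDiff ℝ (⊤ : ℕ∞) g) (x : E3) :
    lap (fun y => f y - g y) x = lap f x - lap g x := by
  have h (j : Fin 3) : pd (fun y => f y - g y) j = fun y => pd f j y - pd g j y :=
    funext fun y => pd_sub (hf.differentiable (by simp) y) (hg.differentiable (by simp) y)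
  simp only [lap, h, pd_sub (differentiable_pd hf _ x) (differentiable_pd hg _ x),
    Finset.sum_sub_distrib]

lemma lap_comp_norm_sq {f : ℝ → ℝ} (hf : ContDiff ℝ (⊤ : ℕ∞) f) (x : E3) :
    lap (fun y => f (‖y‖ ^ 2)) x
      = 4 * ‖x‖ ^ 2 * deriv (deriv f) (‖x‖ ^ 2) + 6 * deriv f (‖x‖ ^ 2) := by
  have hd' : Differentiable ℝ (deriv f) :=
    (contDiff_infty_iff_deriv.1 hf).2.differentiable (by simp)
  have h (j : Fin 3) : pd (pd (fun y : E3 => f (‖y‖ ^ 2)) j) j x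
      = 4 * deriv (deriv f) (‖x‖ ^ 2) * x j ^ 2 + 2 * deriv f (‖x‖ ^ 2) := by
    have hfj : pd (fun y : E3 => f (‖y‖ ^ 2)) j = fun y => 2 * (deriv f (‖y‖ ^ 2) * y j) := by
      ext y
      rw [pd_comp_norm_sq (hf.differentiable (by simp)), mul_assoc]
    have hq : DifferentiableAt ℝ (fun y : E3 => deriv f (‖y‖ ^ 2)) x :=
      (hd'.comp ((contDiff_norm_sq ℝ).differentiable one_ne_zero)) x
    rw [hfj, pd_const_mul, pd_mul hq (by fun_prop), pd_comp_norm_sq hd', pd_apply, if_pos rfl]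
    ring
  simp only [lap, h, EuclideanSpace.norm_sq_eq x, Fin.sum_univ_three, Real.norm_eq_abs, sq_abs]
  ring

end PartialDerivative

/-! ### A mollifier whose dilates differ by Laplacians -/

/-- A smooth profile `f` for which `x ↦ f (‖x‖ ^ 2)` is the Newtonian potential `‖x‖⁻¹` smoothed
out inside the unit ball. -/
structure IsNewtonianProfile (f : ℝ → ℝ) : Prop where
  contDiff : ContDiff ℝ (⊤ : ℕ∞) f
  eq_rpow : ∀ s, 1 ≤ s → f s = s ^ (-(1 / 2) : ℝ)

lemma exists_isNewtonianProfile : ∃ f : ℝ → ℝ, IsNewtonianProfile f := by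
  refine ⟨fun s => Real.smoothTransition (2 * s - 1) * s ^ (-(1 / 2) : ℝ),
    contDiff_iff_contDiffAt.2 fun s => ?_, fun s hs => ?_⟩
  · by_cases hs : s < 1 / 2
    · refine (contDiffAt_const (c := (0 : ℝ))).congr_of_eventuallyEq ?_
      filter_upwards [Iio_mem_nhds hs] with y (hy : y < 1 / 2)
      rw [Real.smoothTransition.zero_of_nonpos (by linarith), zero_mul]
    · exact (Real.smoothTransition.contDiff.contDiffAt.comp s (by fun_prop)).mul
        (Real.contDiffAt_rpow_const_of_ne (by linarith))
  · rw [Real.smoothTransition.one_of_one_le (by linarith), one_mul]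

namespace IsNewtonianProfile

variable {f : ℝ → ℝ}

lemma contDiff_deriv (hf : IsNewtonianProfile f) : ContDiff ℝ (⊤ : ℕ∞) (deriv f) :=
  (contDiff_infty_iff_deriv.1 hf.contDiff).2

lemma contDiff_comp_norm_sq (hf : IsNewtonianProfile f) :
    ContDiff ℝ (⊤ : ℕ∞) fun x : E3 => f (‖x‖ ^ 2) :=
  hf.contDiff.comp (contDiff_norm_sq ℝ)

lemma comp_norm_sq (hf : IsNewtonianProfile f) {x : E3} (hx : 1 ≤ ‖x‖) :
    f (‖x‖ ^ 2) = ‖x‖⁻¹ := by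
  rw [hf.eq_rpow _ (by nlinarith), ← Real.rpow_natCast, ← Real.rpow_mul (norm_nonneg _),
    ← Real.rpow_neg_one]
  norm_num

lemma deriv_sq (hf : IsNewtonianProfile f) {r : ℝ} (hr : 1 < r) :
    deriv f (r ^ 2) = -(1 / 2) * (r ^ 3)⁻¹ := by
  have h : f =ᶠ[𝓝 (r ^ 2)] fun s => s ^ (-(1 / 2) : ℝ) := by
    filter_upwards [Ioi_mem_nhds (show 1 < r ^ 2 by nlinarith)] with s hs using hf.eq_rpow s hs.le
  have hpow : (r ^ 2) ^ (-(1 / 2) - 1 : ℝ) = (r ^ 3)⁻¹ := by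
    rw [← Real.rpow_natCast, ← Real.rpow_mul (by linarith), ← Real.rpow_natCast r 3,
      ← Real.rpow_neg (by linarith)]
    norm_num
  rw [h.deriv_eq, Real.deriv_rpow_const, hpow]

/-- The flux of `∇ f (‖x‖ ^ 2)` through the sphere of radius `r`, up to the factor `4 π`. -/
def flux (f : ℝ → ℝ) (r : ℝ) : ℝ := 2 * r ^ 3 * deriv f (r ^ 2)

lemma flux_eq_neg_one (hf : IsNewtonianProfile f) {r : ℝ} (hr : 1 < r) : flux f r = -1 := by
  rw [flux, hf.deriv_sq hr]
  field_simp

lemma hasDerivAt_flux (hf : IsNewtonianProfile f) (r : ℝ) :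
    HasDerivAt (flux f)
      (r ^ 2 * (4 * r ^ 2 * deriv (deriv f) (r ^ 2) + 6 * deriv f (r ^ 2))) r := by
  have hcube : HasDerivAt (fun r : ℝ => 2 * r ^ 3) (2 * (3 * r ^ 2)) r := by
    simpa using (hasDerivAt_pow 3 r).const_mul 2
  have hsq : HasDerivAt (fun r : ℝ => r ^ 2) (2 * r) r := by simpa using hasDerivAt_pow 2 r
  have hf' : DifferentiableAt ℝ (deriv f) (r ^ 2) := hf.contDiff_deriv.differentiable (by simp) _
  exact (hcube.mul (hf'.hasDerivAt.comp (h := fun r => r ^ 2) r hsq)).congr_deriv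
    (by simp only [Function.comp_apply]; ring)

lemma radial_laplacian_eq_zero (hf : IsNewtonianProfile f) {r : ℝ} (hr : 1 < r) :
    4 * r ^ 2 * deriv (deriv f) (r ^ 2) + 6 * deriv f (r ^ 2) = 0 := by
  have hconst : flux f =ᶠ[𝓝 r] fun _ => -1 := by
    filter_upwards [Ioi_mem_nhds hr] with s hs using hf.flux_eq_neg_one hs
  have h := (hf.hasDerivAt_flux r).deriv
  rw [hconst.deriv_eq, deriv_const] at h
  exact (mul_eq_zero.1 h.symm).resolve_left (by positivity)

lemma lap_eq_zero (hf : IsNewtonianProfile f) {x : E3} (hx : 1 < ‖x‖) :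
    lap (fun y => f (‖y‖ ^ 2)) x = 0 := by
  rw [lap_comp_norm_sq hf.contDiff, hf.radial_laplacian_eq_zero hx]

lemma integral_lap (hf : IsNewtonianProfile f) :
    ∫ x, lap (fun y => f (‖y‖ ^ 2)) x = -(3 * (volume : Measure E3).real (Metric.ball 0 1)) := by
  have hf'' : Continuous (deriv (deriv f)) :=
    (contDiff_infty_iff_deriv.1 hf.contDiff_deriv).2.continuous
  have hcont : Continuous fun r : ℝ =>
      r ^ 2 * (4 * r ^ 2 * deriv (deriv f) (r ^ 2) + 6 * deriv f (r ^ 2)) := by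
    have := hf.contDiff_deriv.continuous
    fun_prop
  have hint : IntegrableOn (fun r : ℝ =>
      r ^ 2 * (4 * r ^ 2 * deriv (deriv f) (r ^ 2) + 6 * deriv f (r ^ 2))) (Ioi 0) := by
    rw [← Ioc_union_Ioi_eq_Ioi (zero_le_one (α := ℝ))]
    refine (hcont.integrableOn_Icc.mono_set Ioc_subset_Icc_self).union
      (integrableOn_zero.congr_fun (fun r (hr : 1 < r) => ?_) measurableSet_Ioi)
    simp only [hf.radial_laplacian_eq_zero hr, mul_zero]
  have hlim : Tendsto (flux f) atTop (𝓝 (-1)) := tendsto_const_nhds.congr' <| by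
    filter_upwards [Ioi_mem_atTop 1] with r hr using (hf.flux_eq_neg_one hr).symm
  have hradial := integral_Ioi_of_hasDerivAt_of_tendsto' (fun r _ => hf.hasDerivAt_flux r) hint hlim
  simp_rw [lap_comp_norm_sq hf.contDiff]
  rw [integral_fun_norm_addHaar volume
    (fun r : ℝ => 4 * r ^ 2 * deriv (deriv f) (r ^ 2) + 6 * deriv f (r ^ 2))]
  simp only [finrank_euclideanSpace, Fintype.card_fin, smul_eq_mul, Nat.reduceSub, hradial, flux,
    nsmul_eq_mul]
  norm_num

lemma exists_norm_sq_mul_abs_pd_le (hf : IsNewtonianProfile f) :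
    ∃ M : ℝ, ∀ (x : E3) (j : Fin 3),
      ‖x‖ ^ 2 * |pd (fun y : E3 => f (‖y‖ ^ 2)) j x| ≤ M := by
  have hcont (j : Fin 3) :
      Continuous fun x : E3 => ‖x‖ ^ 2 * |pd (fun y : E3 => f (‖y‖ ^ 2)) j x| := by
    have := (contDiff_pd hf.contDiff_comp_norm_sq j).continuous
    fun_prop
  have hball (j : Fin 3) := (isCompact_closedBall (0 : E3) 1).exists_bound_of_continuousOn
    (hcont j).continuousOn
  choose A hA using hball
  refine ⟨(∑ j, |A j|) + 1, fun x j => ?_⟩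
  rcases le_or_gt ‖x‖ 1 with hx | hx
  · have h1 : ‖x‖ ^ 2 * |pd (fun y : E3 => f (‖y‖ ^ 2)) j x| ≤ A j :=
      (Real.le_norm_self _).trans (hA j x (by simpa using hx))
    have h2 : |A j| ≤ ∑ j, |A j| :=
      Finset.single_le_sum (f := fun j => |A j|) (fun _ _ => abs_nonneg _) (Finset.mem_univ j)
    linarith [le_abs_self (A j)]
  · have hxj : |x j| ≤ ‖x‖ := by simpa using PiLp.norm_apply_le x j
    have hgrad : ‖x‖ ^ 2 * |pd (fun y : E3 => f (‖y‖ ^ 2)) j x| = |x j| / ‖x‖ := by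
      rw [pd_comp_norm_sq (hf.contDiff.differentiable (by simp)), hf.deriv_sq hx, abs_mul, abs_mul,
        abs_mul, abs_inv, abs_pow, abs_norm, abs_neg]
      field_simp
      norm_num
    have hsum : 0 ≤ ∑ j, |A j| := Finset.sum_nonneg fun _ _ => abs_nonneg _
    linarith [div_le_one_of_le₀ hxj (norm_nonneg x)]

end IsNewtonianProfile

/-- The `L¹`-normalised dilate `ε⁻³ ρ(x / ε)`. -/
def dilate (ρ : E3 → ℝ) (ε : ℝ) (x : E3) : ℝ := ε⁻¹ ^ 3 * ρ (ε⁻¹ • x)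

/-- The smoothed Newtonian potential at scale `ε`, equal to `‖x‖⁻¹` for `ε ≤ ‖x‖`. -/
def newtonianPotential (f : ℝ → ℝ) (ε : ℝ) (x : E3) : ℝ := ε⁻¹ * f (‖ε⁻¹ • x‖ ^ 2)

lemma pd_newtonianPotential (f : ℝ → ℝ) (ε : ℝ) (j : Fin 3) (x : E3) :
    pd (newtonianPotential f ε) j x
      = ε⁻¹ ^ 2 * pd (fun y => f (‖y‖ ^ 2)) j (ε⁻¹ • x) := by
  unfold newtonianPotential
  rw [pd_const_mul, pd_comp_smul ε⁻¹ (fun y => f (‖y‖ ^ 2))]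
  ring

lemma lap_newtonianPotential (f : ℝ → ℝ) (ε : ℝ) :
    lap (newtonianPotential f ε) = dilate (lap fun y => f (‖y‖ ^ 2)) ε := by
  ext x
  unfold newtonianPotential
  rw [lap_const_mul, lap_comp_smul ε⁻¹ (fun y => f (‖y‖ ^ 2)), dilate]
  ring

namespace IsNewtonianProfile

variable {f : ℝ → ℝ} {ε : ℝ}

lemma contDiff_newtonianPotential (hf : IsNewtonianProfile f) (ε : ℝ) :
    ContDiff ℝ (⊤ : ℕ∞) (newtonianPotential f ε) :=
  contDiff_const.mul (hf.contDiff_comp_norm_sq.comp (contDiff_const_smul _))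

lemma newtonianPotential_eq_inv_norm (hf : IsNewtonianProfile f) (hε : 0 < ε) {x : E3}
    (hx : ε ≤ ‖x‖) : newtonianPotential f ε x = ‖x‖⁻¹ := by
  have hnorm : ‖ε⁻¹ • x‖ = ε⁻¹ * ‖x‖ := by
    rw [norm_smul, norm_inv, Real.norm_of_nonneg hε.le]
  have h1 : 1 ≤ ‖ε⁻¹ • x‖ := by rwa [hnorm, ← div_eq_inv_mul, one_le_div hε]
  rw [newtonianPotential, hf.comp_norm_sq h1, hnorm, mul_inv, inv_inv, inv_mul_cancel_left₀ hε.ne']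

lemma exists_abs_pd_newtonianPotential_le (hf : IsNewtonianProfile f) :
    ∃ M : ℝ, ∀ ε, 0 < ε → ∀ (j : Fin 3) (x : E3),
      |pd (newtonianPotential f ε) j x| ≤ M * (‖x‖ ^ 2)⁻¹ := by
  obtain ⟨M, hM⟩ := hf.exists_norm_sq_mul_abs_pd_le
  refine ⟨M, fun ε hε j x => ?_⟩
  rw [pd_newtonianPotential, abs_mul, abs_of_nonneg (by positivity)]
  rcases eq_or_ne x 0 with rfl | hx
  · simp [pd_comp_norm_sq (hf.contDiff.differentiable (by simp))]
  · have h := hM (ε⁻¹ • x) j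
    rw [norm_smul, norm_inv, Real.norm_of_nonneg hε.le] at h
    rw [← div_eq_mul_inv, le_div_iff₀ (by positivity)]
    linarith

end IsNewtonianProfile

lemma integral_closedBall_inv_norm_sq {R : ℝ} (hR : 0 ≤ R) :
    IntegrableOn (fun x : E3 => (‖x‖ ^ 2)⁻¹) (Metric.closedBall 0 R) ∧
      ∫ x : E3 in Metric.closedBall 0 R, (‖x‖ ^ 2)⁻¹
        = 3 * (volume : Measure E3).real (Metric.ball 0 1) * R := by
  let f : ℝ → ℝ := (Iic R).indicator fun r => (r ^ 2)⁻¹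
  have hball :
      (Metric.closedBall (0 : E3) R).indicator (fun x => (‖x‖ ^ 2)⁻¹) = fun x => f ‖x‖ := by
    ext x
    simp [f, indicator]
  have hradial : (fun r : ℝ => r ^ (Module.finrank ℝ E3 - 1) • f r)
      =ᵐ[volume.restrict (Ioi 0)] (Iic R).indicator fun _ => (1 : ℝ) := by
    filter_upwards [ae_restrict_mem measurableSet_Ioi] with r (hr : 0 < r)
    by_cases h : r ≤ R <;> simp [f, h]
    field_simp
  rw [← integrable_indicator_iff measurableSet_closedBall,
    ← integral_indicator measurableSet_closedBall, hball]
  constructor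
  · rw [integrable_fun_norm_addHaar, IntegrableOn, integrable_congr hradial,
      integrable_indicator_iff measurableSet_Iic, IntegrableOn,
      Measure.restrict_restrict measurableSet_Iic, Iic_inter_Ioi]
    simp
  · rw [integral_fun_norm_addHaar, integral_congr_ae hradial, integral_indicator measurableSet_Iic,
      Measure.restrict_restrict measurableSet_Iic, Iic_inter_Ioi]
    simp only [finrank_euclideanSpace, Fintype.card_fin, integral_const, MeasurableSet.univ,
      measureReal_restrict_apply, univ_inter, Real.volume_real_Ioc, sub_zero, hR, sup_of_le_left,
      smul_eq_mul, mul_one, nsmul_eq_mul, Nat.cast_ofNat]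
    ring

lemma lintegral_enorm_le_of_abs_le_inv_norm_sq {g : E3 → ℝ} {M R : ℝ} (hR : 0 ≤ R)
    (hg : ∀ x, |g x| ≤ M * (‖x‖ ^ 2)⁻¹) (hsupp : ∀ x, R < ‖x‖ → g x = 0) :
    ∫⁻ x, ‖g x‖ₑ ≤ ENNReal.ofReal (M * (3 * (volume : Measure E3).real (Metric.ball 0 1) * R)) := by
  obtain ⟨hint, hval⟩ := integral_closedBall_inv_norm_sq hR
  have hzero : ∀ x ∉ Metric.closedBall (0 : E3) R, ‖g x‖ₑ = 0 := fun x hx => by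
    simp [hsupp x (by simpa using hx)]
  rw [← hval, ← integral_const_mul, ofReal_integral_eq_lintegral_ofReal (hint.const_mul M)
      (.of_forall fun x => (abs_nonneg _).trans (hg x)),
    ← setLIntegral_eq_of_support_subset (s := Metric.closedBall 0 R)]
  · refine lintegral_mono fun x => ?_
    rw [Real.enorm_eq_ofReal_abs]
    exact ENNReal.ofReal_le_ofReal (hg x)
  · exact Function.support_subset_iff'.2 hzero

/-- A normalised compactly supported kernel `ρ` the difference of any two of whose dilates is the
Laplacian of a test function, with gradient of `L¹` norm at most `C` times the larger scale. -/
structure IsLaplacianMollifier (ρ : E3 → ℝ) (C : ℝ) : Prop where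
  continuous : Continuous ρ
  eq_zero : ∀ x, 1 < ‖x‖ → ρ x = 0
  integral_eq_one : ∫ x, ρ x = 1
  exists_potential : ∀ ε R : ℝ, 0 < ε → ε ≤ R → ∃ η : E3 → ℝ, ContDiff ℝ (⊤ : ℕ∞) η ∧
    HasCompactSupport η ∧ (∀ x, lap η x = dilate ρ ε x - dilate ρ R x) ∧
      ∀ j, ∫⁻ x, ‖pd η j x‖ₑ ≤ ENNReal.ofReal (C * R)

lemma IsNewtonianProfile.exists_potential_difference {f : ℝ → ℝ} (hf : IsNewtonianProfile f)
    (c : ℝ) : ∃ C : ℝ, ∀ ε R : ℝ, 0 < ε → ε ≤ R → ∃ η : E3 → ℝ, ContDiff ℝ (⊤ : ℕ∞) η ∧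
      HasCompactSupport η ∧ (∀ x, lap η x = c * (dilate (lap fun y => f (‖y‖ ^ 2)) ε x
        - dilate (lap fun y => f (‖y‖ ^ 2)) R x)) ∧
      ∀ j, ∫⁻ x, ‖pd η j x‖ₑ ≤ ENNReal.ofReal (C * R) := by
  obtain ⟨M, hM⟩ := hf.exists_abs_pd_newtonianPotential_le
  refine ⟨|c| * (2 * M) * (3 * (volume : Measure E3).real (Metric.ball 0 1)), fun ε R hε hεR => ?_⟩
  have hR : 0 < R := hε.trans_le hεR
  set N := newtonianPotential f
  have hN (a : ℝ) : ContDiff ℝ (⊤ : ℕ∞) (N a) := hf.contDiff_newtonianPotential a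
  have hNd (a : ℝ) : Differentiable ℝ (N a) := (hN a).differentiable (by simp)
  have hzero (x : E3) (hx : R ≤ ‖x‖) : c * (N ε x - N R x) = 0 := by
    simp only [N, hf.newtonianPotential_eq_inv_norm hε (hεR.trans hx),
      hf.newtonianPotential_eq_inv_norm hR hx, sub_self, mul_zero]
  refine ⟨fun x => c * (N ε x - N R x), contDiff_const.mul ((hN ε).sub (hN R)),
    .intro (isCompact_closedBall (0 : E3) R) fun x hx => hzero x ?_, fun x => ?_, fun j => ?_⟩
  · exact (not_le.1 (by simpa using hx)).le
  · rw [lap_const_mul, lap_sub (hN ε) (hN R), lap_newtonianPotential, lap_newtonianPotential]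
  · refine (lintegral_enorm_le_of_abs_le_inv_norm_sq (M := |c| * (2 * M)) hR.le
      (fun x => ?_) fun x hx => ?_).trans_eq (congrArg _ (by ring))
    · rw [pd_const_mul, pd_sub (hNd ε x) (hNd R x), abs_mul, mul_assoc |c|]
      gcongr
      linarith [abs_sub (pd (N ε) j x) (pd (N R) j x), hM ε hε j x, hM R hR j x]
    · have hlocal : (fun x => c * (N ε x - N R x)) =ᶠ[𝓝 x] fun _ => (0 : ℝ) := by
        filter_upwards [(isOpen_lt continuous_const continuous_norm).mem_nhds hx] with y hy
        exact hzero y (le_of_lt hy)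
      rw [pd, hlocal.fderiv_eq]
      simp

lemma exists_isLaplacianMollifier : ∃ ρ C, IsLaplacianMollifier ρ C := by
  obtain ⟨f, hf⟩ := exists_isNewtonianProfile
  set L : E3 → ℝ := lap fun y => f (‖y‖ ^ 2)
  have hL : ∫ x, L x ≠ 0 := by
    rw [hf.integral_lap, neg_ne_zero, mul_ne_zero_iff]
    exact ⟨by norm_num, (ENNReal.toReal_pos (Metric.measure_ball_pos _ _ one_pos).ne'
      measure_ball_lt_top.ne).ne'⟩
  obtain ⟨C, hC⟩ := hf.exists_potential_difference (∫ x, L x)⁻¹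
  refine ⟨fun x => (∫ x, L x)⁻¹ * L x, C,
    continuous_const.mul (contDiff_lap hf.contDiff_comp_norm_sq).continuous,
    fun x hx => by simp only [L, hf.lap_eq_zero hx, mul_zero],
    by rw [integral_const_mul, inv_mul_cancel₀ hL], fun ε R hε hεR => ?_⟩
  obtain ⟨η, hη, hηc, hlap, hpd⟩ := hC ε R hε hεR
  refine ⟨η, hη, hηc, fun x => ?_, hpd⟩
  rw [hlap]
  simp only [dilate, L]
  ring

/-! ### Functions of time with bounded distributional derivative -/

/-- The distributional derivative of `g` on `(0,∞)` is bounded by `B`, tested by duality with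
`L¹`. -/
def HasBoundedWeakDeriv (g : ℝ → ℝ) (B : ℝ) : Prop :=
  ∀ θ : ℝ → ℝ, ContDiff ℝ (⊤ : ℕ∞) θ → HasCompactSupport θ → tsupport θ ⊆ Ioi 0 →
    |∫ t, g t * deriv θ t| ≤ B * ∫ t, |θ t|

open ContinuousLinearMap (lsmul) in
/-- The mollification in time of `g` by the normalised bump function `φ`. -/
def timeMollify (φ : ContDiffBump (0 : ℝ)) (g : ℝ → ℝ) : ℝ → ℝ :=
  convolution (φ.normed volume) g (lsmul ℝ ℝ) volume

lemma timeMollify_apply (φ : ContDiffBump (0 : ℝ)) (g : ℝ → ℝ) (t : ℝ) :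
    timeMollify φ g t = ∫ s, φ.normed volume (t - s) * g s :=
  convolution_eq_swap _

lemma normed_const_sub_eq_zero (φ : ContDiffBump (0 : ℝ)) {t s : ℝ}
    (hs : s ∉ Metric.ball t φ.rOut) : φ.normed volume (t - s) = 0 := by
  rw [← Function.notMem_support, φ.support_normed_eq, mem_ball_zero_iff, ← dist_eq_norm, dist_comm]
  exact hs

lemma tsupport_normed_const_sub_subset (φ : ContDiffBump (0 : ℝ)) (t : ℝ) :
    tsupport (fun s => φ.normed volume (t - s)) ⊆ Metric.closedBall t φ.rOut :=
  closure_minimal (fun _ hs => Metric.ball_subset_closedBall <| by_contra fun h =>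
    hs (normed_const_sub_eq_zero φ h)) Metric.isClosed_closedBall

namespace HasBoundedWeakDeriv

variable {g : ℝ → ℝ} {B : ℝ} {φ : ContDiffBump (0 : ℝ)} {s t : ℝ}

lemma abs_deriv_timeMollify_le (h : HasBoundedWeakDeriv g B) (hg : LocallyIntegrable g)
    (ht : φ.rOut < t) :
    ∃ d, HasDerivAt (timeMollify φ g) d t ∧ |d| ≤ B := by
  refine ⟨_, φ.hasCompactSupport_normed.hasDerivAt_convolution_left _
    φ.contDiff_normed hg t, ?_⟩
  have hsupp : tsupport (fun s => φ.normed volume (t - s)) ⊆ Ioi 0 :=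
    (tsupport_normed_const_sub_subset φ t).trans fun s hs => by
      rw [Real.closedBall_eq_Icc] at hs
      exact mem_Ioi.2 (by linarith [hs.1])
  have htest := h _ (φ.contDiff_normed.comp (contDiff_const.sub contDiff_id))
    (φ.hasCompactSupport_normed.comp_homeomorph (Homeomorph.subLeft t)) hsupp
  have hmass : ∫ s, |φ.normed volume (t - s)| = 1 := by
    simp_rw [abs_of_nonneg (φ.nonneg_normed _)]
    rw [integral_sub_left_eq_self (φ.normed volume) volume t, φ.integral_normed]
  simp only [Function.comp_def, id, hmass, mul_one, deriv_comp_const_sub, mul_neg, integral_neg,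
    abs_neg] at htest
  simpa only [convolution_eq_swap, ContinuousLinearMap.lsmul_apply, smul_eq_mul, mul_comm]
    using htest

lemma abs_timeMollify_sub_le (h : HasBoundedWeakDeriv g B) (hg : LocallyIntegrable g)
    (hs : φ.rOut < s) (ht : φ.rOut < t) :
    |timeMollify φ g t - timeMollify φ g s| ≤ B * |t - s| := by
  choose! d hd hdB using fun τ (hτ : τ ∈ Ioi φ.rOut) =>
    h.abs_deriv_timeMollify_le hg (mem_Ioi.1 hτ)
  exact (convex_Ioi _).norm_image_sub_le_of_norm_hasDerivWithin_le
    (fun τ hτ => (hd τ hτ).hasDerivWithinAt) hdB hs ht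

lemma ae_abs_sub_le (h : HasBoundedWeakDeriv g B) (hg : LocallyIntegrable g) :
    ∃ S : Set ℝ, (∀ᵐ t, t ∈ S) ∧
      ∀ s ∈ S, ∀ t ∈ S, 0 < s → 0 < t → |g t - g s| ≤ B * |t - s| := by
  let φ (n : ℕ) : ContDiffBump (0 : ℝ) :=
    ⟨(1 / ((n : ℝ) + 1)) / 2, 1 / ((n : ℝ) + 1), by positivity, half_lt_self (by positivity)⟩
  have hφ : Tendsto (fun n => (φ n).rOut) atTop (𝓝 0) := tendsto_one_div_add_atTop_nhds_zero_nat
  refine ⟨{t | Tendsto (fun n => timeMollify (φ n) g t) atTop (𝓝 (g t))},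
    ContDiffBump.ae_convolution_tendsto_right_of_locallyIntegrable (K := 2) hφ
      (.of_forall fun n => by simp [φ, mul_div_cancel₀]) hg, fun s hs t ht hs0 ht0 => ?_⟩
  refine le_of_tendsto (ht.sub hs).abs ?_
  filter_upwards [hφ.eventually_lt_const hs0, hφ.eventually_lt_const ht0] with n hns hnt
  exact h.abs_timeMollify_sub_le hg hns hnt

lemma ae_abs_sub_timeMollify_le (h : HasBoundedWeakDeriv g B) (hg : LocallyIntegrable g) :
    ∀ᵐ t, ∀ φ : ContDiffBump (0 : ℝ), φ.rOut < t → |g t - timeMollify φ g t| ≤ B * φ.rOut := by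
  obtain ⟨S, hS, hLip⟩ := h.ae_abs_sub_le hg
  filter_upwards [hS] with t ht φ hφt
  obtain ⟨d, -, hdB⟩ := h.abs_deriv_timeMollify_le hg hφt
  have hB : 0 ≤ B := (abs_nonneg d).trans hdB
  have hint : Integrable fun s => φ.normed volume (t - s) := φ.integrable_normed.comp_sub_left t
  have hmass : ∫ s, φ.normed volume (t - s) = 1 := by
    rw [integral_sub_left_eq_self (φ.normed volume) volume t, φ.integral_normed]
  have hdiff : g t - timeMollify φ g t = ∫ s, φ.normed volume (t - s) * (g t - g s) := by
    have hconv : Integrable fun s => φ.normed volume (t - s) * g s := by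
      simpa only [smul_eq_mul] using hg.integrable_smul_left_of_hasCompactSupport
        (g := fun s => φ.normed volume (t - s))
        (φ.continuous_normed.comp (continuous_const.sub continuous_id))
        (φ.hasCompactSupport_normed.comp_homeomorph (Homeomorph.subLeft t))
    simp_rw [mul_sub]
    rw [integral_sub (hint.mul_const _) hconv, integral_mul_const, hmass, one_mul,
      timeMollify_apply]
  have hbound : ‖∫ s, φ.normed volume (t - s) * (g t - g s)‖
      ≤ ∫ s, φ.normed volume (t - s) * (B * φ.rOut) := by
    refine norm_integral_le_of_norm_le (hint.mul_const _) ?_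
    filter_upwards [hS] with s hs
    by_cases hst : s ∈ Metric.ball t φ.rOut
    · rw [Metric.mem_ball, dist_comm, Real.dist_eq] at hst
      rw [norm_mul, Real.norm_of_nonneg (φ.nonneg_normed _)]
      refine mul_le_mul_of_nonneg_left ?_ (φ.nonneg_normed _)
      exact (hLip s hs t ht (by linarith [le_abs_self (t - s)]) (φ.rOut_pos.trans hφt)).trans
        (by gcongr)
    · simp [normed_const_sub_eq_zero φ hst]
  rwa [integral_mul_const, hmass, one_mul, ← hdiff] at hbound

end HasBoundedWeakDeriv

/-! ### Quadratic estimates -/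

section Quadratic

variable {α F : Type*} [MeasurableSpace α] [NormedAddCommGroup F] {μ : Measure α}

lemma eLpNorm_two_sq (f : α → F) (μ : Measure α) : eLpNorm f 2 μ ^ 2 = ∫⁻ x, ‖f x‖ₑ ^ 2 ∂μ := by
  simpa using eLpNorm_nnreal_pow_eq_lintegral (f := f) (μ := μ) (p := 2) two_ne_zero

lemma eLpNorm_two_le_iff {f : α → F} {n : ℝ≥0∞} :
    eLpNorm f 2 μ ≤ n ↔ ∫⁻ x, ‖f x‖ₑ ^ 2 ∂μ ≤ n ^ 2 := by
  rw [← eLpNorm_two_sq, ENNReal.pow_le_pow_left_iff two_ne_zero]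

lemma enorm_integral_mul_le {f g : α → ℝ} (hf : AEStronglyMeasurable f μ)
    (hg : AEStronglyMeasurable g μ) :
    ‖∫ x, f x * g x ∂μ‖ₑ ≤ eLpNorm f 2 μ * eLpNorm g 2 μ := by
  refine (enorm_integral_le_lintegral_enorm _).trans ?_
  have := eLpNorm_smul_le_mul_eLpNorm (p := 2) (q := 2) (r := 1) hg hf
  rwa [eLpNorm_one_eq_lintegral_enorm] at this

lemma enorm_sq_eq_ofReal (a : ℝ) : ‖a‖ₑ ^ 2 = ENNReal.ofReal (a ^ 2) := by
  rw [← ofReal_norm, ← ENNReal.ofReal_pow (norm_nonneg a), Real.norm_eq_abs, sq_abs]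

lemma lintegral_sq_le {g : α → ℝ≥0∞} (hg : AEMeasurable g μ) :
    (∫⁻ x, g x ∂μ) ^ 2 ≤ μ univ * ∫⁻ x, g x ^ 2 ∂μ := by
  have hHolder := ENNReal.pow_le_pow_left (n := 2) <|
    ENNReal.lintegral_mul_le_Lp_mul_Lq μ .two_two (f := 1) aemeasurable_const hg
  simpa [mul_pow, ← ENNReal.rpow_mul_natCast] using hHolder

lemma lintegral_mul_sq_le {K g : α → ℝ≥0∞} (hK : Measurable K) (hg : Measurable g) :
    (∫⁻ x, K x * g x ∂μ) ^ 2 ≤ (∫⁻ x, K x ∂μ) * ∫⁻ x, K x * g x ^ 2 ∂μ := by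
  have h := lintegral_sq_le (μ := μ.withDensity K) hg.aemeasurable
  rw [lintegral_withDensity_eq_lintegral_mul _ hK hg,
    lintegral_withDensity_eq_lintegral_mul _ hK (hg.pow_const 2),
    withDensity_apply _ MeasurableSet.univ] at h
  simpa using h

lemma lintegral_convolution_sq_le {A : Type*} [AddCommGroup A] [MeasurableSpace A]
    [MeasurableAdd₂ A] [MeasurableNeg A] {ν : Measure A} [SFinite ν] [ν.IsAddLeftInvariant]
    [ν.IsNegInvariant] {K g : A → ℝ≥0∞} (hK : Measurable K) (hg : Measurable g) :
    ∫⁻ x, (∫⁻ y, K (x - y) * g y ∂ν) ^ 2 ∂ν ≤ (∫⁻ x, K x ∂ν) ^ 2 * ∫⁻ y, g y ^ 2 ∂ν := by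
  have hKg : Measurable fun p : A × A => K (p.1 - p.2) * g p.2 ^ 2 := by fun_prop
  calc ∫⁻ x, (∫⁻ y, K (x - y) * g y ∂ν) ^ 2 ∂ν
      ≤ ∫⁻ x, (∫⁻ y, K y ∂ν) * ∫⁻ y, K (x - y) * g y ^ 2 ∂ν ∂ν := lintegral_mono fun x => by
        simpa only [lintegral_sub_left_eq_self] using
          lintegral_mul_sq_le (μ := ν) (K := fun y => K (x - y)) (by fun_prop) hg
    _ = (∫⁻ y, K y ∂ν) * ∫⁻ y, ∫⁻ x, K (x - y) * g y ^ 2 ∂ν ∂ν := by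
        rw [lintegral_const_mul _ hKg.lintegral_prod_right',
          lintegral_lintegral_swap hKg.aemeasurable]
    _ = (∫⁻ x, K x ∂ν) ^ 2 * ∫⁻ y, g y ^ 2 ∂ν := by
        simp_rw [fun y => lintegral_mul_const (μ := ν) (f := fun x => K (x - y)) (g y ^ 2)
          (by fun_prop), lintegral_sub_right_eq_self]
        rw [lintegral_const_mul _ (hg.pow_const 2), sq, mul_assoc]

lemma tendsto_integral_mul_mul {f g c : α → ℝ} {fk gk : ℕ → α → ℝ} {M : ℝ}
    (hf : MemLp f 2 μ) (hg : MemLp g 2 μ) (hfk : ∀ k, MemLp (fk k) 2 μ)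
    (hgk : ∀ k, MemLp (gk k) 2 μ) (hc : AEStronglyMeasurable c μ) (hM : ∀ x, |c x| ≤ M)
    (hft : Tendsto (fun k => eLpNorm (fk k - f) 2 μ) atTop (𝓝 0))
    (hgt : Tendsto (fun k => eLpNorm (gk k - g) 2 μ) atTop (𝓝 0)) :
    Tendsto (fun k => ∫ x, fk k x * gk k x * c x ∂μ) atTop (𝓝 (∫ x, f x * g x * c x ∂μ)) := by
  have hcM : MemLp c ∞ μ := memLp_top_of_bound hc M (.of_forall hM)
  have hmul (u : α → ℝ) (hu : MemLp u 2 μ) : MemLp (fun x => u x * c x) 2 μ := hcM.mul hu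
  have hinner (u v : α → ℝ) (hu : MemLp u 2 μ) (hv : MemLp v 2 μ) :
      ∫ x, u x * v x * c x ∂μ = inner ℝ (hv.toLp v) ((hmul u hu).toLp _) := by
    rw [L2.inner_def]
    refine integral_congr_ae ?_
    filter_upwards [hv.coeFn_toLp, (hmul u hu).coeFn_toLp] with x hxv hxu
    rw [hxv, hxu, RCLike.inner_apply, conj_trivial]
    ring
  simp_rw [hinner f g hf hg, fun k => hinner _ _ (hfk k) (hgk k)]
  refine Tendsto.inner (𝕜 := ℝ) ((Lp.tendsto_Lp_iff_tendsto_eLpNorm'' ..).2 hgt)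
    ((Lp.tendsto_Lp_iff_tendsto_eLpNorm'' ..).2 ?_)
  have hlim : Tendsto (fun k => ENNReal.ofReal M * eLpNorm (fk k - f) 2 μ) atTop (𝓝 0) := by
    simpa using ENNReal.Tendsto.const_mul hft (.inr ENNReal.ofReal_ne_top)
  refine tendsto_of_tendsto_of_tendsto_of_le_of_le tendsto_const_nhds hlim (fun _ => zero_le)
    fun k => eLpNorm_le_mul_eLpNorm_of_ae_le_mul (.of_forall fun x => ?_) 2
  simp only [Pi.sub_apply, ← sub_mul, norm_mul, Real.norm_eq_abs, mul_comm _ |c x|]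
  exact mul_le_mul_of_nonneg_right (hM x) (abs_nonneg _)

end Quadratic

/-- The convolution of `f` with the kernel `ρ` at scale `ε`. -/
def mollify (ρ : E3 → ℝ) (ε : ℝ) (f : E3 → ℝ) (x : E3) : ℝ :=
  ∫ y, f y * dilate ρ ε (x - y)

namespace IsLaplacianMollifier

variable {ρ : E3 → ℝ} {C ε : ℝ}

lemma hasCompactSupport (h : IsLaplacianMollifier ρ C) : HasCompactSupport ρ :=
  .intro (isCompact_closedBall 0 1) fun x hx => h.eq_zero x (by simpa using hx)

lemma dilate_eq_zero (h : IsLaplacianMollifier ρ C) (hε : 0 < ε) {x : E3} (hx : ε < ‖x‖) :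
    dilate ρ ε x = 0 := by
  rw [dilate, h.eq_zero, mul_zero]
  rwa [norm_smul, norm_inv, Real.norm_of_nonneg hε.le, lt_inv_mul_iff₀ hε, mul_one]

lemma integral_dilate (h : IsLaplacianMollifier ρ C) (hε : 0 < ε) : ∫ x, dilate ρ ε x = 1 := by
  unfold dilate
  rw [integral_const_mul, Measure.integral_comp_smul, h.integral_eq_one,
    abs_of_pos (by positivity)]
  simp [hε.ne']

lemma ae_tendsto_mollify (h : IsLaplacianMollifier ρ C) {ε : ℕ → ℝ} (hε : ∀ n, 0 < ε n)
    (hε0 : Tendsto ε atTop (𝓝 0)) {f : E3 → ℝ} (hf : LocallyIntegrable f) :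
    ∀ᵐ x, Tendsto (fun n => mollify ρ (ε n) f x) atTop (𝓝 (f x)) := by
  obtain ⟨M, hM⟩ := h.continuous.bounded_above_of_compact_support h.hasCompactSupport
  have hball : 0 < volume.real (Metric.closedBall (0 : E3) 1) :=
    ENNReal.toReal_pos (Metric.measure_closedBall_pos _ _ one_pos).ne'
      measure_closedBall_lt_top.ne
  have hε' : Tendsto ε atTop (𝓝[>] 0) := tendsto_nhdsWithin_iff.2 ⟨hε0, .of_forall hε⟩
  filter_upwards [(Besicovitch.vitaliFamily (volume : Measure E3)).ae_tendsto_average_norm_sub hf]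
    with x hx
  simp_rw [mollify, mul_comm (f _)]
  refine tendsto_integral_smul_of_tendsto_average_norm_sub
    (M * volume.real (Metric.closedBall (0 : E3) 1))
    ((hx.comp (Besicovitch.tendsto_filterAt volume x)).comp hε')
    (.of_forall fun n => hf.integrableOn_isCompact (isCompact_closedBall _ _))
    (tendsto_const_nhds.congr fun n => ?_) (.of_forall fun n y hy => ?_)
    (.of_forall fun n y => ?_)
  · rw [integral_sub_left_eq_self (dilate ρ (ε n)), h.integral_dilate (hε n)]
  · by_contra hyx
    rw [Metric.mem_closedBall, not_le, dist_comm, dist_eq_norm] at hyx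
    exact hy (h.dilate_eq_zero (hε n) hyx)
  · rw [Measure.addHaar_real_closedBall' _ _ (hε n).le, mul_div_mul_right _ _ hball.ne',
      finrank_euclideanSpace_fin, dilate, inv_pow, div_eq_inv_mul, abs_mul,
      abs_of_pos (inv_pos.2 (pow_pos (hε n) 3))]
    exact mul_le_mul_of_nonneg_left (hM _) (inv_pos.2 (pow_pos (hε n) 3)).le

end IsLaplacianMollifier

/-! ### A finite measure on space-time -/

/-- An integrable, positive and continuous weight on space-time, bounded by `1`. -/
def weight (p : ℝ × E3) : ℝ := Real.exp (-|p.1|) * (1 + ‖p.2‖) ^ (-4 : ℝ)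

lemma weight_pos (p : ℝ × E3) : 0 < weight p := by unfold weight; positivity

lemma weight_le_exp (p : ℝ × E3) : weight p ≤ Real.exp (-|p.1|) :=
  mul_le_of_le_one_right (Real.exp_pos _).le
    (Real.rpow_le_one_of_one_le_of_nonpos (by simp) (by norm_num))

lemma continuous_weight : Continuous weight :=
  .mul (by fun_prop) <| .rpow_const (by fun_prop) fun p => .inl (by positivity)

lemma measurable_ofReal_weight : Measurable fun p => ENNReal.ofReal (weight p) :=
  continuous_weight.measurable.ennreal_ofReal

/-- The measure `μST` made finite by the weight, so that bounded functions and functions bounded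
in `L^∞(0,∞;L²)` lie in the Hilbert space `L²(μW)`. -/
def μW : Measure (ℝ × E3) := μST.withDensity fun p => ENNReal.ofReal (weight p)

instance : SFinite μST := by unfold μST; infer_instance

lemma integrable_exp_neg_abs_Ioi :
    Integrable (fun t : ℝ => Real.exp (-|t|)) (volume.restrict (Ioi 0)) :=
  (integrableOn_exp_neg_Ioi 0).congr_fun (fun t ht => by rw [abs_of_pos ht]) measurableSet_Ioi

instance : IsFiniteMeasure μW :=
  isFiniteMeasure_withDensity_ofReal
    (integrable_exp_neg_abs_Ioi.mul_prod (integrable_one_add_norm (by simp; norm_num))).2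

lemma μW_le_μST : μW ≤ μST := by
  calc μW ≤ μST.withDensity 1 := withDensity_mono <| .of_forall fun p => by
        simpa using (weight_le_exp p).trans (by simp)
    _ = μST := withDensity_one

lemma ae_μW_iff {P : ℝ × E3 → Prop} : (∀ᵐ p ∂μW, P p) ↔ ∀ᵐ p ∂μST, P p := by
  simp [μW, ae_withDensity_iff measurable_ofReal_weight, weight_pos]

lemma integral_μW (f : ℝ × E3 → ℝ) : ∫ p, f p ∂μW = ∫ p, weight p * f p ∂μST := by
  rw [μW, integral_withDensity_eq_integral_toReal_smul measurable_ofReal_weight (by simp)]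
  simp [ENNReal.toReal_ofReal (weight_pos _).le]

lemma integrable_μW_iff {f : ℝ × E3 → ℝ} :
    Integrable f μW ↔ Integrable (fun p => weight p * f p) μST := by
  rw [μW, integrable_withDensity_iff_integrable_smul' measurable_ofReal_weight (by simp)]
  simp [ENNReal.toReal_ofReal (weight_pos _).le]

lemma exists_eq_weight_mul {b : ℝ × E3 → ℝ} (hb : Continuous b) (hbc : HasCompactSupport b) :
    ∃ c : ℝ × E3 → ℝ, Continuous c ∧ (∃ M, ∀ p, |c p| ≤ M) ∧ ∀ p, b p = weight p * c p := by
  have hc : Continuous fun p => (weight p)⁻¹ * b p :=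
    (continuous_weight.inv₀ fun p => (weight_pos p).ne').mul hb
  exact ⟨_, hc, hc.bounded_above_of_compact_support hbc.mul_left,
    fun p => (mul_inv_cancel_left₀ (weight_pos p).ne' _).symm⟩

section CompactlySupported

variable {f g b : ℝ × E3 → ℝ} {fk gk : ℕ → ℝ × E3 → ℝ}

lemma integrable_mul_of_integrable_μW (hf : Integrable f μW) (hb : Continuous b)
    (hbc : HasCompactSupport b) : Integrable (fun p => f p * b p) μST := by
  obtain ⟨c, hc, ⟨M, hM⟩, hbc⟩ := exists_eq_weight_mul hb hbc
  simpa only [hbc, mul_left_comm] using integrable_μW_iff.1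
    (hf.mul_bdd hc.aestronglyMeasurable (.of_forall hM))

lemma tendsto_integral_mul_mul_of_hasCompactSupport (hf : MemLp f 2 μW) (hg : MemLp g 2 μW)
    (hfk : ∀ k, MemLp (fk k) 2 μW) (hgk : ∀ k, MemLp (gk k) 2 μW)
    (hft : Tendsto (fun k => eLpNorm (fk k - f) 2 μW) atTop (𝓝 0))
    (hgt : Tendsto (fun k => eLpNorm (gk k - g) 2 μW) atTop (𝓝 0))
    (hb : Continuous b) (hbc : HasCompactSupport b) :
    Tendsto (fun k => ∫ p, fk k p * gk k p * b p ∂μST) atTop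
      (𝓝 (∫ p, f p * g p * b p ∂μST)) := by
  obtain ⟨c, hc, ⟨M, hM⟩, hbc⟩ := exists_eq_weight_mul hb hbc
  simpa only [integral_μW, hbc, mul_left_comm] using
    tendsto_integral_mul_mul hf hg hfk hgk hc.aestronglyMeasurable hM hft hgt

end CompactlySupported

/-! ### Regular representatives of weak solutions -/

/-- The weak formulation of the Navier–Stokes equations alone, without the regularity required of
weak solutions. -/
def WeakEq (ν : ℝ) (u₀ : E3 → E3) (u : ℝ → E3 → E3) : Prop :=
  ∀ φ : ℝ × E3 → E3, IsTest φ →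
    (∫ p,
        ((∑ i, u p.1 p.2 i * (timeDeriv φ p i + ν * spaceLap φ p i)) +
         ∑ i, ∑ j, u p.1 p.2 i * u p.1 p.2 j * spaceGrad φ p i j) ∂μST)
      = - ∫ x : E3, ∑ i, u₀ x i * φ (0, x) i

/-- A divergence-free velocity `u` together with its gradient `G`, both strongly measurable, with
energy bounds by `n` that hold at every time rather than almost every time. -/
structure IsRegularPair (n : ℝ≥0∞) (u : ℝ → E3 → E3) (G : ℝ → E3 → Fin 3 → Fin 3 → ℝ) :
    Prop where
  stronglyMeasurable : StronglyMeasurable (Function.uncurry u)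
  stronglyMeasurable_grad : StronglyMeasurable (Function.uncurry G)
  eLpNorm_le : ∀ t, eLpNorm (u t) 2 volume ≤ n
  isDivFree : ∀ t, IsDivFree (u t)
  lintegral_grad_le : ∫⁻ p, ∑ i, ∑ j, ENNReal.ofReal (G p.1 p.2 i j ^ 2) ∂μST ≤ n
  isDistGrad : IsDistGrad u G

lemma ae_ae_of_ae_μST {P : ℝ × E3 → Prop} (h : ∀ᵐ p ∂μST, P p) :
    ∀ᵐ t ∂(volume.restrict (Ioi (0 : ℝ))), ∀ᵐ x : E3, P (t, x) :=
  Measure.ae_ae_of_ae_prod h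

lemma mixedNorm_congr {r s : ℝ≥0∞} {I : Set ℝ} {u v : ℝ → E3 → E3}
    (h : ∀ᵐ t ∂(volume.restrict I), u t =ᵐ[volume] v t) :
    mixedNorm r s I u = mixedNorm r s I v := by
  have hnorm : (fun t => eLpNorm (u t) s volume) =ᵐ[volume.restrict I]
      fun t => eLpNorm (v t) s volume := h.mono fun t ht => eLpNorm_congr_ae ht
  unfold mixedNorm
  rw [essSup_congr_ae hnorm,
    lintegral_congr_ae (hnorm.mono fun t ht => congrArg (· ^ r.toReal) ht)]

lemma mixedNorm_top_le_iff {s n : ℝ≥0∞} {I : Set ℝ} {u : ℝ → E3 → E3} :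
    mixedNorm ∞ s I u ≤ n ↔ ∀ᵐ t ∂(volume.restrict I), eLpNorm (u t) s volume ≤ n := by
  rw [mixedNorm, if_pos rfl]
  exact ⟨fun h => (ENNReal.ae_le_essSup _).mono fun t ht => ht.trans h, essSup_le_of_ae_le _⟩

lemma lintegral_gradSq {G : ℝ → E3 → Fin 3 → Fin 3 → ℝ}
    (hG : AEStronglyMeasurable (Function.uncurry G) μST) :
    ∫⁻ t in Ioi (0 : ℝ), gradSq G t
      = ∫⁻ p, ∑ i, ∑ j, ENNReal.ofReal (G p.1 p.2 i j ^ 2) ∂μST := by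
  have hsum : Measurable fun g : Fin 3 → Fin 3 → ℝ => ∑ i, ∑ j, ENNReal.ofReal (g i j ^ 2) := by
    fun_prop
  exact (lintegral_prod _ (hsum.comp_aemeasurable hG.aemeasurable)).symm

lemma IsDistGrad.congr {u v : ℝ → E3 → E3} {G H : ℝ → E3 → Fin 3 → Fin 3 → ℝ}
    (h : IsDistGrad u G) (hu : ∀ᵐ p ∂μST, u p.1 p.2 = v p.1 p.2)
    (hG : ∀ᵐ p ∂μST, G p.1 p.2 = H p.1 p.2) : IsDistGrad v H := by
  intro ψ hψ hψc hψ0 i j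
  refine (integral_congr_ae (hu.mono fun p hp => ?_)).trans ((h ψ hψ hψc hψ0 i j).trans
    (congrArg Neg.neg (integral_congr_ae (hG.mono fun p hp => ?_))))
  all_goals simp only [hp]

lemma WeakEq.congr {ν : ℝ} {u₀ v₀ : E3 → E3} {u v : ℝ → E3 → E3} (h : WeakEq ν u₀ u)
    (hu : ∀ᵐ p ∂μST, u p.1 p.2 = v p.1 p.2) (h0 : u₀ =ᵐ[volume] v₀) : WeakEq ν v₀ v := by
  intro φ hφ
  refine (integral_congr_ae (hu.mono fun p hp => ?_)).trans ((h φ hφ).trans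
    (congrArg Neg.neg (integral_congr_ae (h0.mono fun x hp => ?_))))
  all_goals simp only [hp]

lemma IsDivFree.congr {u v : E3 → E3} (h : IsDivFree u) (huv : u =ᵐ[volume] v) :
    IsDivFree v := fun φ hφ hφc =>
  (integral_congr_ae (huv.mono fun x hx => by simp only [hx])).trans (h φ hφ hφc)

lemma isDivFree_zero : IsDivFree 0 := fun φ _ _ => by simp

lemma exists_stronglyMeasurable_forall_slice {α β F : Type*} [MeasurableSpace α]
    [MeasurableSpace β] [TopologicalSpace F] [Zero F] {μ : Measure α} {ν : Measure β} [SFinite ν]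
    {u : α → β → F} (hu : AEStronglyMeasurable (Function.uncurry u) (μ.prod ν))
    {P : (β → F) → Prop} (hP : ∀ᵐ t ∂μ, P (u t)) (hP0 : P 0)
    (hcongr : ∀ f g, f =ᵐ[ν] g → P f → P g) :
    ∃ v : α → β → F, StronglyMeasurable (Function.uncurry v) ∧ (∀ t, P (v t)) ∧
      (∀ᵐ t ∂μ, u t =ᵐ[ν] v t) ∧ ∀ᵐ p ∂μ.prod ν, u p.1 p.2 = v p.1 p.2 := by
  classical
  obtain ⟨T, hTae, hT, hTP⟩ := ((Measure.ae_ae_of_ae_prod hu.ae_eq_mk).and hP).exists_measurable_mem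
  let v : α → β → F := fun t x => (T ×ˢ univ).indicator (hu.mk _) (t, x)
  have hv (t : α) (ht : t ∈ T) : v t = fun x => hu.mk _ (t, x) := by simp [v, indicator, ht]
  have huv (t : α) (ht : t ∈ T) : u t =ᵐ[ν] v t := by rw [hv t ht]; exact (hTP t ht).1
  refine ⟨v, hu.stronglyMeasurable_mk.indicator (hT.prod .univ), fun t => ?_,
    mem_of_superset hTae huv, ?_⟩
  · by_cases ht : t ∈ T
    · exact hcongr _ _ (huv t ht) (hTP t ht).2
    · rwa [show v t = 0 by funext x; simp [v, indicator, ht]]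
  · filter_upwards [Measure.quasiMeasurePreserving_fst.ae hTae, hu.ae_eq_mk] with p hpT hp
    rw [hv p.1 hpT]
    exact hp

lemma IsWeakNS.exists_isRegularPair {ν : ℝ} {u₀ : E3 → E3} {u : ℝ → E3 → E3}
    {G : ℝ → E3 → Fin 3 → Fin 3 → ℝ} (h : IsWeakNS ν u₀ u G) {n : ℝ≥0∞}
    (hn : mixedNorm ∞ 2 (Ioi 0) u ≤ n) (hG : ∫⁻ t in Ioi (0 : ℝ), gradSq G t ≤ n)
    (r s : ℝ≥0∞) :
    ∃ v H, IsRegularPair n v H ∧ WeakEq ν u₀ v ∧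
      mixedNorm r s (Ioi 0) v = mixedNorm r s (Ioi 0) u := by
  obtain ⟨hum, -, hdiv, hGm, -, hgrad, heq⟩ := h
  obtain ⟨v, hvm, hv, huv, huvST⟩ := exists_stronglyMeasurable_forall_slice hum
    (P := fun f => eLpNorm f 2 volume ≤ n ∧ IsDivFree f)
    ((mixedNorm_top_le_iff.1 hn).and hdiv) ⟨by simp, isDivFree_zero⟩
    fun f g hfg hf => ⟨(eLpNorm_congr_ae hfg).symm.trans_le hf.1, hf.2.congr hfg⟩
  have hGH : ∀ᵐ p ∂μST, G p.1 p.2 = hGm.mk _ (p.1, p.2) := hGm.ae_eq_mk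
  refine ⟨v, fun t x => hGm.mk _ (t, x), ⟨hvm, hGm.stronglyMeasurable_mk, fun t => (hv t).1,
    fun t => (hv t).2, ?_, hgrad.congr huvST hGH⟩, WeakEq.congr heq huvST .rfl,
    (mixedNorm_congr huv).symm⟩
  rw [lintegral_gradSq hGm] at hG
  exact (lintegral_congr_ae <| hGH.mono fun p hp => by simp only [hp]).symm.trans_le hG

lemma enorm_coord_le (v : E3) (i : Fin 3) : ‖v i‖ₑ ≤ ‖v‖ₑ :=
  enorm_le_iff_norm_le.2 (PiLp.norm_apply_le v i)

lemma eLpNorm_two_μW_le {f : ℝ × E3 → ℝ} (hf : Measurable f) {n : ℝ≥0∞}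
    (hn : ∀ t, eLpNorm (fun x => f (t, x)) 2 volume ≤ n) : eLpNorm f 2 μW ≤ n := by
  have hsq : Measurable fun p => ‖f p‖ₑ ^ 2 := hf.enorm.pow_const 2
  rw [eLpNorm_two_le_iff, μW, lintegral_withDensity_eq_lintegral_mul _ measurable_ofReal_weight hsq,
    μST, lintegral_prod _ (measurable_ofReal_weight.mul hsq).aemeasurable]
  calc _ ≤ ∫⁻ t in Ioi (0 : ℝ), ENNReal.ofReal (Real.exp (-|t|)) * n ^ 2 := by
        refine lintegral_mono fun t => ?_
        grw [← eLpNorm_two_le_iff.1 (hn t), ← lintegral_const_mul _ (by fun_prop)]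
        exact lintegral_mono fun x => mul_le_mul_left (ENNReal.ofReal_le_ofReal (weight_le_exp _)) _
    _ = n ^ 2 := by
        rw [lintegral_mul_const _ (by fun_prop),
          ← ofReal_integral_eq_lintegral_ofReal integrable_exp_neg_abs_Ioi
            (.of_forall fun t => (Real.exp_pos _).le),
          setIntegral_congr_fun measurableSet_Ioi fun t ht => by rw [abs_of_pos ht],
          integral_exp_neg_Ioi_zero]
        simp

namespace IsRegularPair

variable {n : ℝ≥0∞} {u : ℝ → E3 → E3} {G : ℝ → E3 → Fin 3 → Fin 3 → ℝ}

lemma stronglyMeasurable_coord (h : IsRegularPair n u G) (i : Fin 3) :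
    StronglyMeasurable fun p : ℝ × E3 => u p.1 p.2 i :=
  (EuclideanSpace.proj (𝕜 := ℝ) i).continuous.comp_stronglyMeasurable h.stronglyMeasurable

lemma stronglyMeasurable_grad_coord (h : IsRegularPair n u G) (i j : Fin 3) :
    StronglyMeasurable fun p : ℝ × E3 => G p.1 p.2 i j :=
  (show Continuous fun g : Fin 3 → Fin 3 → ℝ => g i j by fun_prop).comp_stronglyMeasurable
    h.stronglyMeasurable_grad

lemma stronglyMeasurable_slice (h : IsRegularPair n u G) (t : ℝ) (i : Fin 3) :
    StronglyMeasurable fun x => u t x i :=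
  (h.stronglyMeasurable_coord i).comp_measurable measurable_prodMk_left

lemma eLpNorm_coord_le (h : IsRegularPair n u G) (t : ℝ) (i : Fin 3) :
    eLpNorm (fun x => u t x i) 2 volume ≤ n :=
  (eLpNorm_mono_enorm fun x => enorm_coord_le (u t x) i).trans (h.eLpNorm_le t)

lemma memLp_coord (h : IsRegularPair n u G) (hn : n ≠ ∞) (t : ℝ) (i : Fin 3) :
    MemLp (fun x => u t x i) 2 volume :=
  ⟨(h.stronglyMeasurable_slice t i).aestronglyMeasurable,
    (h.eLpNorm_coord_le t i).trans_lt hn.lt_top⟩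

lemma eLpNorm_coord_μW_le (h : IsRegularPair n u G) (i : Fin 3) :
    eLpNorm (fun p : ℝ × E3 => u p.1 p.2 i) 2 μW ≤ n :=
  eLpNorm_two_μW_le (h.stronglyMeasurable_coord i).measurable fun t => h.eLpNorm_coord_le t i

lemma memLp_coord_μW (h : IsRegularPair n u G) (hn : n ≠ ∞) (i : Fin 3) :
    MemLp (fun p : ℝ × E3 => u p.1 p.2 i) 2 μW :=
  ⟨(h.stronglyMeasurable_coord i).aestronglyMeasurable,
    (h.eLpNorm_coord_μW_le i).trans_lt hn.lt_top⟩

lemma lintegral_grad_sq_le (h : IsRegularPair n u G) (i : Fin 3) :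
    ∑ j, ∫⁻ p, ‖G p.1 p.2 i j‖ₑ ^ 2 ∂μST ≤ n := by
  rw [← lintegral_finsetSum _ fun j _ =>
    (h.stronglyMeasurable_grad_coord i j).measurable.enorm.pow_const 2]
  refine (lintegral_mono fun p => ?_).trans h.lintegral_grad_le
  simp_rw [enorm_sq_eq_ofReal]
  exact Finset.single_le_sum (f := fun i => ∑ j, ENNReal.ofReal (G p.1 p.2 i j ^ 2))
    (fun _ _ => zero_le) (Finset.mem_univ i)

lemma memLp_grad (h : IsRegularPair n u G) (hn : n ≠ ∞) (i j : Fin 3) :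
    MemLp (fun p : ℝ × E3 => G p.1 p.2 i j) 2 μST := by
  refine ⟨(h.stronglyMeasurable_grad_coord i j).aestronglyMeasurable, ?_⟩
  rw [← ENNReal.pow_lt_top_iff (n := 2) |>.trans (or_iff_left two_ne_zero), eLpNorm_two_sq]
  exact (Finset.single_le_sum (f := fun j => ∫⁻ p, ‖G p.1 p.2 i j‖ₑ ^ 2 ∂μST)
    (fun _ _ => zero_le) (Finset.mem_univ j)).trans_lt ((h.lintegral_grad_sq_le i).trans_lt
      hn.lt_top)

lemma memLp_grad_μW (h : IsRegularPair n u G) (hn : n ≠ ∞) (i j : Fin 3) :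
    MemLp (fun p : ℝ × E3 => G p.1 p.2 i j) 2 μW :=
  (h.memLp_grad hn i j).mono_measure μW_le_μST

end IsRegularPair

/-! ### Slicing in time -/

section Slicing

variable {θ : ℝ → ℝ} {χ : E3 → ℝ}

lemma hasCompactSupport_prod_mul (hθ : HasCompactSupport θ) (hχ : HasCompactSupport χ) :
    HasCompactSupport fun p : ℝ × E3 => θ p.1 * χ p.2 := by
  refine .intro (hθ.isCompact.prod hχ.isCompact) fun p hp => ?_
  by_cases h : p.1 ∈ tsupport θ
  · rw [image_eq_zero_of_notMem_tsupport (f := χ) fun h' => hp ⟨h, h'⟩, mul_zero]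
  · rw [image_eq_zero_of_notMem_tsupport h, zero_mul]

lemma tsupport_prod_mul_subset {T : Set ℝ} (hθ : tsupport θ ⊆ T) :
    tsupport (fun p : ℝ × E3 => θ p.1 * χ p.2) ⊆ Prod.fst ⁻¹' T := by
  refine (closure_minimal (t := Prod.fst ⁻¹' tsupport θ) (fun p hp => subset_tsupport θ ?_)
    ((isClosed_tsupport θ).preimage continuous_fst)).trans (preimage_mono hθ)
  exact left_ne_zero_of_mul hp

variable {f : ℝ × E3 → ℝ} (hf : Integrable f μW) (hχ : Continuous χ) (hχc : HasCompactSupport χ)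
include hf hχ hχc

lemma integrable_mul_prod_mul (hθ : Continuous θ) (hθc : HasCompactSupport θ) :
    Integrable (fun p => f p * (θ p.1 * χ p.2)) μST :=
  integrable_mul_of_integrable_μW hf (by fun_prop) (hasCompactSupport_prod_mul hθc hχc)

lemma integral_μST_mul (hθ : Continuous θ) (hθc : HasCompactSupport θ) :
    ∫ p, f p * (θ p.1 * χ p.2) ∂μST = ∫ t in Ioi 0, θ t * ∫ y, f (t, y) * χ y := by
  refine (integral_prod _ (integrable_mul_prod_mul hf hχ hχc hθ hθc)).trans
    (integral_congr_ae (.of_forall fun t => ?_))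
  simp only [← integral_const_mul, mul_left_comm]

lemma integrable_mul_integral_mul (hθ : Continuous θ) (hθc : HasCompactSupport θ) :
    Integrable (fun t => θ t * ∫ y, f (t, y) * χ y) (volume.restrict (Ioi 0)) := by
  simpa only [← integral_const_mul, mul_left_comm] using
    (integrable_mul_prod_mul hf hχ hχc hθ hθc).integral_prod_left

lemma integrableOn_integral_mul_of_isCompact {K : Set ℝ} (hK : IsCompact K) (hK0 : K ⊆ Ioi 0) :
    IntegrableOn (fun t => ∫ y, f (t, y) * χ y) K := by
  obtain ⟨θ, hθ1, -, hθc, -⟩ :=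
    exists_continuous_one_zero_of_isCompact hK isClosed_empty (disjoint_empty K)
  refine (IntegrableOn.mono_set (integrable_mul_integral_mul hf hχ hχc θ.continuous hθc)
    hK0).congr_fun (fun t ht => ?_) hK.measurableSet
  simp [hθ1 ht]

end Slicing

section Sums

variable {ι : Type*} [Fintype ι] {f : ι → ℝ × E3 → ℝ} {χ : ι → E3 → ℝ}
  (hf : ∀ k, Integrable (f k) μW) (hχ : ∀ k, Continuous (χ k))
  (hχc : ∀ k, HasCompactSupport (χ k))
include hf hχ hχc

lemma integrable_sum_mul {θ : ℝ → ℝ} (hθ : Continuous θ) (hθc : HasCompactSupport θ) :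
    Integrable (fun p => ∑ k, f k p * (θ p.1 * χ k p.2)) μST :=
  integrable_finsetSum _ fun k _ => integrable_mul_prod_mul (hf k) (hχ k) (hχc k) hθ hθc

lemma integral_μST_sum_mul {θ : ℝ → ℝ} (hθ : Continuous θ) (hθc : HasCompactSupport θ) :
    ∫ p, ∑ k, f k p * (θ p.1 * χ k p.2) ∂μST
      = ∫ t in Ioi 0, θ t * ∑ k, ∫ y, f k (t, y) * χ k y := by
  simp_rw [Finset.mul_sum]
  rw [integral_finsetSum _ fun k _ => integrable_mul_prod_mul (hf k) (hχ k) (hχc k) hθ hθc,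
    integral_finsetSum _ fun k _ => integrable_mul_integral_mul (hf k) (hχ k) (hχc k) hθ hθc]
  exact Finset.sum_congr rfl fun k _ => integral_μST_mul (hf k) (hχ k) (hχc k) hθ hθc

lemma ae_sum_integral_mul_eq_zero
    (h : ∀ θ : ℝ → ℝ, ContDiff ℝ (⊤ : ℕ∞) θ → HasCompactSupport θ → tsupport θ ⊆ Ioi 0 →
      ∫ p, ∑ k, f k p * (θ p.1 * χ k p.2) ∂μST = 0) :
    ∀ᵐ t ∂(volume.restrict (Ioi (0 : ℝ))), ∑ k, ∫ y, f k (t, y) * χ k y = 0 := by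
  refine (ae_restrict_iff' measurableSet_Ioi).2
    (isOpen_Ioi.ae_eq_zero_of_integral_contDiff_smul_eq_zero
      ((locallyIntegrableOn_iff isOpen_Ioi.isLocallyClosed).2 fun K hK0 hK =>
        integrable_finsetSum _ fun k _ =>
          integrableOn_integral_mul_of_isCompact (hf k) (hχ k) (hχc k) hK hK0)
      fun θ hθ hθc hθs => ?_)
  rw [← setIntegral_eq_integral_of_forall_compl_eq_zero (s := Ioi 0) fun t ht => by
    rw [image_eq_zero_of_notMem_tsupport fun h' => ht (hθs h'), zero_smul]]
  exact (integral_μST_sum_mul hf hχ hχc hθ.continuous hθc).symm.trans (h θ hθ hθc hθs)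

end Sums

namespace IsRegularPair

variable {n : ℝ≥0∞} {u : ℝ → E3 → E3} {G : ℝ → E3 → Fin 3 → Fin 3 → ℝ}

lemma integrable_coord_μW (h : IsRegularPair n u G) (hn : n ≠ ∞) (i : Fin 3) :
    Integrable (fun p : ℝ × E3 => u p.1 p.2 i) μW :=
  (h.memLp_coord_μW hn i).integrable (by norm_num)

lemma integrable_grad_μW (h : IsRegularPair n u G) (hn : n ≠ ∞) (i j : Fin 3) :
    Integrable (fun p : ℝ × E3 => G p.1 p.2 i j) μW :=
  (h.memLp_grad_μW hn i j).integrable (by norm_num)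

lemma ae_integral_mul_pd (h : IsRegularPair n u G) (hn : n ≠ ∞) {χ : E3 → ℝ}
    (hχ : ContDiff ℝ (⊤ : ℕ∞) χ) (hχc : HasCompactSupport χ) (i j : Fin 3) :
    ∀ᵐ t ∂(volume.restrict (Ioi (0 : ℝ))),
      ∫ y, u t y i * pd χ j y = - ∫ y, G t y i j * χ y := by
  have hsum := ae_sum_integral_mul_eq_zero
    (f := ![fun p : ℝ × E3 => u p.1 p.2 i, fun p : ℝ × E3 => G p.1 p.2 i j]) (χ := ![pd χ j, χ])
    (Fin.forall_fin_two.2 ⟨h.integrable_coord_μW hn i, h.integrable_grad_μW hn i j⟩)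
    (Fin.forall_fin_two.2 ⟨(contDiff_pd hχ j).continuous, hχ.continuous⟩)
    (Fin.forall_fin_two.2 ⟨hasCompactSupport_pd hχc j, hχc⟩) fun θ hθ hθc hθs => ?_
  · simpa [add_eq_zero_iff_eq_neg] using hsum
  · have hgrad := h.isDistGrad (fun p => θ p.1 * χ p.2)
      ((hθ.comp contDiff_fst).mul (hχ.comp contDiff_snd))
      (hasCompactSupport_prod_mul hθc hχc) (tsupport_prod_mul_subset hθs) i j
    simp only [pd_const_mul] at hgrad
    simp only [Fin.sum_univ_two, Matrix.cons_val_zero, Matrix.cons_val_one]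
    rw [integral_add
        (integrable_mul_prod_mul (h.integrable_coord_μW hn i) (contDiff_pd hχ j).continuous
          (hasCompactSupport_pd hχc j) hθ.continuous hθc)
        (integrable_mul_prod_mul (h.integrable_grad_μW hn i j) hχ.continuous hχc
          hθ.continuous hθc),
      hgrad, neg_add_cancel]

lemma ae_integral_mul_lap (h : IsRegularPair n u G) (hn : n ≠ ∞) {η : E3 → ℝ}
    (hη : ContDiff ℝ (⊤ : ℕ∞) η) (hηc : HasCompactSupport η) (i : Fin 3) (x : E3) :
    ∀ᵐ t ∂(volume.restrict (Ioi (0 : ℝ))),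
      ∫ y, u t y i * lap η (x - y) = ∑ j, ∫ y, G t y i j * pd η j (x - y) := by
  have hreflect (j : Fin 3) (y : E3) :
      pd (fun y => pd η j (x - y)) j y = -pd (pd η j) j (x - y) := by
    simpa [← sub_eq_neg_add] using pd_comp_smul (-1) (fun y => pd η j (y + x)) j y |>.trans
      (congrArg _ (pd_comp_add_right x _ j _))
  have hsmooth {f : E3 → ℝ} (hf : ContDiff ℝ (⊤ : ℕ∞) f) :
      ContDiff ℝ (⊤ : ℕ∞) fun y => f (x - y) := hf.comp (contDiff_const.sub contDiff_id)
  have hcompact {f : E3 → ℝ} (hf : HasCompactSupport f) :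
      HasCompactSupport fun y => f (x - y) := hf.comp_homeomorph (Homeomorph.subLeft x)
  filter_upwards [ae_all_iff.2 fun j => h.ae_integral_mul_pd hn (hsmooth (contDiff_pd hη j))
    (hcompact (hasCompactSupport_pd hηc j)) i j] with t ht
  simp only [hreflect, mul_neg, integral_neg, neg_inj] at ht
  simp only [lap, Finset.mul_sum, ← ht]
  exact integral_finsetSum _ fun j _ => (h.memLp_coord hn t i).integrable_mul (q := 2)
    ((hsmooth (contDiff_pd (contDiff_pd hη j) j)).continuous.memLp_of_hasCompactSupport
      (hcompact (hasCompactSupport_pd (hasCompactSupport_pd hηc j) j)))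

end IsRegularPair

/-! ### The mollification error -/

section SpaceConvolution

variable {α : Type*} [MeasurableSpace α] {μ : Measure α} {f : α × E3 → ℝ} {K : E3 → ℝ}

lemma stronglyMeasurable_space_convolution (hf : StronglyMeasurable f)
    (hK : StronglyMeasurable K) :
    StronglyMeasurable fun p : α × E3 => ∫ y, f (p.1, y) * K (p.2 - y) := by
  refine StronglyMeasurable.integral_prod_right'
    (f := fun q : (α × E3) × E3 => f (q.1.1, q.2) * K (q.1.2 - q.2)) ?_
  refine (hf.comp_measurable ?_).mul (hK.comp_measurable ?_) <;> fun_prop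

lemma lintegral_space_convolution_sq_le [SFinite μ] (hf : Measurable f) (hK : Measurable K) :
    ∫⁻ p, ‖∫ y, f (p.1, y) * K (p.2 - y)‖ₑ ^ 2 ∂μ.prod volume
      ≤ (∫⁻ x, ‖K x‖ₑ) ^ 2 * ∫⁻ p, ‖f p‖ₑ ^ 2 ∂μ.prod volume := by
  have hconv := (stronglyMeasurable_space_convolution hf.stronglyMeasurable
    hK.stronglyMeasurable).measurable.enorm.pow_const 2
  have hsq : Measurable fun p => ‖f p‖ₑ ^ 2 := hf.enorm.pow_const 2
  rw [lintegral_prod _ hconv.aemeasurable, lintegral_prod _ hsq.aemeasurable,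
    ← lintegral_const_mul _ hsq.lintegral_prod_right']
  refine lintegral_mono fun t => le_trans (lintegral_mono fun x => ENNReal.pow_le_pow_left ?_)
    (lintegral_convolution_sq_le hK.enorm (hf.comp measurable_prodMk_left).enorm)
  simpa only [enorm_mul, mul_comm] using enorm_integral_le_lintegral_enorm
    fun y => f (t, y) * K (x - y)

end SpaceConvolution

lemma enorm_sum_sq_le {ι E : Type*} [Fintype ι] [NormedAddCommGroup E] (a : ι → E) :
    ‖∑ k, a k‖ₑ ^ 2 ≤ Fintype.card ι * ∑ k, ‖a k‖ₑ ^ 2 := by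
  have hJensen := ENNReal.rpow_sum_le_const_mul_sum_rpow Finset.univ (fun k => ‖a k‖ₑ) one_le_two
  norm_num at hJensen
  exact (ENNReal.pow_le_pow_left (enorm_sum_le Finset.univ a)).trans hJensen

lemma lintegral_enorm_sq_le_of_ae_tendsto {α E : Type*} [MeasurableSpace α] {μ : Measure α}
    [SeminormedAddCommGroup E] {f : α → E} {g : ℕ → α → E} {B : ℝ≥0∞}
    (hg : ∀ k, AEStronglyMeasurable (g k) μ)
    (hlim : ∀ᵐ x ∂μ, Tendsto (fun k => g k x) atTop (𝓝 (f x)))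
    (hB : ∀ k, ∫⁻ x, ‖g k x‖ₑ ^ 2 ∂μ ≤ B) : ∫⁻ x, ‖f x‖ₑ ^ 2 ∂μ ≤ B := by
  refine (lintegral_congr_ae <| hlim.mono fun x hx => ?_).trans_le <|
    (lintegral_liminf_le' fun k => (hg k).enorm.pow_const 2).trans
      (liminf_le_of_le (f := atTop) (by isBoundedDefault) fun b hb => ?_)
  · exact (((ENNReal.continuous_pow 2).comp continuous_enorm).tendsto (f x) |>.comp
      hx).liminf_eq.symm
  · obtain ⟨k, hk⟩ := hb.exists
    exact hk.trans (hB k)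

lemma ae_μST_of_forall_ae {P : ℝ × E3 → Prop} (hP : MeasurableSet {p | P p})
    (h : ∀ x, ∀ᵐ t ∂(volume.restrict (Ioi (0 : ℝ))), P (t, x)) : ∀ᵐ p ∂μST, P p :=
  (Measure.ae_prod_mem_iff_ae_ae_mem hP).2 <|
    (Measure.ae_ae_comm (p := fun t x => P (t, x)) hP).2 (.of_forall h)

lemma memLp_comp_sub {K : E3 → ℝ} (hK : Continuous K) (hKc : HasCompactSupport K) (x : E3)
    (p : ℝ≥0∞) : MemLp (fun y => K (x - y)) p volume :=
  (show Continuous fun y => K (x - y) by fun_prop).memLp_of_hasCompactSupport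
    (hKc.comp_homeomorph (Homeomorph.subLeft x))

namespace IsLaplacianMollifier

variable {ρ : E3 → ℝ} {C ε R : ℝ}

lemma continuous_dilate (hρ : IsLaplacianMollifier ρ C) (ε : ℝ) : Continuous (dilate ρ ε) := by
  have := hρ.continuous
  unfold dilate
  fun_prop

lemma hasCompactSupport_dilate (hρ : IsLaplacianMollifier ρ C) (hε : 0 < ε) :
    HasCompactSupport (dilate ρ ε) :=
  .intro (isCompact_closedBall 0 ε) fun x hx => hρ.dilate_eq_zero hε (by simpa using hx)

lemma mollify_sub_mollify (hρ : IsLaplacianMollifier ρ C) (hε : 0 < ε) (hR : 0 < R) {f : E3 → ℝ}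
    (hf : MemLp f 2 volume) (x : E3) :
    mollify ρ ε f x - mollify ρ R f x = ∫ y, f y * (dilate ρ ε (x - y) - dilate ρ R (x - y)) := by
  simp only [mollify, mul_sub]
  refine (integral_sub ?_ ?_).symm
  all_goals exact hf.integrable_mul (q := 2) (memLp_comp_sub (hρ.continuous_dilate _)
    (hρ.hasCompactSupport_dilate ‹_›) x 2)

end IsLaplacianMollifier

namespace IsRegularPair

variable {n : ℝ≥0∞} {u : ℝ → E3 → E3} {G : ℝ → E3 → Fin 3 → Fin 3 → ℝ}

lemma ae_μST_integral_mul_lap (h : IsRegularPair n u G) (hn : n ≠ ∞) {η : E3 → ℝ}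
    (hη : ContDiff ℝ (⊤ : ℕ∞) η) (hηc : HasCompactSupport η) (i : Fin 3) :
    ∀ᵐ p ∂μST, ∫ y, u p.1 y i * lap η (p.2 - y) = ∑ j, ∫ y, G p.1 y i j * pd η j (p.2 - y) := by
  refine ae_μST_of_forall_ae (StronglyMeasurable.measurableSet_eq_fun ?_ ?_)
    fun x => h.ae_integral_mul_lap hn hη hηc i x
  · exact stronglyMeasurable_space_convolution (h.stronglyMeasurable_coord i)
      (contDiff_lap hη).continuous.stronglyMeasurable
  · exact Finset.stronglyMeasurable_fun_sum _ fun j _ =>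
      stronglyMeasurable_space_convolution (h.stronglyMeasurable_grad_coord i j)
        (contDiff_pd hη j).continuous.stronglyMeasurable

lemma lintegral_lap_sq_le (h : IsRegularPair n u G) (hn : n ≠ ∞) {η : E3 → ℝ}
    (hη : ContDiff ℝ (⊤ : ℕ∞) η) (hηc : HasCompactSupport η) {A : ℝ≥0∞}
    (hA : ∀ j, ∫⁻ x, ‖pd η j x‖ₑ ≤ A) (i : Fin 3) :
    ∫⁻ p, ‖∫ y, u p.1 y i * lap η (p.2 - y)‖ₑ ^ 2 ∂μST ≤ 3 * (A ^ 2 * n) := by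
  have hpd (j : Fin 3) : Measurable (pd η j) := (contDiff_pd hη j).continuous.measurable
  have hG (j : Fin 3) := (h.stronglyMeasurable_grad_coord i j).measurable
  calc ∫⁻ p, ‖∫ y, u p.1 y i * lap η (p.2 - y)‖ₑ ^ 2 ∂μST
      = ∫⁻ p, ‖∑ j, ∫ y, G p.1 y i j * pd η j (p.2 - y)‖ₑ ^ 2 ∂μST :=
        lintegral_congr_ae <| (h.ae_μST_integral_mul_lap hn hη hηc i).mono fun p hp => by
          simp only [hp]
    _ ≤ ∫⁻ p, 3 * ∑ j, ‖∫ y, G p.1 y i j * pd η j (p.2 - y)‖ₑ ^ 2 ∂μST :=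
        lintegral_mono fun p => by simpa using enorm_sum_sq_le (ι := Fin 3) _
    _ = 3 * ∑ j, ∫⁻ p, ‖∫ y, G p.1 y i j * pd η j (p.2 - y)‖ₑ ^ 2 ∂μST := by
        have hmeas (j : Fin 3) := (stronglyMeasurable_space_convolution
          (h.stronglyMeasurable_grad_coord i j)
          (hpd j).stronglyMeasurable).measurable.enorm.pow_const 2
        rw [lintegral_const_mul _ (Finset.measurable_fun_sum _ fun j _ => hmeas j),
          lintegral_finsetSum _ fun j _ => hmeas j]
    _ ≤ 3 * ∑ j, A ^ 2 * ∫⁻ p, ‖G p.1 p.2 i j‖ₑ ^ 2 ∂μST := by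
        gcongr with j
        exact (lintegral_space_convolution_sq_le (hG j) (hpd j)).trans <| by grw [hA j]; rfl
    _ ≤ 3 * (A ^ 2 * n) := by grw [← Finset.mul_sum, h.lintegral_grad_sq_le i]

variable {ρ : E3 → ℝ} {C R : ℝ}

lemma stronglyMeasurable_mollify (h : IsRegularPair n u G) (hρ : IsLaplacianMollifier ρ C)
    (ε : ℝ) (i : Fin 3) :
    StronglyMeasurable fun p : ℝ × E3 => mollify ρ ε (fun y => u p.1 y i) p.2 :=
  stronglyMeasurable_space_convolution (h.stronglyMeasurable_coord i)
    (hρ.continuous_dilate ε).stronglyMeasurable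

lemma ae_tendsto_mollify (h : IsRegularPair n u G) (hn : n ≠ ∞) (hρ : IsLaplacianMollifier ρ C)
    {ε : ℕ → ℝ} (hε : ∀ m, 0 < ε m) (hε0 : Tendsto ε atTop (𝓝 0)) (i : Fin 3) :
    ∀ᵐ p ∂μST, Tendsto (fun m => mollify ρ (ε m) (fun y => u p.1 y i) p.2) atTop
      (𝓝 (u p.1 p.2 i)) := by
  have hmeas : MeasurableSet {p : ℝ × E3 | Tendsto
      (fun m => mollify ρ (ε m) (fun y => u p.1 y i) p.2) atTop (𝓝 (u p.1 p.2 i))} :=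
    measurableSet_tendsto_fun (fun m => (h.stronglyMeasurable_mollify hρ (ε m) i).measurable)
      (h.stronglyMeasurable_coord i).measurable
  exact (Measure.ae_prod_mem_iff_ae_ae_mem hmeas).2 <| .of_forall fun t =>
    hρ.ae_tendsto_mollify hε hε0 ((h.memLp_coord hn t i).locallyIntegrable (by norm_num))

lemma lintegral_mollify_sub_mollify_sq_le (h : IsRegularPair n u G) (hn : n ≠ ∞)
    (hρ : IsLaplacianMollifier ρ C) {ε : ℝ} (hε : 0 < ε) (hεR : ε ≤ R) (i : Fin 3) :
    ∫⁻ p, ‖mollify ρ ε (fun y => u p.1 y i) p.2 - mollify ρ R (fun y => u p.1 y i) p.2‖ₑ ^ 2 ∂μST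
      ≤ 3 * (ENNReal.ofReal (C * R) ^ 2 * n) := by
  obtain ⟨η, hη, hηc, hlap, hL1⟩ := hρ.exists_potential ε R hε hεR
  simpa only [hρ.mollify_sub_mollify hε (hε.trans_le hεR) (h.memLp_coord hn _ i), hlap] using
    h.lintegral_lap_sq_le hn hη hηc hL1 i

lemma lintegral_sub_mollify_sq_le (h : IsRegularPair n u G) (hn : n ≠ ∞)
    (hρ : IsLaplacianMollifier ρ C) (hR : 0 < R) (i : Fin 3) :
    ∫⁻ p, ‖u p.1 p.2 i - mollify ρ R (fun y => u p.1 y i) p.2‖ₑ ^ 2 ∂μST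
      ≤ 3 * (ENNReal.ofReal (C * R) ^ 2 * n) := by
  have hlim : Tendsto (fun m : ℕ => R * (1 / (m + 1))) atTop (𝓝 0) := by
    simpa using (tendsto_one_div_add_atTop_nhds_zero_nat (𝕜 := ℝ)).const_mul R
  have hle (m : ℕ) : R * (1 / (m + 1)) ≤ R :=
    mul_le_of_le_one_right hR.le (div_le_one_of_le₀ (by simp) (by positivity))
  exact lintegral_enorm_sq_le_of_ae_tendsto
    (fun m => ((h.stronglyMeasurable_mollify hρ _ i).sub
      (h.stronglyMeasurable_mollify hρ R i)).aestronglyMeasurable)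
    ((h.ae_tendsto_mollify hn hρ (fun m => by positivity) hlim i).mono fun p hp => hp.sub_const _)
    fun m => h.lintegral_mollify_sub_mollify_sq_le hn hρ (by positivity) (hle m) i

end IsRegularPair

/-! ### Pairing the equation with solenoidal kernels -/

lemma pd_comm {f : E3 → ℝ} (hf : ContDiff ℝ (⊤ : ℕ∞) f) (i j : Fin 3) (x : E3) :
    pd (pd f i) j x = pd (pd f j) i x := by
  have hsnd (i j : Fin 3) : pd (pd f i) j x
      = fderiv ℝ (fderiv ℝ f) x (EuclideanSpace.single j 1) (EuclideanSpace.single i 1) := by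
    have hd : DifferentiableAt ℝ (fderiv ℝ f) x :=
      (hf.fderiv_right (m := (⊤ : ℕ∞)) (by simp)).differentiable (by simp) x
    change fderiv ℝ (fun y => fderiv ℝ f y (EuclideanSpace.single i (1 : ℝ))) x _ = _
    rw [(hd.hasFDerivAt.clm_apply (hasFDerivAt_const _ x)).fderiv]
    simp
  have hsymm : IsSymmSndFDerivAt ℝ f x := hf.contDiffAt.isSymmSndFDerivAt (by
    simpa using (mod_cast le_top : ((2 : ℕ∞) : WithTop ℕ∞) ≤ (⊤ : ℕ∞)))
  rw [hsnd, hsnd, hsymm]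

lemma pd_sum {ι : Type*} [Fintype ι] {f : ι → E3 → ℝ} (hf : ∀ l, Differentiable ℝ (f l))
    (j : Fin 3) (x : E3) : pd (fun y => ∑ l, f l y) j x = ∑ l, pd (f l) j x := by
  unfold pd
  rw [(HasFDerivAt.fun_sum fun l _ => (hf l x).hasFDerivAt).fderiv]
  simp

lemma hasCompactSupport_lap {f : E3 → ℝ} (hf : HasCompactSupport f) :
    HasCompactSupport (lap f) := by
  refine .intro hf.isCompact fun y hy => Finset.sum_eq_zero fun j _ => ?_
  refine image_eq_zero_of_notMem_tsupport fun h => hy ?_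
  have hpd (g : E3 → ℝ) : tsupport (pd g j) ⊆ tsupport g :=
    tsupport_fderiv_apply_subset ℝ (EuclideanSpace.single j (1 : ℝ))
  exact hpd _ (hpd _ h)

/-- The `l`-th component of the solenoidal field `Δκ eᵢ - ∇∂ᵢκ = -curl curl (κ eᵢ)`. It differs from
`Δκ eᵢ` by a gradient, so the two have the same pairing with a divergence-free field. -/
def solenoidal (κ : E3 → ℝ) (i l : Fin 3) (y : E3) : ℝ :=
  (if l = i then lap κ y else 0) - pd (pd κ i) l y

section Solenoidal

variable {κ : E3 → ℝ}

lemma contDiff_solenoidal (hκ : ContDiff ℝ (⊤ : ℕ∞) κ) (i l : Fin 3) :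
    ContDiff ℝ (⊤ : ℕ∞) (solenoidal κ i l) := by
  unfold solenoidal
  refine .sub ?_ (contDiff_pd (contDiff_pd hκ i) l)
  split_ifs
  exacts [contDiff_lap hκ, contDiff_const]

lemma hasCompactSupport_solenoidal (hκ : HasCompactSupport κ) (i l : Fin 3) :
    HasCompactSupport (solenoidal κ i l) := by
  unfold solenoidal
  refine .sub ?_ (hasCompactSupport_pd (hasCompactSupport_pd hκ i) l)
  split_ifs
  exacts [hasCompactSupport_lap hκ, .zero]

lemma sum_pd_solenoidal (hκ : ContDiff ℝ (⊤ : ℕ∞) κ) (i : Fin 3) (y : E3) :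
    ∑ l, pd (solenoidal κ i l) l y = 0 := by
  have hsmooth (j : Fin 3) := contDiff_pd (contDiff_pd hκ j) j
  have hterm (l : Fin 3) : pd (solenoidal κ i l) l y
      = (if l = i then pd (lap κ) l y else 0) - pd (pd (pd κ i) l) l y := by
    have hd := (contDiff_pd (contDiff_pd hκ i) l).differentiable (by simp) y
    unfold solenoidal
    split_ifs
    · exact pd_sub ((contDiff_lap hκ).differentiable (by simp) y) hd
    · rw [pd_sub (differentiableAt_const 0) hd]
      simp [pd]
  have hcomm (j : Fin 3) : pd (pd κ i) j = pd (pd κ j) i := funext (pd_comm hκ i j)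
  simp only [hterm, Finset.sum_sub_distrib, Finset.sum_ite_eq', Finset.mem_univ, if_true]
  rw [show lap κ = fun y => ∑ j, pd (pd κ j) j y from rfl,
    pd_sum fun j => (hsmooth j).differentiable (by simp), sub_eq_zero]
  exact Finset.sum_congr rfl fun j _ => by rw [hcomm, pd_comm (contDiff_pd hκ j)]

lemma IsDivFree.sum_integral_mul_solenoidal {v : E3 → E3} (hdiv : IsDivFree v)
    (hv : ∀ l, MemLp (fun y => v y l) 2 volume) (hκ : ContDiff ℝ (⊤ : ℕ∞) κ)
    (hκc : HasCompactSupport κ) (i : Fin 3) :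
    ∑ l, ∫ y, v y l * solenoidal κ i l y = ∫ y, v y i * lap κ y := by
  have hpp (l : Fin 3) : Integrable fun y => v y l * pd (pd κ i) l y :=
    (hv l).integrable_mul (q := 2)
      ((contDiff_pd (contDiff_pd hκ i) l).continuous.memLp_of_hasCompactSupport
        (hasCompactSupport_pd (hasCompactSupport_pd hκc i) l))
  have hlap (l : Fin 3) : Integrable fun y => v y l * lap κ y :=
    (hv l).integrable_mul (q := 2) ((contDiff_lap hκ).continuous.memLp_of_hasCompactSupport
      (hasCompactSupport_lap hκc))
  have hgrad : ∑ l, ∫ y, v y l * pd (pd κ i) l y = 0 := by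
    rw [← integral_finsetSum _ fun l _ => hpp l]
    exact hdiv _ (contDiff_pd hκ i) (hasCompactSupport_pd hκc i)
  have hterm (l : Fin 3) : ∫ y, v y l * solenoidal κ i l y
      = (if l = i then ∫ y, v y l * lap κ y else 0) - ∫ y, v y l * pd (pd κ i) l y := by
    simp only [solenoidal, mul_sub, mul_ite, mul_zero]
    rw [integral_sub (by split_ifs; exacts [hlap l, integrable_zero _ _ _]) (hpp l)]
    split_ifs <;> simp
  simp only [hterm, Finset.sum_sub_distrib, hgrad, Finset.sum_ite_eq', Finset.mem_univ, if_true,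
    sub_zero]

end Solenoidal

lemma isTest_prod_mul {θ : ℝ → ℝ} (hθ : ContDiff ℝ (⊤ : ℕ∞) θ) (hθc : HasCompactSupport θ)
    {Ψ : Fin 3 → E3 → ℝ} (hΨ : ∀ l, ContDiff ℝ (⊤ : ℕ∞) (Ψ l))
    (hΨc : ∀ l, HasCompactSupport (Ψ l)) (hdiv : ∀ y, ∑ l, pd (Ψ l) l y = 0) :
    IsTest fun p => WithLp.toLp 2 fun l => θ p.1 * Ψ l p.2 := by
  refine ⟨contDiff_euclidean.2 fun l => (hθ.comp contDiff_fst).mul ((hΨ l).comp contDiff_snd),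
    ?_, fun p => ?_⟩
  · refine .intro (hθc.isCompact.prod (isCompact_iUnion fun l => (hΨc l).isCompact))
      fun p hp => ?_
    ext l
    by_contra hne
    exact hp ⟨subset_tsupport θ (left_ne_zero_of_mul hne),
      mem_iUnion.2 ⟨l, subset_tsupport (Ψ l) (right_ne_zero_of_mul hne)⟩⟩
  · simp only [pd_const_mul, ← Finset.mul_sum, hdiv, mul_zero]

/-- The pairing of `νΔv - div (v ⊗ v)` with a smooth field `Ψ`, all derivatives being moved onto
`Ψ`. -/
def stressPairing (ν : ℝ) (v : E3 → E3) (Ψ : Fin 3 → E3 → ℝ) : ℝ :=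
  (∑ l, ∫ y, ν * v y l * lap (Ψ l) y) +
    ∑ q : Fin 3 × Fin 3, ∫ y, v y q.1 * v y q.2 * pd (Ψ q.1) q.2 y

section WeakDeriv

variable {ν : ℝ} {n : ℝ≥0∞} {Ψ : Fin 3 → E3 → ℝ}

lemma WeakEq.integral_deriv_mul_eq {u₀ : E3 → E3} {u : ℝ → E3 → E3}
    {G : ℝ → E3 → Fin 3 → Fin 3 → ℝ} (hw : WeakEq ν u₀ u) (h : IsRegularPair n u G) (hn : n ≠ ∞)
    (hΨ : ∀ l, ContDiff ℝ (⊤ : ℕ∞) (Ψ l)) (hΨc : ∀ l, HasCompactSupport (Ψ l))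
    (hdiv : ∀ y, ∑ l, pd (Ψ l) l y = 0) {θ : ℝ → ℝ} (hθ : ContDiff ℝ (⊤ : ℕ∞) θ)
    (hθc : HasCompactSupport θ) (hθ0 : θ 0 = 0) :
    ∫ t in Ioi 0, deriv θ t * ∑ l, ∫ y, u t y l * Ψ l y
      = - ∫ t in Ioi 0, θ t * stressPairing ν (u t) Ψ := by
  have hθ' : Continuous (deriv θ) := hθ.continuous_deriv (by simp)
  have hvel := h.integrable_coord_μW hn
  have hlap (l : Fin 3) := (contDiff_lap (hΨ l)).continuous
  have hpd (q : Fin 3 × Fin 3) := (contDiff_pd (hΨ q.1) q.2).continuous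
  have hstress : ∀ k, Integrable (Sum.elim (fun (l : Fin 3) (p : ℝ × E3) => ν * u p.1 p.2 l)
      (fun (q : Fin 3 × Fin 3) p => u p.1 p.2 q.1 * u p.1 p.2 q.2) k) μW := Sum.forall.2
    ⟨fun l => (hvel l).const_mul ν,
      fun q => (h.memLp_coord_μW hn q.1).integrable_mul (h.memLp_coord_μW hn q.2)⟩
  have hχ : ∀ k, Continuous (Sum.elim (fun l => lap (Ψ l))
      (fun q : Fin 3 × Fin 3 => pd (Ψ q.1) q.2) k) := Sum.forall.2 ⟨hlap, hpd⟩
  have hχc : ∀ k, HasCompactSupport (Sum.elim (fun l => lap (Ψ l))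
      (fun q : Fin 3 × Fin 3 => pd (Ψ q.1) q.2) k) := Sum.forall.2
    ⟨fun l => hasCompactSupport_lap (hΨc l), fun q => hasCompactSupport_pd (hΨc q.1) q.2⟩
  have htest := hw _ (isTest_prod_mul hθ hθc hΨ hΨc hdiv)
  have hsplit := integral_add
    (integrable_sum_mul hvel (fun l => (hΨ l).continuous) hΨc hθ' hθc.deriv)
    (integrable_sum_mul hstress hχ hχc hθ.continuous hθc)
  rw [integral_μST_sum_mul hvel (fun l => (hΨ l).continuous) hΨc hθ' hθc.deriv,
    integral_μST_sum_mul hstress hχ hχc hθ.continuous hθc] at hsplit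
  simp only [Fintype.sum_sum_type, Sum.elim_inl, Sum.elim_inr] at hsplit
  have hdt (l : Fin 3) (p : ℝ × E3) : deriv (fun τ => θ τ * Ψ l p.2) p.1 = deriv θ p.1 * Ψ l p.2 :=
    deriv_mul_const_field _
  simp only [timeDeriv, spaceLap, spaceGrad, hdt, pd_const_mul, hθ0, zero_mul, mul_zero,
    Finset.sum_const_zero, integral_zero, neg_zero] at htest
  rw [eq_neg_iff_add_eq_zero]
  refine hsplit.symm.trans (.trans (integral_congr_ae (.of_forall fun p => ?_)) htest)
  simp only [lap, Fintype.sum_prod_type, ← Finset.mul_sum, ← add_assoc, ← Finset.sum_add_distrib]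
  congr 2
  funext l
  ring

lemma abs_integral_mul_le {f g : E3 → ℝ} (hf : MemLp f 2 volume) (hg : MemLp g 2 volume)
    (hn : n ≠ ∞) (hfn : eLpNorm f 2 volume ≤ n) :
    |∫ y, f y * g y| ≤ (n * eLpNorm g 2 volume).toReal := by
  have hle := (enorm_integral_mul_le hf.1 hg.1).trans (mul_le_mul_left hfn _)
  simpa using ENNReal.toReal_mono (ENNReal.mul_ne_top hn hg.2.ne) hle

lemma abs_integral_mul_mul_le {f g k : E3 → ℝ} (hf : MemLp f 2 volume) (hg : MemLp g 2 volume)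
    (hk : MemLp k ∞ volume) (hn : n ≠ ∞) (hfn : eLpNorm f 2 volume ≤ n)
    (hgn : eLpNorm g 2 volume ≤ n) :
    |∫ y, f y * g y * k y| ≤ (n * (n * eLpNorm k ∞ volume)).toReal := by
  simp only [mul_assoc]
  refine (abs_integral_mul_le hf (g := fun y => g y * k y) (hk.mul hg) hn hfn).trans
    (ENNReal.toReal_mono (ENNReal.mul_ne_top hn (ENNReal.mul_ne_top hn hk.2.ne)) ?_)
  gcongr
  exact (eLpNorm_smul_le_mul_eLpNorm hk.1 hg.1).trans (mul_le_mul_left hgn _)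

lemma exists_abs_stressPairing_le (ν : ℝ) (hn : n ≠ ∞) (hΨ : ∀ l, ContDiff ℝ (⊤ : ℕ∞) (Ψ l))
    (hΨc : ∀ l, HasCompactSupport (Ψ l)) :
    ∃ B, ∀ v : E3 → E3, (∀ l, MemLp (fun y => v y l) 2 volume) →
      (∀ l, eLpNorm (fun y => v y l) 2 volume ≤ n) → |stressPairing ν v Ψ| ≤ B := by
  refine ⟨(∑ l, |ν| * (n * eLpNorm (lap (Ψ l)) 2 volume).toReal) +
    ∑ q : Fin 3 × Fin 3, (n * (n * eLpNorm (pd (Ψ q.1) q.2) ∞ volume)).toReal,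
    fun v hv hvn => (abs_add_le _ _).trans (add_le_add ?_ ?_)⟩ <;>
  refine (Finset.abs_sum_le_sum_abs _ _).trans (Finset.sum_le_sum fun k _ => ?_)
  · simp only [mul_assoc, integral_const_mul, abs_mul]
    gcongr
    exact abs_integral_mul_le (hv k) ((contDiff_lap (hΨ k)).continuous.memLp_of_hasCompactSupport
      (hasCompactSupport_lap (hΨc k))) hn (hvn k)
  · exact abs_integral_mul_mul_le (hv k.1) (hv k.2)
      ((contDiff_pd (hΨ k.1) k.2).continuous.memLp_of_hasCompactSupport
        (hasCompactSupport_pd (hΨc k.1) k.2)) hn (hvn k.1) (hvn k.2)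

lemma exists_hasBoundedWeakDeriv (ν : ℝ) (hn : n ≠ ∞) {κ : E3 → ℝ} (hκ : ContDiff ℝ (⊤ : ℕ∞) κ)
    (hκc : HasCompactSupport κ) (i : Fin 3) :
    ∃ B, ∀ (u₀ : E3 → E3) (u : ℝ → E3 → E3) (G : ℝ → E3 → Fin 3 → Fin 3 → ℝ),
      IsRegularPair n u G → WeakEq ν u₀ u →
        HasBoundedWeakDeriv (fun t => ∫ y, u t y i * lap κ y) B := by
  have hΨ := contDiff_solenoidal hκ i
  have hΨc := hasCompactSupport_solenoidal hκc i
  obtain ⟨B, hB⟩ := exists_abs_stressPairing_le ν hn hΨ hΨc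
  refine ⟨B, fun u₀ u G h hw θ hθ hθc hθs => ?_⟩
  have hzero {t : ℝ} (ht : t ∉ Ioi 0) : θ t = 0 :=
    image_eq_zero_of_notMem_tsupport fun h' => ht (hθs h')
  have hzero' {t : ℝ} (ht : t ∉ Ioi 0) : deriv θ t = 0 :=
    image_eq_zero_of_notMem_tsupport fun h' => ht (hθs (tsupport_deriv_subset h'))
  have hbound (t : ℝ) : |stressPairing ν (u t) (solenoidal κ i)| ≤ B :=
    hB _ (h.memLp_coord hn t) (h.eLpNorm_coord_le t)
  calc |∫ t, (∫ y, u t y i * lap κ y) * deriv θ t|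
      = |∫ t in Ioi 0, deriv θ t * ∑ l, ∫ y, u t y l * solenoidal κ i l y| := by
        rw [setIntegral_eq_integral_of_forall_compl_eq_zero fun t ht => by
          rw [hzero' ht, zero_mul]]
        simp only [(h.isDivFree _).sum_integral_mul_solenoidal (h.memLp_coord hn _) hκ hκc i]
        simp only [mul_comm]
    _ = |∫ t in Ioi 0, θ t * stressPairing ν (u t) (solenoidal κ i)| := by
        rw [hw.integral_deriv_mul_eq h hn hΨ hΨc (sum_pd_solenoidal hκ i) hθ hθc
          (hzero self_notMem_Ioi), abs_neg]
    _ ≤ ∫ t in Ioi 0, B * |θ t| := by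
        refine norm_integral_le_of_norm_le (μ := volume.restrict (Ioi 0))
          (f := fun t => θ t * stressPairing ν (u t) (solenoidal κ i))
          ((hθ.continuous.integrable_of_hasCompactSupport hθc).abs.const_mul B).integrableOn
          (.of_forall fun t => ?_)
        rw [norm_mul, mul_comm]
        exact mul_le_mul_of_nonneg_right (hbound t) (abs_nonneg _)
    _ = B * ∫ t, |θ t| := by
        rw [setIntegral_eq_integral_of_forall_compl_eq_zero fun t ht => by simp [hzero ht],
          integral_const_mul]

lemma IsRegularPair.locallyIntegrable_integral_mul {u : ℝ → E3 → E3}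
    {G : ℝ → E3 → Fin 3 → Fin 3 → ℝ} (h : IsRegularPair n u G) (hn : n ≠ ∞) {χ : E3 → ℝ}
    (hχ : Continuous χ) (hχc : HasCompactSupport χ) (i : Fin 3) :
    LocallyIntegrable fun t => ∫ y, u t y i * χ y := by
  have hmeas : StronglyMeasurable fun p : ℝ × E3 => u p.1 p.2 i * χ p.2 :=
    (h.stronglyMeasurable_coord i).mul (hχ.stronglyMeasurable.comp_measurable measurable_snd)
  exact (locallyIntegrable_const (n * eLpNorm χ 2 volume).toReal).mono
    hmeas.integral_prod_right'.aestronglyMeasurable (.of_forall fun t =>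
      (abs_integral_mul_le (h.memLp_coord hn t i) (hχ.memLp_of_hasCompactSupport hχc) hn
        (h.eLpNorm_coord_le t i)).trans (le_abs_self _))

end WeakDeriv

/-! ### Affine changes of variables -/

section AffineChange

variable {β γ : ℝ} (hβ : 0 < β) (hγ : 0 < γ)
include hβ

lemma measurableEmbedding_smul_add {F : Type*} [NormedAddCommGroup F] [NormedSpace ℝ F]
    [MeasurableSpace F] [BorelSpace F] (z : F) : MeasurableEmbedding fun x : F => β • x + z :=
  ((Homeomorph.smulOfNeZero β hβ.ne').trans (Homeomorph.addRight z)).measurableEmbedding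

lemma map_volume_smul_add (z : E3) :
    Measure.map (fun x : E3 => β • x + z) volume = ENNReal.ofReal (β⁻¹ ^ 3) • volume := by
  have hcomp : (fun x : E3 => β • x + z) = (fun x => x + z) ∘ fun x => β • x := rfl
  rw [hcomp, ← Measure.map_map (by fun_prop) (by fun_prop), Measure.map_addHaar_smul _ hβ.ne',
    Measure.map_smul, map_add_right_eq_self]
  simp [abs_of_pos hβ]

lemma eLpNorm_comp_smul_add {F : Type*} [NormedAddCommGroup F] (v : E3 → F) (z : E3) (s : ℝ≥0∞) :
    eLpNorm (fun x => v (β • x + z)) s volume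
      = ENNReal.ofReal (β⁻¹ ^ 3) ^ (1 / s).toReal * eLpNorm v s volume := by
  have hmap := (measurableEmbedding_smul_add hβ z).eLpNorm_map_measure (g := v) (p := s)
    (μ := volume)
  rw [map_volume_smul_add hβ, eLpNorm_smul_measure_of_ne_zero (by
    simp only [inv_pow, ne_eq, ofReal_eq_zero, inv_nonpos, not_le]; positivity)] at hmap
  exact hmap.symm

omit hβ in
include hγ in
lemma map_restrict_Ioi_mul :
    Measure.map (fun t : ℝ => γ * t) (volume.restrict (Ioi 0))
      = ENNReal.ofReal γ⁻¹ • volume.restrict (Ioi 0) := by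
  have hpre : Ioi (0 : ℝ) = (fun t : ℝ => γ * t) ⁻¹' Ioi 0 := by ext t; simp [hγ]
  conv_lhs => rw [hpre]
  rw [← Measure.restrict_map (by fun_prop) measurableSet_Ioi, Real.map_volume_mul_left hγ.ne',
    Measure.restrict_smul, abs_of_pos (inv_pos.2 hγ)]

include hγ

lemma map_μST (z : E3) :
    Measure.map (fun p : ℝ × E3 => (γ * p.1, β • p.2 + z)) μST
      = ENNReal.ofReal (γ⁻¹ * β⁻¹ ^ 3) • μST := by
  have hprod := Measure.map_prod_map (volume.restrict (Ioi (0 : ℝ))) (volume : Measure E3)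
    (f := fun t : ℝ => γ * t) (g := fun x : E3 => β • x + z) (by fun_prop) (by fun_prop)
  rw [map_restrict_Ioi_mul hγ, map_volume_smul_add hβ, Measure.prod_smul_left,
    Measure.prod_smul_right, smul_smul, ← ENNReal.ofReal_mul (by positivity)] at hprod
  exact hprod.symm

lemma measurableEmbedding_prod_smul_add (z : E3) :
    MeasurableEmbedding fun p : ℝ × E3 => (γ * p.1, β • p.2 + z) :=
  ((Homeomorph.mulLeft₀ γ hγ.ne').prodCongr
    ((Homeomorph.smulOfNeZero β hβ.ne').trans (Homeomorph.addRight z))).measurableEmbedding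

end AffineChange

lemma eLpNorm_two_dilate (ρ : E3 → ℝ) {R : ℝ} (hR : 0 < R) :
    eLpNorm (dilate ρ R) 2 volume = ENNReal.ofReal (R ^ (-(3 / 2) : ℝ)) * eLpNorm ρ 2 volume := by
  have hsmul : dilate ρ R = (R⁻¹ ^ 3) • fun x => ρ (R⁻¹ • x + 0) := by
    funext x
    simp [dilate]
  have hpow : R⁻¹ ^ 3 * (R ^ 3) ^ (1 / 2 : ℝ) = R ^ (-(3 / 2) : ℝ) := by
    rw [inv_pow, ← Real.rpow_natCast, ← Real.rpow_neg hR.le, ← Real.rpow_mul hR.le,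
      ← Real.rpow_add hR]
    norm_num
  rw [hsmul, eLpNorm_const_smul, eLpNorm_comp_smul_add (inv_pos.2 hR), inv_inv, ← ofReal_norm,
    Real.norm_of_nonneg (by positivity), ← hpow, ENNReal.ofReal_mul (by positivity),
    ← ENNReal.ofReal_rpow_of_nonneg (by positivity) (by norm_num), mul_assoc]
  simp

lemma tendsto_eLpNorm_two_dilate {ρ : E3 → ℝ} (hρ : MemLp ρ 2 volume) :
    Tendsto (fun R => eLpNorm (dilate ρ R) 2 volume) atTop (𝓝 0) := by
  have hlim : Tendsto (fun R : ℝ => ENNReal.ofReal (R ^ (-(3 / 2) : ℝ)) * eLpNorm ρ 2 volume)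
      atTop (𝓝 (ENNReal.ofReal 0 * eLpNorm ρ 2 volume)) :=
    ENNReal.Tendsto.mul_const (ENNReal.tendsto_ofReal (tendsto_rpow_neg_atTop (by norm_num)))
      (.inr hρ.2.ne)
  rw [ENNReal.ofReal_zero, zero_mul] at hlim
  refine hlim.congr' ?_
  filter_upwards [eventually_gt_atTop 0] with R hR using (eLpNorm_two_dilate ρ hR).symm

/-! ### Weak compactness and strong limits in `L²` -/

lemma exists_subseq_tendsto_inner {H : Type*} [NormedAddCommGroup H] [InnerProductSpace ℝ H]
    [CompleteSpace H] [TopologicalSpace.SeparableSpace H] {x : ℕ → H} {C : ℝ}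
    (hx : ∀ k, ‖x k‖ ≤ C) :
    ∃ φ : ℕ → ℕ, StrictMono φ ∧ ∃ a : H, ‖a‖ ≤ C ∧
      ∀ y, Tendsto (fun k => inner ℝ (x (φ k)) y) atTop (𝓝 (inner ℝ a y)) := by
  obtain ⟨a, ha, φ, hφ, hlim⟩ := WeakDual.isSeqCompact_closedBall ℝ H 0 C
    (x := fun k => StrongDual.toWeakDual (InnerProductSpace.toDual ℝ H (x k))) fun k =>
      show InnerProductSpace.toDual ℝ H (x k) ∈ Metric.closedBall 0 C by simpa using hx k
  refine ⟨φ, hφ, (InnerProductSpace.toDual ℝ H).symm (WeakDual.toStrongDual a), ?_, fun y => ?_⟩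
  · rw [LinearIsometryEquiv.norm_map]
    simpa using ha
  · rw [InnerProductSpace.toDual_symm_apply]
    exact ((WeakDual.eval_continuous y).tendsto a).comp hlim

lemma exists_subseq_tendsto_integral_mul {ι α : Type*} [Fintype ι] [MeasurableSpace α]
    [MeasurableSpace.CountablyGenerated α] {μ : Measure α} [SFinite μ]
    {f : ℕ → α → EuclideanSpace ℝ ι} {C : ℝ≥0∞} (hC : C ≠ ∞)
    (hf : ∀ k, AEStronglyMeasurable (f k) μ) (hb : ∀ k, eLpNorm (f k) 2 μ ≤ C) :
    ∃ φ : ℕ → ℕ, StrictMono φ ∧ ∃ F : α → EuclideanSpace ℝ ι, StronglyMeasurable F ∧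
      eLpNorm F 2 μ ≤ C ∧ ∀ i (g : α → ℝ), MemLp g 2 μ →
        Tendsto (fun k => ∫ x, f (φ k) x i * g x ∂μ) atTop (𝓝 (∫ x, F x i * g x ∂μ)) := by
  classical
  have hmem (k : ℕ) : MemLp (f k) 2 μ := ⟨hf k, (hb k).trans_lt hC.lt_top⟩
  have : Fact ((2 : ℝ≥0∞) ≠ ∞) := ⟨by norm_num⟩
  have : SecondCountableTopology (Lp (EuclideanSpace ℝ ι) 2 μ) := Lp.SecondCountableTopology
  obtain ⟨φ, hφ, F, hF, hlim⟩ := exists_subseq_tendsto_inner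
    (x := fun k => (hmem k).toLp (f k)) (C := C.toReal) fun k => by
      rw [Lp.norm_toLp]
      exact ENNReal.toReal_mono hC (hb k)
  refine ⟨φ, hφ, F, Lp.stronglyMeasurable F, ?_, fun i g hg => ?_⟩
  · rw [← ENNReal.ofReal_toReal hC, ← ENNReal.ofReal_toReal (Lp.eLpNorm_ne_top F)]
    exact ENNReal.ofReal_le_ofReal (by simpa [Lp.norm_def] using hF)
  · have hge : MemLp (fun x => g x • EuclideanSpace.single i (1 : ℝ)) 2 μ :=
      hg.mono (hg.1.smul aestronglyMeasurable_const) (.of_forall fun x => by simp [norm_smul])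
    have hinner (v : Lp (EuclideanSpace ℝ ι) 2 μ) (w : α → EuclideanSpace ℝ ι) (hvw : v =ᵐ[μ] w) :
        inner ℝ v (hge.toLp _) = ∫ x, w x i * g x ∂μ := by
      rw [L2.inner_def]
      refine integral_congr_ae ?_
      filter_upwards [hge.coeFn_toLp, hvw] with x hx hvx
      rw [hx, hvx, real_inner_smul_right, EuclideanSpace.inner_single_right]
      simp [mul_comm]
    simpa only [hinner F F ae_eq_rfl, fun k => hinner _ _ (hmem (φ k)).coeFn_toLp] using
      hlim (hge.toLp _)

lemma cauchySeq_of_forall_exists_dist_le {X : Type*} [PseudoMetricSpace X] {u : ℕ → X}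
    (h : ∀ ε > 0, ∃ v : ℕ → X, CauchySeq v ∧ ∀ k, dist (u k) (v k) ≤ ε) : CauchySeq u := by
  refine Metric.cauchySeq_iff.2 fun ε hε => ?_
  obtain ⟨v, hv, huv⟩ := h (ε / 3) (by positivity)
  obtain ⟨N, hN⟩ := Metric.cauchySeq_iff.1 hv (ε / 3) (by positivity)
  refine ⟨N, fun m hm k hk => ?_⟩
  have hvu : dist (v k) (u k) ≤ ε / 3 := dist_comm (v k) (u k) ▸ huv k
  linarith [dist_triangle4 (u m) (v m) (v k) (u k), huv m, hN m hm k hk]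

lemma tendsto_eLpNorm_two_zero {α F : Type*} [MeasurableSpace α] [NormedAddCommGroup F]
    {μ : Measure α} {f : ℕ → α → F}
    (h : Tendsto (fun k => ∫⁻ x, ‖f k x‖ₑ ^ 2 ∂μ) atTop (𝓝 0)) :
    Tendsto (fun k => eLpNorm (f k) 2 μ) atTop (𝓝 0) := by
  have hroot := ((ENNReal.continuous_rpow_const (y := (2 : ℝ)⁻¹)).tendsto 0).comp h
  rw [ENNReal.zero_rpow_of_pos (by norm_num)] at hroot
  refine hroot.congr fun k => ?_
  rw [Function.comp_apply, ← eLpNorm_two_sq, ← ENNReal.rpow_natCast, ← ENNReal.rpow_mul]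
  simp

lemma exists_tendsto_eLpNorm_two_of_bounded {α : Type*} [MeasurableSpace α] {μ : Measure α}
    [IsFiniteMeasure μ] {f : ℕ → α → ℝ} (hf : ∀ k, AEStronglyMeasurable (f k) μ) {M : ℝ}
    (hM : ∀ k x, |f k x| ≤ M) (hlim : ∀ᵐ x ∂μ, ∃ c, Tendsto (fun k => f k x) atTop (𝓝 c)) :
    ∃ g, MemLp g 2 μ ∧ Tendsto (fun k => eLpNorm (f k - g) 2 μ) atTop (𝓝 0) := by
  obtain ⟨g, hg, hfg⟩ := exists_stronglyMeasurable_limit_of_tendsto_ae hf hlim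
  have hgM : ∀ᵐ x ∂μ, |g x| ≤ M := hfg.mono fun x hx =>
    le_of_tendsto hx.abs (.of_forall fun k => hM k x)
  refine ⟨g, .of_bound hg.aestronglyMeasurable M hgM, tendsto_eLpNorm_two_zero ?_⟩
  rw [← lintegral_zero (μ := μ)]
  refine tendsto_lintegral_of_dominated_convergence' (fun _ => ENNReal.ofReal (2 * M) ^ 2)
    (fun k => ((hf k).sub hg.aestronglyMeasurable).enorm.pow_const 2) (fun k => ?_)
    (by rw [lintegral_const]; finiteness) ?_
  · filter_upwards [hgM] with x hx
    rw [Pi.sub_apply, ← ofReal_norm, Real.norm_eq_abs]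
    gcongr
    linarith [abs_sub (f k x) (g x), hM k x]
  · filter_upwards [hfg] with x hx
    have hsub : Tendsto (fun k => f k x - g x) atTop (𝓝 0) := by simpa using hx.sub_const (g x)
    simpa using ENNReal.Tendsto.pow (n := 2) hsub.enorm

lemma exists_tendsto_eLpNorm_two_of_approx {α : Type*} [MeasurableSpace α] {μ : Measure α}
    {f : ℕ → α → ℝ} (hf : ∀ k, MemLp (f k) 2 μ)
    (happrox : ∀ δ : ℝ≥0∞, 0 < δ → ∃ (h : ℕ → α → ℝ) (g : α → ℝ), (∀ k, MemLp (h k) 2 μ) ∧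
      MemLp g 2 μ ∧ (∀ k, eLpNorm (f k - h k) 2 μ ≤ δ) ∧
      Tendsto (fun k => eLpNorm (h k - g) 2 μ) atTop (𝓝 0)) :
    ∃ F, MemLp F 2 μ ∧ Tendsto (fun k => eLpNorm (f k - F) 2 μ) atTop (𝓝 0) := by
  have hcauchy : CauchySeq fun k => (hf k).toLp (f k) := by
    refine cauchySeq_of_forall_exists_dist_le fun ε hε => ?_
    obtain ⟨h, g, hh, hg, hfh, hhg⟩ := happrox (ENNReal.ofReal ε) (ENNReal.ofReal_pos.2 hε)
    refine ⟨fun k => (hh k).toLp (h k),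
      ((Lp.tendsto_Lp_iff_tendsto_eLpNorm'' h hh g hg).2 hhg).cauchySeq, fun k => ?_⟩
    rw [← edist_le_ofReal hε.le, Lp.edist_toLp_toLp]
    exact hfh k
  obtain ⟨F, hF⟩ := cauchySeq_tendsto_of_complete hcauchy
  refine ⟨F, Lp.memLp F, (Lp.tendsto_Lp_iff_tendsto_eLpNorm'' f hf F (Lp.memLp F)).1 ?_⟩
  rwa [Lp.toLp_coeFn]

/-! ### Local strong compactness of bounded families of solutions -/

lemma exists_tendsto_integral_mul_of_hasCompactSupport {f : ℕ → ℝ × E3 → ℝ}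
    (hlim : ∀ g : ℝ × E3 → ℝ, MemLp g 2 μW →
      ∃ c, Tendsto (fun k => ∫ p, f k p * g p ∂μW) atTop (𝓝 c))
    {b : ℝ × E3 → ℝ} (hb : Continuous b) (hbc : HasCompactSupport b) :
    ∃ c, Tendsto (fun k => ∫ p, f k p * b p ∂μST) atTop (𝓝 c) := by
  obtain ⟨c, hc, ⟨M, hM⟩, hbc⟩ := exists_eq_weight_mul hb hbc
  simpa only [integral_μW, hbc, mul_left_comm] using
    hlim c (.of_bound hc.aestronglyMeasurable M (.of_forall hM))

lemma timeMollify_integral_mul {f : ℝ × E3 → ℝ} (hf : Integrable f μW) {χ : E3 → ℝ}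
    (hχ : Continuous χ) (hχc : HasCompactSupport χ) {φ : ContDiffBump (0 : ℝ)} {t : ℝ}
    (ht : φ.rOut ≤ t) :
    timeMollify φ (fun s => ∫ y, f (s, y) * χ y) t
      = ∫ p, f p * (φ.normed volume (t - p.1) * χ p.2) ∂μST := by
  rw [integral_μST_mul hf hχ hχc (θ := fun s => φ.normed volume (t - s))
    (φ.contDiff_normed (n := 0).continuous.comp (continuous_const.sub continuous_id))
    (φ.hasCompactSupport_normed.comp_homeomorph (Homeomorph.subLeft t)), timeMollify_apply,
    setIntegral_eq_integral_of_forall_compl_eq_zero fun s hs => ?_]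
  rw [normed_const_sub_eq_zero φ, zero_mul]
  rw [Metric.mem_ball, dist_comm, Real.dist_eq, not_lt]
  linarith [notMem_Ioi.1 hs, le_abs_self (t - s)]

lemma lap_comp_const_sub (η : E3 → ℝ) (x y : E3) :
    lap (fun z => η (x - z)) y = lap η (x - y) := by
  have hreflect := lap_comp_smul (-1) (fun z => η (z + x)) y
  simpa [lap_comp_add_right, ← sub_eq_neg_add] using hreflect

lemma abs_integral_mul_comp_sub_le {f K : E3 → ℝ} {n : ℝ≥0∞} (hf : MemLp f 2 volume)
    (hK : Continuous K) (hKc : HasCompactSupport K) (hn : n ≠ ∞) (hfn : eLpNorm f 2 volume ≤ n)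
    (x : E3) : |∫ y, f y * K (x - y)| ≤ (n * eLpNorm K 2 volume).toReal := by
  rw [← eLpNorm_comp_measurePreserving hK.aestronglyMeasurable
    (Measure.measurePreserving_sub_left volume x)]
  exact abs_integral_mul_le hf (memLp_comp_sub hK hKc x 2) hn hfn

namespace IsLaplacianMollifier

variable {ρ : E3 → ℝ} {C : ℝ} {n δ : ℝ≥0∞}

lemma eventually_forall_eLpNorm_sub_mollify_le (hρ : IsLaplacianMollifier ρ C) (hn : n ≠ ∞)
    (hδ : 0 < δ) :
    ∀ᶠ ε in 𝓝[>] (0 : ℝ), ∀ (u : ℝ → E3 → E3) (G : ℝ → E3 → Fin 3 → Fin 3 → ℝ) (i : Fin 3),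
      IsRegularPair n u G →
        eLpNorm (fun p => u p.1 p.2 i - mollify ρ ε (fun y => u p.1 y i) p.2) 2 μW ≤ δ := by
  have hlim : Tendsto (fun ε : ℝ => 3 * (ENNReal.ofReal (C * ε) ^ 2 * n)) (𝓝[>] 0) (𝓝 0) := by
    have hCε : Tendsto (fun ε : ℝ => C * ε) (𝓝[>] 0) (𝓝 (C * 0)) :=
      (tendsto_nhdsWithin_of_tendsto_nhds tendsto_id).const_mul C
    simpa using ENNReal.Tendsto.const_mul (a := 3) (ENNReal.Tendsto.mul_const
      (ENNReal.Tendsto.pow (n := 2) (ENNReal.tendsto_ofReal hCε)) (.inr hn)) (.inr (by simp))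
  filter_upwards [hlim.eventually_le_const (pow_ne_zero 2 hδ.ne').bot_lt, self_mem_nhdsWithin]
    with ε hε (hε0 : 0 < ε) u G i h
  exact eLpNorm_two_le_iff.2 <| (lintegral_mono' μW_le_μST le_rfl).trans <|
    (h.lintegral_sub_mollify_sq_le hn hρ hε0 i).trans hε

lemma eventually_forall_eLpNorm_mollify_le (hρ : IsLaplacianMollifier ρ C) (hn : n ≠ ∞)
    (hδ : 0 < δ) :
    ∀ᶠ R in atTop, ∀ (u : ℝ → E3 → E3) (G : ℝ → E3 → Fin 3 → Fin 3 → ℝ) (i : Fin 3),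
      IsRegularPair n u G →
        eLpNorm (fun p : ℝ × E3 => mollify ρ R (fun y => u p.1 y i) p.2) 2 μW ≤ δ := by
  have hlim : Tendsto (fun R => n * eLpNorm (dilate ρ R) 2 volume * μW univ ^ (1 / 2 : ℝ)) atTop
      (𝓝 (n * 0 * μW univ ^ (1 / 2 : ℝ))) :=
    ENNReal.Tendsto.mul_const (ENNReal.Tendsto.const_mul (tendsto_eLpNorm_two_dilate
      (hρ.continuous.memLp_of_hasCompactSupport hρ.hasCompactSupport)) (.inr hn))
      (.inr (by finiteness))
  rw [mul_zero, zero_mul] at hlim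
  filter_upwards [hlim.eventually_le_const hδ, eventually_gt_atTop 0] with R hR hR0 u G i h
  have hbound (p : ℝ × E3) : ‖mollify ρ R (fun y => u p.1 y i) p.2‖ₑ
      ≤ n * eLpNorm (dilate ρ R) 2 volume := by
    rw [← ofReal_norm]
    exact ENNReal.ofReal_le_of_le_toReal (abs_integral_mul_comp_sub_le (h.memLp_coord hn p.1 i)
      (hρ.continuous_dilate R) (hρ.hasCompactSupport_dilate hR0) hn (h.eLpNorm_coord_le p.1 i) _)
  refine le_trans ?_ hR
  simpa using eLpNorm_le_of_ae_enorm_bound (p := 2) (μ := μW) (.of_forall hbound)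

end IsLaplacianMollifier

section Compactness

variable {ν : ℝ} {n : ℝ≥0∞} {u₀ : ℕ → E3 → E3} {u : ℕ → ℝ → E3 → E3}
  {G : ℕ → ℝ → E3 → Fin 3 → Fin 3 → ℝ} {i : Fin 3}
  (hn : n ≠ ∞) (h : ∀ k, IsRegularPair n (u k) (G k)) (hw : ∀ k, WeakEq ν (u₀ k) (u k))
  (hlim : ∀ g : ℝ × E3 → ℝ, MemLp g 2 μW →
    ∃ c, Tendsto (fun k => ∫ p, u k p.1 p.2 i * g p ∂μW) atTop (𝓝 c))

include hn h hw hlim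

lemma ae_exists_tendsto_integral_mul_lap {κ : E3 → ℝ} (hκ : ContDiff ℝ (⊤ : ℕ∞) κ)
    (hκc : HasCompactSupport κ) :
    ∀ᵐ t ∂(volume.restrict (Ioi (0 : ℝ))),
      ∃ c, Tendsto (fun k => ∫ y, u k t y i * lap κ y) atTop (𝓝 c) := by
  have hlap := (contDiff_lap hκ).continuous
  have hlapc := hasCompactSupport_lap hκc
  obtain ⟨B, hB⟩ := exists_hasBoundedWeakDeriv ν hn hκ hκc i
  have hmoll := ae_all_iff.2 fun k => (hB _ _ _ (h k) (hw k)).ae_abs_sub_timeMollify_le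
    ((h k).locallyIntegrable_integral_mul hn hlap hlapc i)
  rw [ae_restrict_iff' measurableSet_Ioi]
  filter_upwards [hmoll] with t hgt (ht : 0 < t)
  refine cauchySeq_tendsto_of_complete (cauchySeq_of_forall_exists_dist_le fun ε hε => ?_)
  obtain ⟨a, ha, hat, hBa⟩ : ∃ a > 0, a < t ∧ B * a ≤ ε := by
    have hcont : Tendsto (fun a => B * a) (𝓝[>] 0) (𝓝 0) := by
      simpa using (tendsto_nhdsWithin_of_tendsto_nhds (tendsto_id (x := 𝓝 (0 : ℝ)))).const_mul B
    obtain ⟨a, ha, ha'⟩ :=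
      ((hcont.eventually_le_const hε).and (Ioo_mem_nhdsGT ht)).exists
    exact ⟨a, ha'.1, ha'.2, ha⟩
  let φ : ContDiffBump (0 : ℝ) := ⟨a / 2, a, half_pos ha, half_lt_self ha⟩
  refine ⟨fun k => timeMollify φ (fun s => ∫ y, u k s y i * lap κ y) t, ?_,
    fun k => (hgt k φ hat).trans hBa⟩
  obtain ⟨c, hc⟩ := exists_tendsto_integral_mul_of_hasCompactSupport hlim
    (b := fun p => φ.normed volume (t - p.1) * lap κ p.2)
    (by have := φ.continuous_normed (μ := volume); fun_prop)
    (hasCompactSupport_prod_mul (φ.hasCompactSupport_normed.comp_homeomorph (Homeomorph.subLeft t))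
      hlapc)
  refine (hc.congr fun k => ?_).cauchySeq
  exact (timeMollify_integral_mul ((h k).integrable_coord_μW hn i) hlap hlapc hat.le).symm

lemma exists_tendsto_eLpNorm_lap {η : E3 → ℝ} (hη : ContDiff ℝ (⊤ : ℕ∞) η)
    (hηc : HasCompactSupport η) :
    ∃ g, MemLp g 2 μW ∧ Tendsto (fun k => eLpNorm
      ((fun p : ℝ × E3 => ∫ y, u k p.1 y i * lap η (p.2 - y)) - g) 2 μW) atTop (𝓝 0) := by
  have hlap := (contDiff_lap hη).continuous
  have hmeas (k : ℕ) : StronglyMeasurable fun p : ℝ × E3 => ∫ y, u k p.1 y i * lap η (p.2 - y) :=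
    stronglyMeasurable_space_convolution ((h k).stronglyMeasurable_coord i) hlap.stronglyMeasurable
  refine exists_tendsto_eLpNorm_two_of_bounded (fun k => (hmeas k).aestronglyMeasurable)
    (fun k p => abs_integral_mul_comp_sub_le ((h k).memLp_coord hn p.1 i) hlap
      (hasCompactSupport_lap hηc) hn ((h k).eLpNorm_coord_le p.1 i) p.2) ?_
  refine ae_μW_iff.2 (ae_μST_of_forall_ae
    (measurableSet_exists_tendsto fun k => (hmeas k).measurable) fun x => ?_)
  simpa only [lap_comp_const_sub] using ae_exists_tendsto_integral_mul_lap hn h hw hlim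
    (κ := fun z => η (x - z)) (hη.comp (contDiff_const.sub contDiff_id))
    (hηc.comp_homeomorph (Homeomorph.subLeft x))

lemma exists_tendsto_eLpNorm_coord :
    ∃ F, MemLp F 2 μW ∧
      Tendsto (fun k => eLpNorm ((fun p => u k p.1 p.2 i) - F) 2 μW) atTop (𝓝 0) := by
  obtain ⟨ρ, C, hρ⟩ := exists_isLaplacianMollifier
  refine exists_tendsto_eLpNorm_two_of_approx (fun k => (h k).memLp_coord_μW hn i) fun δ hδ => ?_
  have hδ2 : 0 < δ / 2 := ENNReal.div_pos hδ.ne' (by simp)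
  obtain ⟨ε, hεδ, hε : 0 < ε⟩ := ((hρ.eventually_forall_eLpNorm_sub_mollify_le hn hδ2).and
    self_mem_nhdsWithin).exists
  obtain ⟨R, hRδ, hεR⟩ := ((hρ.eventually_forall_eLpNorm_mollify_le hn hδ2).and
    (eventually_ge_atTop ε)).exists
  obtain ⟨η, hη, hηc, hlap, -⟩ := hρ.exists_potential ε R hε hεR
  obtain ⟨g, hg, hlimg⟩ := exists_tendsto_eLpNorm_lap hn h hw hlim hη hηc
  have hsub (k : ℕ) :
      (fun p => u k p.1 p.2 i) - (fun p : ℝ × E3 => ∫ y, u k p.1 y i * lap η (p.2 - y))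
        = (fun p => u k p.1 p.2 i - mollify ρ ε (fun y => u k p.1 y i) p.2)
          + fun p => mollify ρ R (fun y => u k p.1 y i) p.2 := by
    funext p
    simp only [Pi.sub_apply, Pi.add_apply, hlap, ← hρ.mollify_sub_mollify hε (hε.trans_le hεR)
      ((h k).memLp_coord hn p.1 i)]
    ring
  have happrox (k : ℕ) : eLpNorm ((fun p => u k p.1 p.2 i) -
      fun p : ℝ × E3 => ∫ y, u k p.1 y i * lap η (p.2 - y)) 2 μW ≤ δ := by
    rw [hsub, ← ENNReal.add_halves δ]
    exact (eLpNorm_add_le (((h k).stronglyMeasurable_coord i).sub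
      ((h k).stronglyMeasurable_mollify hρ ε i)).aestronglyMeasurable
      ((h k).stronglyMeasurable_mollify hρ R i).aestronglyMeasurable (by norm_num)).trans
      (add_le_add (hεδ _ _ i (h k)) (hRδ _ _ i (h k)))
  refine ⟨_, g, fun k => ?_, hg, happrox, hlimg⟩
  refine .of_bound (stronglyMeasurable_space_convolution ((h k).stronglyMeasurable_coord i)
    (contDiff_lap hη).continuous.stronglyMeasurable).aestronglyMeasurable _
    (.of_forall fun p => abs_integral_mul_comp_sub_le ((h k).memLp_coord hn p.1 i)
      (contDiff_lap hη).continuous (hasCompactSupport_lap hηc) hn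
      ((h k).eLpNorm_coord_le p.1 i) p.2)

end Compactness

/-! ### Passing to the limit in the weak formulation -/

lemma enorm_sq_euclidean {ι : Type*} [Fintype ι] (v : EuclideanSpace ℝ ι) :
    ‖v‖ₑ ^ 2 = ∑ i, ‖v i‖ₑ ^ 2 := by
  rw [← ofReal_norm, ← ENNReal.ofReal_pow (norm_nonneg _), EuclideanSpace.real_norm_sq_eq,
    ENNReal.ofReal_sum_of_nonneg fun i _ => sq_nonneg _]
  simp only [enorm_sq_eq_ofReal]

lemma measurable_eLpNorm_slice {α β F : Type*} [MeasurableSpace α] [MeasurableSpace β]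
    [NormedAddCommGroup F] {μ : Measure β} [SFinite μ] {u : α → β → F}
    (hu : StronglyMeasurable (Function.uncurry u)) (s : ℝ≥0∞) :
    Measurable fun t => eLpNorm (u t) s μ := by
  have hm : Measurable fun p : α × β => ‖u p.1 p.2‖ₑ := hu.enorm
  rcases eq_or_ne s 0 with rfl | hs0
  · simp
  rcases eq_or_ne s ∞ with rfl | hs
  · refine measurable_of_Iic fun c => ?_
    have hpre : (fun t => eLpNorm (u t) ∞ μ) ⁻¹' Iic c
        = (fun t => μ (Prod.mk t ⁻¹' {p : α × β | c < ‖u p.1 p.2‖ₑ})) ⁻¹' {0} := by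
      ext t
      have hslice : Prod.mk t ⁻¹' {p : α × β | c < ‖u p.1 p.2‖ₑ} = {x | ¬ ‖u t x‖ₑ ≤ c} := by
        ext x
        simp
      simp only [mem_preimage, mem_Iic, mem_singleton_iff, eLpNorm_exponent_top, eLpNormEssSup]
      rw [hslice, ← ae_iff]
      exact ⟨fun h => (ae_le_essSup fun x => ‖u t x‖ₑ).mono fun x hx => hx.trans h,
        fun h => essSup_le_of_ae_le c h⟩
    rw [hpre]
    exact measurable_measure_prodMk_left (measurableSet_lt measurable_const hm)
      (measurableSet_singleton 0)
  · simp only [eLpNorm_eq_lintegral_rpow_enorm_toReal hs0 hs]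
    exact (Measurable.lintegral_prod_right' (f := fun p : α × β => ‖u p.1 p.2‖ₑ ^ s.toReal)
      (hm.pow_const _)).pow_const _

lemma liminf_le_of_forall_le {N : ℝ≥0∞} {a : ℕ → ℝ≥0∞} (h : ∀ k, a k ≤ N) :
    atTop.liminf a ≤ N :=
  liminf_le_of_le (by isBoundedDefault) fun _ hb => hb.exists.choose_spec.trans (h _)

lemma mixedNorm_le_of_tendsto {r s N : ℝ≥0∞} (hr : r ≠ 0) {u : ℕ → ℝ → E3 → E3}
    {U : ℝ → E3 → E3}
    (hu : ∀ k, StronglyMeasurable (Function.uncurry (u k)))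
    (hlim : ∀ᵐ p ∂μST, Tendsto (fun k => u k p.1 p.2) atTop (𝓝 (U p.1 p.2)))
    (hN : ∀ k, mixedNorm r s (Ioi 0) (u k) ≤ N) : mixedNorm r s (Ioi 0) U ≤ N := by
  have hFatou : ∀ᵐ t ∂(volume.restrict (Ioi (0 : ℝ))),
      eLpNorm (U t) s volume ≤ atTop.liminf fun k => eLpNorm (u k t) s volume := by
    filter_upwards [ae_ae_of_ae_μST hlim] with t ht
    exact Lp.eLpNorm_lim_le_liminf_eLpNorm
      (fun k => ((hu k).comp_measurable measurable_prodMk_left).aestronglyMeasurable) _ ht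
  rcases eq_or_ne r ∞ with rfl | hrt
  · rw [mixedNorm_top_le_iff]
    filter_upwards [hFatou, ae_all_iff.2 fun k => mixedNorm_top_le_iff.1 (hN k)] with t ht htN
    exact ht.trans (liminf_le_of_forall_le htN)
  · have hr' : 0 < r.toReal := ENNReal.toReal_pos hr hrt
    simp only [mixedNorm, hrt, if_false, one_div, ENNReal.rpow_inv_le_iff hr'] at hN ⊢
    calc ∫⁻ t in Ioi 0, eLpNorm (U t) s volume ^ r.toReal
        ≤ ∫⁻ t in Ioi 0, atTop.liminf fun k => eLpNorm (u k t) s volume ^ r.toReal := by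
          refine lintegral_mono_ae (hFatou.mono fun t ht => ?_)
          exact (ENNReal.rpow_le_rpow ht hr'.le).trans
            ((ENNReal.monotone_rpow_of_nonneg hr'.le).map_liminf_of_continuousAt _
              ENNReal.continuous_rpow_const.continuousAt (by isBoundedDefault)
              (by isBoundedDefault)).le
      _ ≤ atTop.liminf fun k => ∫⁻ t in Ioi 0, eLpNorm (u k t) s volume ^ r.toReal :=
          lintegral_liminf_le (u := atTop) fun k => (measurable_eLpNorm_slice (hu k) s).pow_const _
      _ ≤ N ^ r.toReal := liminf_le_of_forall_le hN

section SliceDerivatives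

variable {f : ℝ × E3 → ℝ}

lemma pd_slice (hf : Differentiable ℝ f) (j : Fin 3) (p : ℝ × E3) :
    pd (fun y => f (p.1, y)) j p.2 = fderiv ℝ f p (0, EuclideanSpace.single j 1) := by
  have h : HasFDerivAt (fun y => f (p.1, y)) _ p.2 :=
    (hf p).hasFDerivAt.comp p.2 (hasFDerivAt_prodMk_right p.1 p.2)
  rw [pd, h.fderiv]
  simp

lemma deriv_slice (hf : Differentiable ℝ f) (p : ℝ × E3) :
    deriv (fun τ => f (τ, p.2)) p.1 = fderiv ℝ f p (1, 0) := by
  have h : HasFDerivAt (fun τ => f (τ, p.2)) _ p.1 :=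
    (hf p).hasFDerivAt.comp p.1 (hasFDerivAt_prodMk_left p.1 p.2)
  rw [← fderiv_apply_one_eq_deriv, h.fderiv]
  simp

lemma contDiff_pd_slice (hf : ContDiff ℝ (⊤ : ℕ∞) f) (j : Fin 3) :
    ContDiff ℝ (⊤ : ℕ∞) fun p : ℝ × E3 => pd (fun y => f (p.1, y)) j p.2 := by
  simp only [pd_slice (hf.differentiable (by simp))]
  exact (hf.fderiv_right (m := (⊤ : ℕ∞)) (by simp)).clm_apply contDiff_const

lemma hasCompactSupport_pd_slice (hf : ContDiff ℝ (⊤ : ℕ∞) f) (hfc : HasCompactSupport f)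
    (j : Fin 3) : HasCompactSupport fun p : ℝ × E3 => pd (fun y => f (p.1, y)) j p.2 := by
  simp only [pd_slice (hf.differentiable (by simp))]
  exact hfc.fderiv_apply ℝ _

lemma continuous_deriv_slice (hf : ContDiff ℝ (⊤ : ℕ∞) f) :
    Continuous fun p : ℝ × E3 => deriv (fun τ => f (τ, p.2)) p.1 := by
  simp only [deriv_slice (hf.differentiable (by simp))]
  exact (hf.continuous_fderiv (by simp)).clm_apply continuous_const

lemma hasCompactSupport_deriv_slice (hf : ContDiff ℝ (⊤ : ℕ∞) f) (hfc : HasCompactSupport f) :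
    HasCompactSupport fun p : ℝ × E3 => deriv (fun τ => f (τ, p.2)) p.1 := by
  simp only [deriv_slice (hf.differentiable (by simp))]
  exact hfc.fderiv_apply ℝ _

end SliceDerivatives

namespace IsTest

variable {φ : ℝ × E3 → E3} (h : IsTest φ) (i j : Fin 3)
include h

lemma contDiff_coord : ContDiff ℝ (⊤ : ℕ∞) fun p => φ p i :=
  contDiff_euclidean.1 h.1 i

lemma hasCompactSupport_coord : HasCompactSupport fun p => φ p i :=
  h.2.1.comp_left (g := fun v : E3 => v i) rfl

lemma continuous_timeDeriv : Continuous fun p => timeDeriv φ p i :=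
  continuous_deriv_slice (f := fun p => φ p i) (h.contDiff_coord i)

lemma hasCompactSupport_timeDeriv : HasCompactSupport fun p => timeDeriv φ p i :=
  hasCompactSupport_deriv_slice (f := fun p => φ p i) (h.contDiff_coord i)
    (h.hasCompactSupport_coord i)

lemma contDiff_spaceGrad : ContDiff ℝ (⊤ : ℕ∞) fun p => spaceGrad φ p i j :=
  contDiff_pd_slice (f := fun p => φ p i) (h.contDiff_coord i) j

lemma hasCompactSupport_spaceGrad : HasCompactSupport fun p => spaceGrad φ p i j :=
  hasCompactSupport_pd_slice (f := fun p => φ p i) (h.contDiff_coord i)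
    (h.hasCompactSupport_coord i) j

lemma continuous_spaceLap : Continuous fun p => spaceLap φ p i :=
  continuous_finsetSum _ fun j _ =>
    (contDiff_pd_slice (f := fun p => spaceGrad φ p i j) (h.contDiff_spaceGrad i j) j).continuous

lemma hasCompactSupport_spaceLap : HasCompactSupport fun p => spaceLap φ p i := by
  have hpd (j : Fin 3) := hasCompactSupport_pd_slice (f := fun p => spaceGrad φ p i j)
    (h.contDiff_spaceGrad i j) (h.hasCompactSupport_spaceGrad i j) j
  refine HasCompactSupport.intro (isCompact_iUnion fun j => (hpd j).isCompact)
    fun p hp => Finset.sum_eq_zero fun j _ => ?_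
  exact image_eq_zero_of_notMem_tsupport
    (f := fun p : ℝ × E3 => pd (fun y => spaceGrad φ (p.1, y) i j) j p.2)
    fun hj => hp (mem_iUnion.2 ⟨j, hj⟩)

lemma continuous_timeDeriv_add_spaceLap (ν : ℝ) :
    Continuous fun p => timeDeriv φ p i + ν * spaceLap φ p i :=
  (h.continuous_timeDeriv i).add (continuous_const.mul (h.continuous_spaceLap i))

lemma hasCompactSupport_timeDeriv_add_spaceLap (ν : ℝ) :
    HasCompactSupport fun p => timeDeriv φ p i + ν * spaceLap φ p i :=
  (h.hasCompactSupport_timeDeriv i).add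
    ((h.hasCompactSupport_spaceLap i).mul_left (f := fun _ => ν))

end IsTest

lemma lintegral_μW {f : ℝ × E3 → ℝ≥0∞} (hf : Measurable f) :
    ∫⁻ p, f p ∂μW = ∫⁻ t in Ioi 0, ∫⁻ x, f (t, x) * ENNReal.ofReal (weight (t, x)) := by
  rw [μW, lintegral_withDensity_eq_lintegral_mul _ measurable_ofReal_weight hf, μST,
    lintegral_prod _ (measurable_ofReal_weight.mul hf).aemeasurable]
  simp only [Pi.mul_apply, mul_comm]

lemma ae_liminf_eq_zero {α : Type*} [MeasurableSpace α] {μ : Measure α} {a : ℕ → α → ℝ≥0∞}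
    (ha : ∀ k, Measurable (a k)) (hlim : Tendsto (fun k => ∫⁻ x, a k x ∂μ) atTop (𝓝 0)) :
    ∀ᵐ x ∂μ, atTop.liminf (fun k => a k x) = 0 := by
  have hFatou := lintegral_liminf_le (u := atTop) (μ := μ) ha
  rw [hlim.liminf_eq] at hFatou
  exact (lintegral_eq_zero_iff (Measurable.liminf ha)).1 (le_antisymm hFatou bot_le)

lemma exists_enorm_integral_mul_sq_le {X : Type*} [TopologicalSpace X] [MeasurableSpace X]
    [OpensMeasurableSpace X] {μ : Measure X} [IsFiniteMeasureOnCompacts μ] {w g : X → ℝ}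
    (hw : Continuous w) (hw0 : ∀ x, 0 < w x) (hg : Continuous g) (hgc : HasCompactSupport g) :
    ∃ C : ℝ≥0∞, C ≠ ∞ ∧ ∀ f : X → ℝ, Measurable f →
      ‖∫ x, f x * g x ∂μ‖ₑ ^ 2 ≤ C * ∫⁻ x, ‖f x‖ₑ ^ 2 * ENNReal.ofReal (w x) ∂μ := by
  obtain ⟨M, hM⟩ := (hg.div hw fun x => (hw0 x).ne').bounded_above_of_compact_support
    (hgc.comp_left (g := fun y => y) rfl |>.mul_right (f' := fun x => (w x)⁻¹))
  have hgw (x : X) : ‖g x‖ₑ ≤ ENNReal.ofReal M * ENNReal.ofReal (w x) := by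
    rw [← ENNReal.ofReal_mul ((norm_nonneg _).trans (hM x)), ← ofReal_norm]
    refine ENNReal.ofReal_le_ofReal ((div_le_iff₀ (hw0 x)).1 ?_)
    simpa [abs_of_pos (hw0 x)] using hM x
  have hL1 : ∫⁻ x, ‖g x‖ₑ ∂μ ≠ ∞ := (hg.integrable_of_hasCompactSupport hgc).2.ne
  refine ⟨(∫⁻ x, ‖g x‖ₑ ∂μ) * ENNReal.ofReal M, by finiteness, fun f hf => ?_⟩
  have hwf : Measurable fun x => ‖f x‖ₑ ^ 2 * ENNReal.ofReal (w x) :=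
    (hf.enorm.pow_const 2).mul hw.measurable.ennreal_ofReal
  calc ‖∫ x, f x * g x ∂μ‖ₑ ^ 2
      ≤ (∫⁻ x, ‖g x‖ₑ * ‖f x‖ₑ ∂μ) ^ 2 := by
        gcongr
        refine (enorm_integral_le_lintegral_enorm _).trans_eq ?_
        simp only [enorm_mul, mul_comm]
    _ ≤ (∫⁻ x, ‖g x‖ₑ ∂μ) * ∫⁻ x, ‖g x‖ₑ * ‖f x‖ₑ ^ 2 ∂μ :=
        lintegral_mul_sq_le hg.measurable.enorm hf.enorm
    _ ≤ (∫⁻ x, ‖g x‖ₑ ∂μ) *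
          ∫⁻ x, ENNReal.ofReal M * (‖f x‖ₑ ^ 2 * ENNReal.ofReal (w x)) ∂μ := by
        refine mul_le_mul_right (lintegral_mono fun x => ?_) _
        grw [hgw x, mul_assoc, mul_comm (‖f x‖ₑ ^ 2)]
    _ = _ := by rw [lintegral_const_mul _ hwf, mul_assoc]

lemma isDivFree_of_liminf_eq_zero {w : E3 → ℝ} (hw : Continuous w) (hw0 : ∀ x, 0 < w x)
    {v : ℕ → E3 → E3} {V : E3 → E3} (hv : ∀ k, Measurable (v k)) (hV : Measurable V)
    (hv2 : ∀ k, MemLp (v k) 2 volume) (hV2 : MemLp V 2 volume) (hdiv : ∀ k, IsDivFree (v k))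
    (hlim : atTop.liminf (fun k => ∫⁻ x, ‖v k x - V x‖ₑ ^ 2 * ENNReal.ofReal (w x)) = 0) :
    IsDivFree V := by
  intro φ hφ hφc
  have hp (i : Fin 3) : Continuous (pd φ i) := (contDiff_pd hφ i).continuous
  have hpc (i : Fin 3) : HasCompactSupport (pd φ i) := hasCompactSupport_pd hφc i
  have hint {y : E3 → E3} (hy : MemLp y 2 volume) (i : Fin 3) :
      Integrable fun x => y x i * pd φ i x :=
    (hy.eval_piLp i).integrable_mul (q := 2) ((hp i).memLp_of_hasCompactSupport (hpc i))
  choose C hC hbound using fun i =>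
    exists_enorm_integral_mul_sq_le (μ := (volume : Measure E3)) hw hw0 (hp i) (hpc i)
  have hest (k : ℕ) : ‖∫ x, ∑ i, V x i * pd φ i x‖ₑ ^ 2 ≤
      (3 * ∑ i, C i) * ∫⁻ x, ‖v k x - V x‖ₑ ^ 2 * ENNReal.ofReal (w x) := by
    have hdiff : ∫ x, ∑ i, V x i * pd φ i x = ∑ i, ∫ x, (V x - v k x) i * pd φ i x := by
      rw [← sub_zero (∫ x, ∑ i, V x i * pd φ i x), ← hdiv k φ hφ hφc,
        ← integral_sub (integrable_finsetSum _ fun i _ => hint hV2 i)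
          (integrable_finsetSum _ fun i _ => hint (hv2 k) i),
        ← integral_finsetSum (f := fun i x => (V x - v k x) i * pd φ i x) _
          fun i _ => hint (hV2.sub (hv2 k)) i]
      simp only [PiLp.sub_apply, sub_mul, Finset.sum_sub_distrib]
    have hcoord (i : Fin 3) : Measurable fun x => (V x - v k x) i :=
      (EuclideanSpace.proj (𝕜 := ℝ) i).continuous.measurable.comp (hV.sub (hv k))
    rw [hdiff, mul_assoc, Finset.sum_mul]
    refine (enorm_sum_sq_le _).trans ?_
    simp only [Fintype.card_fin, Nat.cast_ofNat]
    gcongr with i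
    refine (hbound i _ (hcoord i)).trans ?_
    gcongr with x
    exact (enorm_coord_le _ i).trans_eq (enorm_sub_rev _ _)
  have hfin : 3 * ∑ i, C i ≠ ∞ := ENNReal.mul_ne_top (by simp) (by simp [hC])
  have hzero : ‖∫ x, ∑ i, V x i * pd φ i x‖ₑ ^ 2 / (3 * ∑ i, C i) ≤ 0 := hlim ▸
    le_liminf_of_le (by isBoundedDefault) (.of_forall fun k => ENNReal.div_le_of_le_mul' (hest k))
  rw [nonpos_iff_eq_zero, ENNReal.div_eq_zero_iff] at hzero
  simpa [hfin] using hzero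

section Limit

variable {u : ℕ → ℝ → E3 → E3} {U : ℝ → E3 → E3}

lemma ae_isDivFree_of_tendsto (hu : ∀ k, StronglyMeasurable (Function.uncurry (u k)))
    (hU : StronglyMeasurable (Function.uncurry U)) (hdiv : ∀ k t, IsDivFree (u k t))
    (hu2 : ∀ k t, MemLp (u k t) 2 volume)
    (hU2 : ∀ᵐ t ∂(volume.restrict (Ioi (0 : ℝ))), MemLp (U t) 2 volume)
    (hlim : Tendsto (fun k => eLpNorm (Function.uncurry (u k) - Function.uncurry U) 2 μW)
      atTop (𝓝 0)) :
    ∀ᵐ t ∂(volume.restrict (Ioi (0 : ℝ))), IsDivFree (U t) := by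
  have hm (k : ℕ) : Measurable fun p : ℝ × E3 => ‖u k p.1 p.2 - U p.1 p.2‖ₑ ^ 2 :=
    ((hu k).sub hU).enorm.pow_const 2
  have hsq := ENNReal.Tendsto.pow (n := 2) hlim
  simp only [eLpNorm_two_sq, zero_pow two_ne_zero] at hsq
  filter_upwards [ae_liminf_eq_zero
    (fun k => ((hm k).mul measurable_ofReal_weight).lintegral_prod_right')
    (hsq.congr fun k => lintegral_μW (hm k)), hU2] with t ht htU
  exact isDivFree_of_liminf_eq_zero (continuous_weight.comp (by fun_prop)) (fun x => weight_pos _)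
    (fun k => ((hu k).comp_measurable measurable_prodMk_left).measurable)
    (hU.comp_measurable measurable_prodMk_left).measurable (fun k => hu2 k t) htU
    (fun k => hdiv k t) ht

lemma tendsto_eLpNorm_coord
    (hlim : Tendsto (fun k => eLpNorm (Function.uncurry (u k) - Function.uncurry U) 2 μW)
      atTop (𝓝 0)) (i : Fin 3) :
    Tendsto (fun k => eLpNorm ((fun p : ℝ × E3 => u k p.1 p.2 i) - fun p => U p.1 p.2 i) 2 μW)
      atTop (𝓝 0) :=
  tendsto_of_tendsto_of_tendsto_of_le_of_le tendsto_const_nhds hlim (fun _ => bot_le) fun k =>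
    eLpNorm_mono_enorm fun p => enorm_coord_le (u k p.1 p.2 - U p.1 p.2) i

lemma IsTest.integral_weakForm {φ : ℝ × E3 → E3} (hφ : IsTest φ) (ν : ℝ)
    (hU : MemLp (Function.uncurry U) 2 μW) :
    (∫ p, ((∑ i, U p.1 p.2 i * (timeDeriv φ p i + ν * spaceLap φ p i)) +
        ∑ i, ∑ j, U p.1 p.2 i * U p.1 p.2 j * spaceGrad φ p i j) ∂μST)
      = (∑ i, ∫ p, U p.1 p.2 i * (timeDeriv φ p i + ν * spaceLap φ p i) ∂μST) +
        ∑ i, ∑ j, ∫ p, U p.1 p.2 i * U p.1 p.2 j * spaceGrad φ p i j ∂μST := by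
  have hlin (i : Fin 3) : Integrable
      (fun p : ℝ × E3 => U p.1 p.2 i * (timeDeriv φ p i + ν * spaceLap φ p i)) μST :=
    integrable_mul_of_integrable_μW ((hU.eval_piLp i).integrable (by norm_num))
      (hφ.continuous_timeDeriv_add_spaceLap i ν) (hφ.hasCompactSupport_timeDeriv_add_spaceLap i ν)
  have hquad (i j : Fin 3) : Integrable
      (fun p : ℝ × E3 => U p.1 p.2 i * U p.1 p.2 j * spaceGrad φ p i j) μST :=
    integrable_mul_of_integrable_μW ((hU.eval_piLp i).integrable_mul (q := 2) (hU.eval_piLp j))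
      (hφ.contDiff_spaceGrad i j).continuous (hφ.hasCompactSupport_spaceGrad i j)
  rw [integral_add (integrable_finsetSum _ fun i _ => hlin i)
    (integrable_finsetSum _ fun i _ => integrable_finsetSum _ fun j _ => hquad i j),
    integral_finsetSum _ fun i _ => hlin i,
    integral_finsetSum _ fun i _ => integrable_finsetSum _ fun j _ => hquad i j]
  simp only [fun i => integral_finsetSum Finset.univ fun j _ => hquad i j]

variable (hu2 : ∀ k, MemLp (Function.uncurry (u k)) 2 μW) (hU2 : MemLp (Function.uncurry U) 2 μW)
  (hlim : Tendsto (fun k => eLpNorm (Function.uncurry (u k) - Function.uncurry U) 2 μW)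
    atTop (𝓝 0))
include hu2 hU2 hlim

lemma tendsto_integral_coord_mul {b : ℝ × E3 → ℝ} (hb : Continuous b) (hbc : HasCompactSupport b)
    (i : Fin 3) :
    Tendsto (fun k => ∫ p, u k p.1 p.2 i * b p ∂μST) atTop (𝓝 (∫ p, U p.1 p.2 i * b p ∂μST)) := by
  have hone : MemLp (fun _ : ℝ × E3 => (1 : ℝ)) 2 μW := memLp_const 1
  simpa [Function.uncurry] using tendsto_integral_mul_mul_of_hasCompactSupport
    (hU2.eval_piLp i) hone (fun k => (hu2 k).eval_piLp i) (fun _ => hone)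
    (tendsto_eLpNorm_coord hlim i) (by simp) hb hbc

lemma WeakEq.of_tendsto {ν : ℝ} {u₀ : ℕ → E3 → E3} {w : E3 → E3} (hw : ∀ k, WeakEq ν (u₀ k) (u k))
    (h0 : ∀ Φ : E3 → E3, Continuous Φ → HasCompactSupport Φ →
      Tendsto (fun k => ∫ x, ∑ i, u₀ k x i * Φ x i) atTop (𝓝 (∫ x, ∑ i, w x i * Φ x i))) :
    WeakEq ν w U := by
  intro φ hφ
  have hweak : Tendsto (fun k => (∑ i, ∫ p, u k p.1 p.2 i *
        (timeDeriv φ p i + ν * spaceLap φ p i) ∂μST) +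
        ∑ i, ∑ j, ∫ p, u k p.1 p.2 i * u k p.1 p.2 j * spaceGrad φ p i j ∂μST) atTop
      (𝓝 ((∑ i, ∫ p, U p.1 p.2 i * (timeDeriv φ p i + ν * spaceLap φ p i) ∂μST) +
        ∑ i, ∑ j, ∫ p, U p.1 p.2 i * U p.1 p.2 j * spaceGrad φ p i j ∂μST)) :=
    (tendsto_finsetSum _ fun i _ => tendsto_integral_coord_mul hu2 hU2 hlim
      (hφ.continuous_timeDeriv_add_spaceLap i ν)
      (hφ.hasCompactSupport_timeDeriv_add_spaceLap i ν) i).add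
    (tendsto_finsetSum _ fun i _ => tendsto_finsetSum _ fun j _ =>
      tendsto_integral_mul_mul_of_hasCompactSupport (hU2.eval_piLp i) (hU2.eval_piLp j)
        (fun k => (hu2 k).eval_piLp i) (fun k => (hu2 k).eval_piLp j)
        (tendsto_eLpNorm_coord hlim i) (tendsto_eLpNorm_coord hlim j)
        (hφ.contDiff_spaceGrad i j).continuous (hφ.hasCompactSupport_spaceGrad i j))
  have hdatum := h0 (fun x => φ (0, x)) (hφ.1.continuous.comp (by fun_prop)) <|
    HasCompactSupport.intro (hφ.2.1.isCompact.image continuous_snd) fun x hx =>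
      image_eq_zero_of_notMem_tsupport fun h => hx ⟨(0, x), h, rfl⟩
  rw [hφ.integral_weakForm ν hU2]
  refine tendsto_nhds_unique hweak (hdatum.neg.congr fun k => ?_)
  rw [← hw k φ hφ, hφ.integral_weakForm ν (hu2 k)]

lemma IsDistGrad.of_tendsto {G : ℕ → ℝ → E3 → Fin 3 → Fin 3 → ℝ} {Γ : ℝ → E3 → Fin 3 → Fin 3 → ℝ}
    (h : ∀ k, IsDistGrad (u k) (G k))
    (hG : ∀ i j (g : ℝ × E3 → ℝ), MemLp g 2 μST →
      Tendsto (fun k => ∫ p, G k p.1 p.2 i j * g p ∂μST) atTop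
        (𝓝 (∫ p, Γ p.1 p.2 i j * g p ∂μST))) : IsDistGrad U Γ := by
  intro ψ hψ hψc hψs i j
  have hlhs := tendsto_integral_coord_mul hu2 hU2 hlim (contDiff_pd_slice hψ j).continuous
    (hasCompactSupport_pd_slice hψ hψc j) i
  have : IsFiniteMeasureOnCompacts μST := by unfold μST; infer_instance
  have hrhs := (hG i j ψ (hψ.continuous.memLp_of_hasCompactSupport hψc)).neg
  exact tendsto_nhds_unique hlhs (hrhs.congr fun k => (h k ψ hψ hψc hψs i j).symm)

end Limit

/-! ### Compactness of bounded sets of solutions -/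

section Subsequence

variable {n : ℝ≥0∞} {u : ℕ → ℝ → E3 → E3} {G : ℕ → ℝ → E3 → Fin 3 → Fin 3 → ℝ}

lemma stronglyMeasurable_toLp {ι α : Type*} [Finite ι] [MeasurableSpace α] {f : ι → α → ℝ}
    (hf : ∀ i, Measurable (f i)) :
    StronglyMeasurable fun p => (WithLp.toLp 2 fun i => f i p : EuclideanSpace ℝ ι) :=
  ((PiLp.continuous_toLp 2 fun _ : ι => ℝ).measurable.comp
    (measurable_pi_lambda _ hf)).stronglyMeasurable

lemma eLpNorm_two_sq_euclidean {ι α : Type*} [Fintype ι] [MeasurableSpace α] {μ : Measure α}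
    {f : α → EuclideanSpace ℝ ι} (hf : ∀ i, AEMeasurable (fun x => f x i) μ) :
    eLpNorm f 2 μ ^ 2 = ∑ i, eLpNorm (fun x => f x i) 2 μ ^ 2 := by
  simp only [eLpNorm_two_sq, enorm_sq_euclidean]
  exact lintegral_finsetSum' _ fun i _ => (hf i).enorm.pow_const 2

lemma IsRegularPair.eLpNorm_uncurry_le {v : ℝ → E3 → E3} {H : ℝ → E3 → Fin 3 → Fin 3 → ℝ}
    (h : IsRegularPair n v H) : eLpNorm (Function.uncurry v) 2 μW ≤ 3 * n := by
  refine (ENNReal.pow_le_pow_left_iff two_ne_zero).1 ?_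
  rw [eLpNorm_two_sq_euclidean (f := Function.uncurry v)
    fun i => (h.stronglyMeasurable_coord i).aemeasurable]
  calc ∑ i, eLpNorm (fun p : ℝ × E3 => v p.1 p.2 i) 2 μW ^ 2
      ≤ ∑ _i : Fin 3, n ^ 2 := by gcongr with i; exact h.eLpNorm_coord_μW_le i
    _ = 3 * n ^ 2 := by simp
    _ ≤ 3 ^ 2 * n ^ 2 := by gcongr; norm_num
    _ = (3 * n) ^ 2 := (mul_pow _ _ _).symm

lemma exists_subseq_tendsto_eLpNorm (hn : n ≠ ∞) {ν : ℝ} {u₀ : ℕ → E3 → E3}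
    (h : ∀ k, IsRegularPair n (u k) (G k)) (hw : ∀ k, WeakEq ν (u₀ k) (u k)) :
    ∃ φ : ℕ → ℕ, StrictMono φ ∧ ∃ U : ℝ → E3 → E3, StronglyMeasurable (Function.uncurry U) ∧
      MemLp (Function.uncurry U) 2 μW ∧ Tendsto
        (fun k => eLpNorm (Function.uncurry (u (φ k)) - Function.uncurry U) 2 μW) atTop (𝓝 0) := by
  obtain ⟨φ, hφ, F₀, -, -, hF₀⟩ := exists_subseq_tendsto_integral_mul (μ := μW)
    (f := fun k => Function.uncurry (u k)) (ENNReal.mul_ne_top (by simp) hn)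
    (fun k => (h k).stronglyMeasurable.aestronglyMeasurable) fun k => (h k).eLpNorm_uncurry_le
  choose F hF hFlim using fun i => exists_tendsto_eLpNorm_coord (i := i) hn (fun k => h (φ k))
    (fun k => hw (φ k)) fun g hg => ⟨_, hF₀ i g hg⟩
  let U : ℝ → E3 → E3 := fun t x => WithLp.toLp 2 fun i => (hF i).1.mk (F i) (t, x)
  have hU : StronglyMeasurable (Function.uncurry U) :=
    stronglyMeasurable_toLp fun i => (hF i).1.stronglyMeasurable_mk.measurable
  have hUF (i : Fin 3) : F i =ᵐ[μW] fun p => U p.1 p.2 i := (hF i).1.ae_eq_mk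
  refine ⟨φ, hφ, U, hU, .of_eval_piLp fun i => (memLp_congr_ae (hUF i)).1 (hF i),
    tendsto_eLpNorm_two_zero ?_⟩
  have hsum : Tendsto (fun k => ∑ i, eLpNorm ((fun p => u (φ k) p.1 p.2 i) - F i) 2 μW ^ 2) atTop
      (𝓝 (∑ _i : Fin 3, 0 ^ 2)) :=
    tendsto_finsetSum _ fun i _ => ENNReal.Tendsto.pow (hFlim i)
  rw [zero_pow two_ne_zero, Finset.sum_const_zero] at hsum
  refine hsum.congr fun k => ?_
  rw [← eLpNorm_two_sq, eLpNorm_two_sq_euclidean fun i =>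
    ((EuclideanSpace.proj (𝕜 := ℝ) i).continuous.comp_stronglyMeasurable
      ((h (φ k)).stronglyMeasurable.sub hU)).aemeasurable]
  exact Finset.sum_congr rfl fun i _ =>
    congrArg (· ^ 2) (eLpNorm_congr_ae ((ae_eq_refl _).sub (hUF i)))

lemma exists_subseq_tendsto_integral_grad_mul (hn : n ≠ ∞)
    (h : ∀ k, IsRegularPair n (u k) (G k)) :
    ∃ φ : ℕ → ℕ, StrictMono φ ∧ ∃ Γ : ℝ → E3 → Fin 3 → Fin 3 → ℝ,
      StronglyMeasurable (Function.uncurry Γ) ∧ ∫⁻ t in Ioi (0 : ℝ), gradSq Γ t ≤ n ∧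
      ∀ i j (g : ℝ × E3 → ℝ), MemLp g 2 μST →
        Tendsto (fun k => ∫ p, G (φ k) p.1 p.2 i j * g p ∂μST) atTop
          (𝓝 (∫ p, Γ p.1 p.2 i j * g p ∂μST)) := by
  have hroot : (n ^ (1 / 2 : ℝ)) ^ 2 = n := by
    rw [← ENNReal.rpow_natCast, ← ENNReal.rpow_mul]
    norm_num
  obtain ⟨φ, hφ, Γ, hΓ, hΓn, hΓlim⟩ := exists_subseq_tendsto_integral_mul (μ := μST)
    (ι := Fin 3 × Fin 3) (C := n ^ (1 / 2 : ℝ))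
    (f := fun k p => WithLp.toLp 2 fun q : Fin 3 × Fin 3 => G k p.1 p.2 q.1 q.2) (by finiteness)
    (fun k => (stronglyMeasurable_toLp fun q : Fin 3 × Fin 3 =>
      ((h k).stronglyMeasurable_grad_coord q.1 q.2).measurable).aestronglyMeasurable) fun k => by
    rw [eLpNorm_two_le_iff, hroot]
    simpa only [enorm_sq_euclidean, enorm_sq_eq_ofReal, Fintype.sum_prod_type]
      using (h k).lintegral_grad_le
  have hΓm : StronglyMeasurable fun p i j => Γ p (i, j) := Measurable.stronglyMeasurable <|
    measurable_pi_lambda _ fun i => measurable_pi_lambda _ fun j =>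
      ((EuclideanSpace.proj (𝕜 := ℝ) (i, j)).continuous.comp_stronglyMeasurable hΓ).measurable
  refine ⟨φ, hφ, fun t x i j => Γ (t, x) (i, j), hΓm, ?_, fun i j => hΓlim (i, j)⟩
  rw [lintegral_gradSq (G := fun t x i j => Γ (t, x) (i, j)) hΓm.aestronglyMeasurable]
  rw [eLpNorm_two_le_iff, hroot] at hΓn
  simpa only [enorm_sq_euclidean, enorm_sq_eq_ofReal, Fintype.sum_prod_type] using hΓn

end Subsequence

/-- The datum `u₀` admits a weak solution, with viscosity `ν`, whose energy norms and
`L^r(0,∞;L^s)` norm are bounded by `n`. For each `n` the data with this property form a closed set,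
to which the Baire category theorem applies. -/
def HasBoundedSolution (r s : ℝ≥0∞) (ν : ℝ) (n : ℝ≥0∞) (u₀ : E3 → E3) : Prop :=
  ∃ u G, IsWeakNS ν u₀ u G ∧ mixedNorm ∞ 2 (Ioi 0) u ≤ n ∧
    ∫⁻ t in Ioi (0 : ℝ), gradSq G t ≤ n ∧ mixedNorm r s (Ioi 0) u ≤ n

lemma HasBoundedSolution.exists_isRegularPair {r s n : ℝ≥0∞} {ν : ℝ} {u₀ : E3 → E3}
    (h : HasBoundedSolution r s ν n u₀) :
    ∃ v H, IsRegularPair n v H ∧ WeakEq ν u₀ v ∧ mixedNorm r s (Ioi 0) v ≤ n := by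
  obtain ⟨u, G, hu, hn2, hG, hrs⟩ := h
  obtain ⟨v, H, hreg, hw, hnorm⟩ := hu.exists_isRegularPair hn2 hG r s
  exact ⟨v, H, hreg, hw, hnorm.trans_le hrs⟩

lemma exists_subseq_ae_tendsto {f : ℕ → ℝ → E3 → E3} {U : ℝ → E3 → E3}
    (hf : ∀ k, StronglyMeasurable (Function.uncurry (f k)))
    (hU : StronglyMeasurable (Function.uncurry U))
    (hlim : Tendsto (fun k => eLpNorm (Function.uncurry (f k) - Function.uncurry U) 2 μW)
      atTop (𝓝 0)) :
    ∃ φ : ℕ → ℕ, StrictMono φ ∧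
      ∀ᵐ p ∂μST, Tendsto (fun k => f (φ k) p.1 p.2) atTop (𝓝 (U p.1 p.2)) := by
  obtain ⟨φ, hφ, hae⟩ := (tendstoInMeasure_of_tendsto_eLpNorm two_ne_zero
    (fun k => (hf k).aestronglyMeasurable) hU.aestronglyMeasurable hlim).exists_seq_tendsto_ae
  exact ⟨φ, hφ, ae_μW_iff.1 hae⟩

theorem HasBoundedSolution.of_tendsto {r s n : ℝ≥0∞} {ν : ℝ} (hr : r ≠ 0) (hn : n ≠ ∞)
    {u₀ : ℕ → E3 → E3} {w : E3 → E3} (h : ∀ k, HasBoundedSolution r s ν n (u₀ k))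
    (h0 : ∀ Φ : E3 → E3, Continuous Φ → HasCompactSupport Φ →
      Tendsto (fun k => ∫ x, ∑ i, u₀ k x i * Φ x i) atTop (𝓝 (∫ x, ∑ i, w x i * Φ x i))) :
    HasBoundedSolution r s ν n w := by
  choose u G hreg hw hrs using fun k => (h k).exists_isRegularPair
  obtain ⟨φ₁, hφ₁, U, hU, hU2, hlim⟩ := exists_subseq_tendsto_eLpNorm hn hreg hw
  obtain ⟨φ₂, hφ₂, Γ, hΓ, hΓn, hΓlim⟩ :=
    exists_subseq_tendsto_integral_grad_mul hn fun k => hreg (φ₁ k)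
  obtain ⟨φ₃, hφ₃, hae⟩ := exists_subseq_ae_tendsto
    (fun k => (hreg (φ₁ (φ₂ k))).stronglyMeasurable) hU (hlim.comp hφ₂.tendsto_atTop)
  let φ := φ₁ ∘ φ₂ ∘ φ₃
  have hφ : StrictMono φ := hφ₁.comp (hφ₂.comp hφ₃)
  replace hlim := hlim.comp (hφ₂.comp hφ₃).tendsto_atTop
  have hm (k : ℕ) := (hreg (φ k)).stronglyMeasurable
  have hu2 (k : ℕ) : MemLp (Function.uncurry (u (φ k))) 2 μW :=
    .of_eval_piLp ((hreg (φ k)).memLp_coord_μW hn)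
  have hUn : mixedNorm ∞ 2 (Ioi 0) U ≤ n := mixedNorm_le_of_tendsto (by simp) hm hae fun k =>
    mixedNorm_top_le_iff.2 (.of_forall (hreg (φ k)).eLpNorm_le)
  have hUslice : ∀ᵐ t ∂(volume.restrict (Ioi (0 : ℝ))), MemLp (U t) 2 volume :=
    (mixedNorm_top_le_iff.1 hUn).mono fun t ht =>
      ⟨(hU.comp_measurable measurable_prodMk_left).aestronglyMeasurable, ht.trans_lt hn.lt_top⟩
  have hUdiv := ae_isDivFree_of_tendsto hm hU (fun k => (hreg (φ k)).isDivFree)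
    (fun k t => .of_eval_piLp ((hreg (φ k)).memLp_coord hn t)) hUslice hlim
  exact ⟨U, Γ, ⟨hU.aestronglyMeasurable, hUn.trans_lt hn.lt_top, hUdiv, hΓ.aestronglyMeasurable,
    hΓn.trans_lt hn.lt_top,
    IsDistGrad.of_tendsto hu2 hU2 hlim (fun k => (hreg (φ k)).isDistGrad) fun i j g hg =>
      (hΓlim i j g hg).comp hφ₃.tendsto_atTop,
    WeakEq.of_tendsto hu2 hU2 hlim (fun k => hw (φ k)) fun Φ hΦ hΦc =>
      (h0 Φ hΦ hΦc).comp hφ.tendsto_atTop⟩,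
    hUn, hΓn, mixedNorm_le_of_tendsto hr hm hae fun k => hrs (φ k)⟩

/-! ### The scaling symmetry -/

/-- The field `f` rescaled affinely in time and space. The choice `γ = a * β` maps Navier–Stokes
solutions of viscosity `ν` to solutions of viscosity `ν * a / β`. -/
def rescale {F : Type*} [SMul ℝ F] (a β γ : ℝ) (z : E3) (f : ℝ → E3 → F) : ℝ → E3 → F :=
  fun t x => a • f (γ * t) (β • x + z)

lemma pd_comp_smul_add (β : ℝ) (z : E3) (f : E3 → ℝ) (j : Fin 3) (x : E3) :
    pd (fun y => f (β • y + z)) j x = β * pd f j (β • x + z) := by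
  rw [pd_comp_smul β (fun y => f (y + z)), pd_comp_add_right]

lemma timeDeriv_comp_smul_add (φ : ℝ × E3 → E3) (β γ : ℝ) (z : E3) (p : ℝ × E3) (i : Fin 3) :
    timeDeriv (fun p => φ (γ * p.1, β • p.2 + z)) p i
      = γ * timeDeriv φ (γ * p.1, β • p.2 + z) i :=
  deriv_comp_mul_left γ (fun τ => φ (τ, β • p.2 + z) i) p.1

lemma spaceGrad_comp_smul_add (φ : ℝ × E3 → E3) (β γ : ℝ) (z : E3) (p : ℝ × E3) (i j : Fin 3) :
    spaceGrad (fun p => φ (γ * p.1, β • p.2 + z)) p i j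
      = β * spaceGrad φ (γ * p.1, β • p.2 + z) i j :=
  pd_comp_smul_add β z (fun y => φ (γ * p.1, y) i) j p.2

lemma spaceLap_comp_smul_add (φ : ℝ × E3 → E3) (β γ : ℝ) (z : E3) (p : ℝ × E3) (i : Fin 3) :
    spaceLap (fun p => φ (γ * p.1, β • p.2 + z)) p i
      = β ^ 2 * spaceLap φ (γ * p.1, β • p.2 + z) i := by
  have h (j : Fin 3) := funext (pd_comp_smul_add β z (fun y => φ (γ * p.1, y) i) j)
  simp only [spaceLap, h, pd_const_mul, Finset.mul_sum]
  refine Finset.sum_congr rfl fun j _ => ?_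
  rw [pd_comp_smul_add β z (pd (fun y => φ (γ * p.1, y) i) j)]
  ring

section Rescale

variable {a β γ : ℝ} {z : E3} {r s : ℝ≥0∞}

lemma hasCompactSupport_comp_smul_add {F G : Type*} [Zero F] [NormedAddCommGroup G]
    [NormedSpace ℝ G] {f : G → F} (hf : HasCompactSupport f) (hβ : β ≠ 0) (z : G) :
    HasCompactSupport fun x => f (β • x + z) :=
  hf.comp_homeomorph ((Homeomorph.smulOfNeZero β hβ).trans (Homeomorph.addRight z))

lemma hasCompactSupport_comp_prod_smul_add {F : Type*} [Zero F] {f : ℝ × E3 → F}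
    (hf : HasCompactSupport f) (hβ : β ≠ 0) (hγ : γ ≠ 0) (z : E3) :
    HasCompactSupport fun p : ℝ × E3 => f (γ * p.1, β • p.2 + z) :=
  hf.comp_homeomorph ((Homeomorph.mulLeft₀ γ hγ).prodCongr
    ((Homeomorph.smulOfNeZero β hβ).trans (Homeomorph.addRight z)))

lemma contDiff_comp_prod_smul_add {F : Type*} [NormedAddCommGroup F] [NormedSpace ℝ F]
    {f : ℝ × E3 → F} (hf : ContDiff ℝ (⊤ : ℕ∞) f) (β γ : ℝ) (z : E3) :
    ContDiff ℝ (⊤ : ℕ∞) fun p : ℝ × E3 => f (γ * p.1, β • p.2 + z) :=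
  hf.comp ((contDiff_const.mul contDiff_fst).prodMk
    ((contDiff_snd.const_smul _).add contDiff_const))

lemma smul_inv_smul_add_cancel {G : Type*} [AddCommGroup G] [Module ℝ G] (hβ : β ≠ 0) (z x : G) :
    β⁻¹ • (β • x + z) + -(β⁻¹ • z) = x := by
  rw [smul_add, inv_smul_smul₀ hβ, add_neg_cancel_right]

lemma IsTest.comp_smul_add {φ : ℝ × E3 → E3} (h : IsTest φ) (hβ : β ≠ 0) (hγ : γ ≠ 0) (z : E3) :
    IsTest fun p : ℝ × E3 => φ (γ * p.1, β • p.2 + z) := by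
  refine ⟨contDiff_comp_prod_smul_add h.1 β γ z,
    hasCompactSupport_comp_prod_smul_add h.2.1 hβ hγ z, fun p => ?_⟩
  have hdiv : ∑ i, spaceGrad φ (γ * p.1, β • p.2 + z) i i = 0 := h.2.2 _
  change ∑ i, spaceGrad (fun p : ℝ × E3 => φ (γ * p.1, β • p.2 + z)) p i i = 0
  simp only [spaceGrad_comp_smul_add, ← Finset.mul_sum, hdiv, mul_zero]

lemma IsTest.exists_eq_comp_smul_add {φ : ℝ × E3 → E3} (h : IsTest φ) (hβ : β ≠ 0) (hγ : γ ≠ 0)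
    (z : E3) : ∃ φ', IsTest φ' ∧ φ = fun p => φ' (γ * p.1, β • p.2 + z) :=
  ⟨_, h.comp_smul_add (inv_ne_zero hβ) (inv_ne_zero hγ) (-(β⁻¹ • z)), funext fun p => by
    rw [inv_mul_cancel_left₀ hγ, smul_inv_smul_add_cancel hβ]⟩

section Spatial

variable (hβ : 0 < β)
include hβ

lemma integral_comp_smul_add (z : E3) (f : E3 → ℝ) :
    ∫ x, f (β • x + z) = β⁻¹ ^ 3 * ∫ x, f x := by
  have hmap := (measurableEmbedding_smul_add hβ z).integral_map (μ := volume) f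
  rw [map_volume_smul_add hβ, integral_smul_measure, ENNReal.toReal_ofReal (by positivity),
    smul_eq_mul] at hmap
  exact hmap.symm

lemma quasiMeasurePreserving_smul_add (z : E3) :
    Measure.QuasiMeasurePreserving (fun x : E3 => β • x + z) volume volume :=
  ⟨(measurableEmbedding_smul_add hβ z).measurable, by
    rw [map_volume_smul_add hβ]; exact Measure.smul_absolutelyContinuous⟩

lemma eLpNorm_smul_comp_smul_add (ha : 0 ≤ a) (v : E3 → E3) (z : E3) (s : ℝ≥0∞) :
    eLpNorm (fun x => a • v (β • x + z)) s volume
      = ENNReal.ofReal (a * (β⁻¹ ^ 3) ^ (1 / s).toReal) * eLpNorm v s volume := by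
  rw [ENNReal.ofReal_mul ha, ← ENNReal.ofReal_rpow_of_pos (by positivity), mul_assoc,
    ← eLpNorm_comp_smul_add hβ v z, ← Real.enorm_eq_ofReal ha]
  exact eLpNorm_const_smul a (fun x => v (β • x + z)) s volume

lemma memLp_smul_comp_smul_add {v : E3 → E3} (hv : MemLp v s volume) (ha : 0 ≤ a) (z : E3) :
    MemLp (fun x => a • v (β • x + z)) s volume := by
  refine ⟨(hv.1.comp_quasiMeasurePreserving
    (quasiMeasurePreserving_smul_add hβ z)).const_smul a, ?_⟩
  rw [eLpNorm_smul_comp_smul_add hβ ha]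
  exact ENNReal.mul_lt_top ENNReal.ofReal_lt_top hv.2

lemma IsDivFree.smul_comp_smul_add {v : E3 → E3} (h : IsDivFree v) (a : ℝ) (z : E3) :
    IsDivFree fun x => a • v (β • x + z) := by
  intro φ hφ hφc
  let ψ : E3 → ℝ := fun y => φ (β⁻¹ • y + -(β⁻¹ • z))
  have hψ : ContDiff ℝ (⊤ : ℕ∞) ψ := hφ.comp ((contDiff_id.const_smul _).add contDiff_const)
  have hψφ : φ = fun x => ψ (β • x + z) :=
    funext fun x => (congrArg φ (smul_inv_smul_add_cancel hβ.ne' z x)).symm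
  calc ∫ x, ∑ i, (a • v (β • x + z)) i * pd φ i x
      = ∫ x, (fun y => a * β * ∑ i, v y i * pd ψ i y) (β • x + z) := by
        congr 1 with x
        simp only [hψφ, pd_comp_smul_add, PiLp.smul_apply, smul_eq_mul, Finset.mul_sum]
        exact Finset.sum_congr rfl fun i _ => by ring
    _ = β⁻¹ ^ 3 * ∫ y, a * β * ∑ i, v y i * pd ψ i y :=
        integral_comp_smul_add hβ z fun y => a * β * ∑ i, v y i * pd ψ i y
    _ = 0 := by
        rw [integral_const_mul, h ψ hψ
          (hasCompactSupport_comp_smul_add hφc (inv_ne_zero hβ.ne') _), mul_zero, mul_zero]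

end Spatial

section SpaceTime

variable (hγ : 0 < γ)
include hγ

lemma quasiMeasurePreserving_mul_Ioi :
    Measure.QuasiMeasurePreserving (fun t : ℝ => γ * t) (volume.restrict (Ioi 0))
      (volume.restrict (Ioi 0)) :=
  ⟨by fun_prop, by rw [map_restrict_Ioi_mul hγ]; exact Measure.smul_absolutelyContinuous⟩

lemma lintegral_Ioi_comp_mul (f : ℝ → ℝ≥0∞) :
    ∫⁻ t in Ioi (0 : ℝ), f (γ * t) = ENNReal.ofReal γ⁻¹ * ∫⁻ t in Ioi (0 : ℝ), f t := by
  have hmap := (Homeomorph.mulLeft₀ γ hγ.ne').measurableEmbedding.lintegral_map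
    (μ := volume.restrict (Ioi 0)) f
  simp only [Homeomorph.coe_mulLeft₀, map_restrict_Ioi_mul hγ, lintegral_smul_measure,
    smul_eq_mul] at hmap
  exact hmap.symm

variable (hβ : 0 < β)
include hβ

lemma integral_comp_prod_smul_add (z : E3) (f : ℝ × E3 → ℝ) :
    ∫ p, f (γ * p.1, β • p.2 + z) ∂μST = γ⁻¹ * β⁻¹ ^ 3 * ∫ p, f p ∂μST := by
  have hmap := (measurableEmbedding_prod_smul_add hβ hγ z).integral_map (μ := μST) f
  rw [map_μST hβ hγ, integral_smul_measure, ENNReal.toReal_ofReal (by positivity),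
    smul_eq_mul] at hmap
  exact hmap.symm

lemma quasiMeasurePreserving_prod_smul_add (z : E3) :
    Measure.QuasiMeasurePreserving (fun p : ℝ × E3 => (γ * p.1, β • p.2 + z)) μST μST :=
  ⟨(measurableEmbedding_prod_smul_add hβ hγ z).measurable, by
    rw [map_μST hβ hγ]; exact Measure.smul_absolutelyContinuous⟩

lemma aestronglyMeasurable_rescale {F : Type*} [NormedAddCommGroup F] [NormedSpace ℝ F]
    {f : ℝ → E3 → F} (hf : AEStronglyMeasurable (Function.uncurry f) μST) (a : ℝ) (z : E3) :
    AEStronglyMeasurable (Function.uncurry (rescale a β γ z f)) μST :=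
  (hf.comp_quasiMeasurePreserving (quasiMeasurePreserving_prod_smul_add hγ hβ z)).const_smul a

lemma IsDistGrad.rescale {v : ℝ → E3 → E3} {G : ℝ → E3 → Fin 3 → Fin 3 → ℝ}
    (h : IsDistGrad v G) (a : ℝ) (z : E3) :
    IsDistGrad (rescale a β γ z v) (rescale (a * β) β γ z G) := by
  intro ψ hψ hψc hψs i j
  let χ : ℝ × E3 → ℝ := fun p => ψ (γ⁻¹ * p.1, β⁻¹ • p.2 + -(β⁻¹ • z))
  have hψχ : ψ = fun p : ℝ × E3 => χ (γ * p.1, β • p.2 + z) := funext fun p => by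
    simp only [χ, inv_mul_cancel_left₀ hγ.ne', smul_inv_smul_add_cancel hβ.ne']
  have hχs : tsupport χ ⊆ {p | 0 < p.1} := fun p hp =>
    have hpos : 0 < γ⁻¹ * p.1 := hψs (tsupport_comp_subset_preimage ψ
      (f := fun p : ℝ × E3 => (γ⁻¹ * p.1, β⁻¹ • p.2 + -(β⁻¹ • z))) (by fun_prop) hp)
    (pos_iff_pos_of_mul_pos hpos).1 (inv_pos.2 hγ)
  have hweak := h χ (contDiff_comp_prod_smul_add hψ _ _ _)
    (hasCompactSupport_comp_prod_smul_add hψc (inv_ne_zero hβ.ne') (inv_ne_zero hγ.ne') _) hχs i j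
  calc ∫ p, (a • v (γ * p.1) (β • p.2 + z)) i * pd (fun y => ψ (p.1, y)) j p.2 ∂μST
      = ∫ p, (fun q : ℝ × E3 => a * β * (v q.1 q.2 i * pd (fun y => χ (q.1, y)) j q.2))
          (γ * p.1, β • p.2 + z) ∂μST := by
        congr 1 with p
        rw [hψχ, pd_comp_smul_add β z (fun y => χ (γ * p.1, y)), PiLp.smul_apply, smul_eq_mul]
        ring
    _ = -∫ p, (fun q : ℝ × E3 => a * β * (G q.1 q.2 i j * χ q)) (γ * p.1, β • p.2 + z) ∂μST := by
        rw [integral_comp_prod_smul_add hγ hβ z fun q => a * β * (G q.1 q.2 i j * χ q),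
          integral_comp_prod_smul_add hγ hβ z
            fun q => a * β * (v q.1 q.2 i * pd (fun y => χ (q.1, y)) j q.2),
          integral_const_mul, integral_const_mul, hweak, mul_neg, mul_neg]
    _ = -∫ p, ((a * β) • G (γ * p.1) (β • p.2 + z)) i j * ψ p ∂μST := by
        simp only [hψχ, Pi.smul_apply, smul_eq_mul, mul_assoc]

lemma lintegral_gradSq_rescale {G : ℝ → E3 → Fin 3 → Fin 3 → ℝ}
    (hG : AEStronglyMeasurable (Function.uncurry G) μST) (c : ℝ) (z : E3) :
    ∫⁻ t in Ioi (0 : ℝ), gradSq (rescale c β γ z G) t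
      = ENNReal.ofReal (c ^ 2 * (γ⁻¹ * β⁻¹ ^ 3)) * ∫⁻ t in Ioi (0 : ℝ), gradSq G t := by
  have hmap := (measurableEmbedding_prod_smul_add hβ hγ z).lintegral_map (μ := μST)
    fun p => ∑ i, ∑ j, ENNReal.ofReal (G p.1 p.2 i j ^ 2)
  rw [map_μST hβ hγ, lintegral_smul_measure, smul_eq_mul] at hmap
  rw [lintegral_gradSq (aestronglyMeasurable_rescale hγ hβ hG c z), lintegral_gradSq hG,
    ENNReal.ofReal_mul (sq_nonneg c), mul_assoc, hmap,
    ← lintegral_const_mul' _ _ ENNReal.ofReal_ne_top]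
  simp only [rescale, Pi.smul_apply, smul_eq_mul, mul_pow, ENNReal.ofReal_mul (sq_nonneg c),
    Finset.mul_sum]

lemma mixedNorm_rescale_le (hr : r ≠ 0) (s : ℝ≥0∞) (v : ℝ → E3 → E3) (ha : 0 ≤ a) (z : E3) :
    mixedNorm r s (Ioi 0) (rescale a β γ z v)
      ≤ ENNReal.ofReal (a * (β⁻¹ ^ 3) ^ (1 / s).toReal * γ⁻¹ ^ (1 / r).toReal) *
        mixedNorm r s (Ioi 0) v := by
  have hslice (t : ℝ) : eLpNorm (rescale a β γ z v t) s volume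
      = ENNReal.ofReal (a * (β⁻¹ ^ 3) ^ (1 / s).toReal) * eLpNorm (v (γ * t)) s volume :=
    eLpNorm_smul_comp_smul_add hβ ha (v (γ * t)) z s
  rcases eq_or_ne r ∞ with rfl | hrt
  · rw [mixedNorm_top_le_iff]
    have hv := mixedNorm_top_le_iff.1 (le_refl (mixedNorm ∞ s (Ioi 0) v))
    filter_upwards [(quasiMeasurePreserving_mul_Ioi hγ).ae hv] with t ht
    simp only [hslice, ENNReal.div_top, ENNReal.toReal_zero, Real.rpow_zero, mul_one]
    gcongr
  · have hr' : 0 < r.toReal := ENNReal.toReal_pos hr hrt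
    simp only [mixedNorm, if_neg hrt, hslice, ENNReal.mul_rpow_of_nonneg _ _ hr'.le]
    rw [lintegral_const_mul' _ _ (by finiteness),
      lintegral_Ioi_comp_mul hγ fun t => eLpNorm (v t) s volume ^ r.toReal,
      ENNReal.mul_rpow_of_nonneg _ _ (by positivity),
      ENNReal.mul_rpow_of_nonneg _ _ (by positivity), ← ENNReal.rpow_mul,
      mul_one_div_cancel hr'.ne', ENNReal.rpow_one, ← mul_assoc,
      ENNReal.ofReal_rpow_of_pos (inv_pos.2 hγ), ← ENNReal.ofReal_mul (by positivity),
      ENNReal.toReal_div 1 r, ENNReal.toReal_one]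

end SpaceTime

variable (ha : 0 < a) (hβ : 0 < β)
include ha hβ

lemma WeakEq.rescale {ν : ℝ} {v₀ : E3 → E3} {v : ℝ → E3 → E3} (h : WeakEq ν v₀ v) (z : E3) :
    WeakEq (ν * a / β) (fun x => a • v₀ (β • x + z)) (rescale a β (a * β) z v) := by
  have hγ : 0 < a * β := mul_pos ha hβ
  intro φ hφ
  obtain ⟨χ, hχ, rfl⟩ := hφ.exists_eq_comp_smul_add hβ.ne' hγ.ne' z
  let f : ℝ × E3 → ℝ := fun p => (∑ i, v p.1 p.2 i * (timeDeriv χ p i + ν * spaceLap χ p i)) +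
    ∑ i, ∑ j, v p.1 p.2 i * v p.1 p.2 j * spaceGrad χ p i j
  have hdatum := integral_comp_smul_add hβ z fun x => a * ∑ i, v₀ x i * χ (0, x) i
  simp only [timeDeriv_comp_smul_add, spaceLap_comp_smul_add, spaceGrad_comp_smul_add]
  calc _ = ∫ p, (fun q => a * (a * β) * f q) (a * β * p.1, β • p.2 + z) ∂μST := by
        congr 1 with p
        simp only [f, _root_.rescale, PiLp.smul_apply, smul_eq_mul, mul_add, Finset.mul_sum]
        congr 1 <;> refine Finset.sum_congr rfl fun i _ => ?_
        · field_simp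
        · exact Finset.sum_congr rfl fun j _ => by ring
    _ = -(β⁻¹ ^ 3 * (a * ∫ x, ∑ i, v₀ x i * χ (0, x) i)) := by
        rw [integral_comp_prod_smul_add hγ hβ z fun q => a * (a * β) * f q, integral_const_mul,
          h χ hχ]
        field_simp
    _ = _ := by
        rw [← integral_const_mul, ← hdatum]
        simp only [PiLp.smul_apply, smul_eq_mul, Finset.mul_sum, mul_assoc, mul_zero]

lemma IsWeakNS.rescale {ν : ℝ} {v₀ : E3 → E3} {v : ℝ → E3 → E3}
    {G : ℝ → E3 → Fin 3 → Fin 3 → ℝ} (h : IsWeakNS ν v₀ v G) (z : E3) :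
    IsWeakNS (ν * a / β) (fun x => a • v₀ (β • x + z)) (rescale a β (a * β) z v)
      (rescale (a * β) β (a * β) z G) := by
  obtain ⟨hv, hvn, hdiv, hG, hGn, hgrad, heq⟩ := h
  have hγ : 0 < a * β := mul_pos ha hβ
  refine ⟨aestronglyMeasurable_rescale hγ hβ hv a z, ?_, ?_,
    aestronglyMeasurable_rescale hγ hβ hG _ z, ?_, hgrad.rescale hγ hβ a z,
    WeakEq.rescale ha hβ heq z⟩
  · exact (mixedNorm_rescale_le hγ hβ top_ne_zero 2 v ha.le z).trans_lt
      (ENNReal.mul_lt_top ENNReal.ofReal_lt_top hvn)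
  · filter_upwards [(quasiMeasurePreserving_mul_Ioi hγ).ae hdiv] with t ht
    exact ht.smul_comp_smul_add hβ a z
  · rw [lintegral_gradSq_rescale hγ hβ hG]
    exact ENNReal.mul_lt_top ENNReal.ofReal_lt_top hGn

end Rescale

/-! ### Translations and the category argument -/

lemma tendsto_eLpNorm_two_indicator {α F : Type*} [MeasurableSpace α] [NormedAddCommGroup F]
    {μ : Measure α} {f : α → F} (hf : MemLp f 2 μ) {S : ℕ → Set α}
    (hS : ∀ k, MeasurableSet (S k)) (hS_ev : ∀ x, ∀ᶠ k in atTop, x ∉ S k) :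
    Tendsto (fun k => eLpNorm ((S k).indicator f) 2 μ) atTop (𝓝 0) := by
  have hfin : ∫⁻ x, ‖f x‖ₑ ^ 2 ∂μ ≠ ∞ := by
    rw [← eLpNorm_two_sq]
    exact ENNReal.pow_ne_top hf.2.ne
  refine tendsto_eLpNorm_two_zero ?_
  simpa using tendsto_lintegral_of_dominated_convergence' (f := fun _ => 0)
    (fun x => ‖f x‖ₑ ^ 2) (fun k => (hf.1.indicator (hS k)).enorm.pow_const 2)
    (fun k => .of_forall fun x => by
      dsimp only
      gcongr
      exact enorm_indicator_le_enorm_self f x)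
    hfin (.of_forall fun x => tendsto_const_nhds.congr' <| by
      filter_upwards [hS_ev x] with k hk
      simp [indicator_of_notMem hk])

lemma tendsto_integral_translate_mul {E : Type*} [AddCommGroup E] [TopologicalSpace E]
    [IsTopologicalAddGroup E] [MeasurableSpace E] [BorelSpace E] {μ : Measure E}
    [μ.IsAddRightInvariant] {f φ : E → ℝ} (hf : MemLp f 2 μ) (hφ : MemLp φ 2 μ)
    (hφc : HasCompactSupport φ) {z : ℕ → E} (hz : Tendsto z atTop (cocompact E)) :
    Tendsto (fun k => ∫ x, f (x + z k) * φ x ∂μ) atTop (𝓝 0) := by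
  let S : ℕ → Set E := fun k => (fun x => x - z k) ⁻¹' tsupport φ
  have hS (k : ℕ) : MeasurableSet (S k) :=
    measurable_sub_const (z k) (isClosed_tsupport φ).measurableSet
  have hS_ev (x : E) : ∀ᶠ k in atTop, x ∉ S k :=
    ((Homeomorph.subLeft x).isClosedEmbedding.tendsto_cocompact.comp hz).eventually
      hφc.isCompact.compl_mem_cocompact
  have hlim := ENNReal.Tendsto.mul_const (tendsto_eLpNorm_two_indicator hf hS hS_ev)
    (Or.inr hφ.2.ne)
  rw [zero_mul] at hlim
  rw [tendsto_zero_iff_enorm_tendsto_zero]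
  refine tendsto_of_tendsto_of_tendsto_of_le_of_le tendsto_const_nhds hlim (fun _ => zero_le)
    fun k => ?_
  have hmp := measurePreserving_add_right μ (z k)
  have hind : AEStronglyMeasurable ((S k).indicator f) μ := hf.1.indicator (hS k)
  calc ‖∫ x, f (x + z k) * φ x ∂μ‖ₑ = ‖∫ x, (S k).indicator f (x + z k) * φ x ∂μ‖ₑ := by
        congr 2 with x
        by_cases hx : x ∈ tsupport φ
        · rw [indicator_of_mem (by simpa [S] using hx)]
        · simp only [image_eq_zero_of_notMem_tsupport hx, mul_zero]
    _ ≤ eLpNorm (fun x => (S k).indicator f (x + z k)) 2 μ * eLpNorm φ 2 μ :=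
        enorm_integral_mul_le (hind.comp_measurePreserving hmp) hφ.1
    _ = eLpNorm ((S k).indicator f) 2 μ * eLpNorm φ 2 μ := by
        rw [← eLpNorm_comp_measurePreserving hind hmp, Function.comp_def]

section EuclideanPairing

variable {α ι : Type*} [MeasurableSpace α] [Fintype ι] {μ : Measure α}
  {v w : α → EuclideanSpace ℝ ι} {g : ι → α → ℝ}

lemma integrable_apply_mul (hv : MemLp v 2 μ) (hg : ∀ i, MemLp (g i) 2 μ) (i : ι) :
    Integrable (fun x => v x i * g i x) μ :=
  (hv.eval_piLp i).integrable_mul (q := 2) (hg i)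

lemma integral_sum_mul (hv : MemLp v 2 μ) (hg : ∀ i, MemLp (g i) 2 μ) :
    ∫ x, ∑ i, v x i * g i x ∂μ = ∑ i, ∫ x, v x i * g i x ∂μ :=
  integral_finsetSum _ fun i _ => integrable_apply_mul hv hg i

lemma integral_sum_add_mul (hv : MemLp v 2 μ) (hw : MemLp w 2 μ) (hg : ∀ i, MemLp (g i) 2 μ) :
    ∫ x, ∑ i, (v x + w x) i * g i x ∂μ
      = ∫ x, ∑ i, v x i * g i x ∂μ + ∫ x, ∑ i, w x i * g i x ∂μ := by
  have hsum {f : α → EuclideanSpace ℝ ι} (hf : MemLp f 2 μ) :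
      Integrable (fun x => ∑ i, f x i * g i x) μ :=
    integrable_finsetSum _ fun i _ => integrable_apply_mul hf hg i
  rw [← integral_add (hsum hv) (hsum hw)]
  simp only [PiLp.add_apply, add_mul, Finset.sum_add_distrib]

end EuclideanPairing

lemma IsDivFree.add {v w : E3 → E3} (hv : MemLp v 2 volume) (hw : MemLp w 2 volume)
    (hvd : IsDivFree v) (hwd : IsDivFree w) : IsDivFree fun x => v x + w x := by
  intro φ hφ hφc
  rw [integral_sum_add_mul hv hw fun i => (contDiff_pd hφ i).continuous.memLp_of_hasCompactSupport
    (hasCompactSupport_pd hφc i), hvd φ hφ hφc, hwd φ hφ hφc, add_zero]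

lemma tendsto_integral_of_tendsto_Lp {u : ℕ → Lp E3 2 (volume : Measure E3)}
    {w : Lp E3 2 (volume : Measure E3)} (h : Tendsto u atTop (𝓝 w)) {Φ : E3 → E3}
    (hΦ : MemLp Φ 2 volume) :
    Tendsto (fun k => ∫ x, ∑ i, u k x i * Φ x i) atTop (𝓝 (∫ x, ∑ i, w x i * Φ x i)) := by
  have hinner (f : Lp E3 2 (volume : Measure E3)) :
      inner ℝ (hΦ.toLp Φ) f = ∫ x, ∑ i, f x i * Φ x i := by
    rw [L2.inner_def]
    refine integral_congr_ae ?_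
    filter_upwards [hΦ.coeFn_toLp] with x hx
    simp [hx, PiLp.inner_apply]
  simpa only [← hinner] using tendsto_const_nhds.inner h

lemma tendsto_integral_translate_add {V w : E3 → E3} (hV : MemLp V 2 volume)
    (hw : MemLp w 2 volume) {z : ℕ → E3} (hz : Tendsto z atTop (cocompact E3)) {Φ : E3 → E3}
    (hΦ : MemLp Φ 2 volume) (hΦc : HasCompactSupport Φ) :
    Tendsto (fun k => ∫ x, ∑ i, (V (x + z k) + w x) i * Φ x i) atTop
      (𝓝 (∫ x, ∑ i, w x i * Φ x i)) := by
  have hVk (k : ℕ) : MemLp (fun x => V (x + z k)) 2 volume :=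
    hV.comp_measurePreserving (measurePreserving_add_right volume (z k))
  have hΦi (i : Fin 3) : MemLp (fun x => Φ x i) 2 volume := hΦ.eval_piLp i
  have hlim : Tendsto (fun k => ∑ i, ∫ x, V (x + z k) i * Φ x i) atTop (𝓝 (∑ _i : Fin 3, 0)) :=
    tendsto_finsetSum _ fun i _ => tendsto_integral_translate_mul (hV.eval_piLp i) (hΦi i)
      (hΦc.comp_left (g := fun v : E3 => v i) rfl) hz
  simp only [integral_sum_add_mul (hVk _) hw hΦi, integral_sum_mul (hVk _) hΦi]
  simpa using hlim.add_const (∫ x, ∑ i, w x i * Φ x i)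

lemma IsWeakNS.congr {ν : ℝ} {u₀ v₀ : E3 → E3} {u : ℝ → E3 → E3}
    {G : ℝ → E3 → Fin 3 → Fin 3 → ℝ} (h : IsWeakNS ν u₀ u G) (h0 : u₀ =ᵐ[volume] v₀) :
    IsWeakNS ν v₀ u G := by
  obtain ⟨hu, hn, hdiv, hG, hGn, hgrad, heq⟩ := h
  exact ⟨hu, hn, hdiv, hG, hGn, hgrad, WeakEq.congr heq (.of_forall fun _ => rfl) h0⟩

namespace HasBoundedSolution

variable {r s n : ℝ≥0∞} {ν : ℝ}

lemma congr {u₀ v₀ : E3 → E3} (h : HasBoundedSolution r s ν n u₀) (h0 : u₀ =ᵐ[volume] v₀) :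
    HasBoundedSolution r s ν n v₀ := by
  obtain ⟨u, G, hu, hn⟩ := h
  exact ⟨u, G, hu.congr h0, hn⟩

lemma translate (hr : r ≠ 0) {u₀ : E3 → E3} (h : HasBoundedSolution r s ν n u₀) (z : E3) :
    HasBoundedSolution r s ν n fun x => u₀ (x + z) := by
  obtain ⟨u, G, hu, h2, hG, hrs⟩ := h
  refine ⟨rescale 1 1 1 z u, rescale 1 1 1 z G, by simpa using hu.rescale one_pos one_pos z, ?_,
    ?_, ?_⟩
  · simpa using (mixedNorm_rescale_le one_pos one_pos top_ne_zero 2 u zero_le_one z).trans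
      (mul_le_mul_right h2 _)
  · simpa [lintegral_gradSq_rescale one_pos one_pos hu.2.2.2.1] using hG
  · simpa using (mixedNorm_rescale_le one_pos one_pos hr s u zero_le_one z).trans
      (mul_le_mul_right hrs _)

end HasBoundedSolution

lemma isClosed_hasBoundedSolution {r n : ℝ≥0∞} (hr : r ≠ 0) (s : ℝ≥0∞) (hn : n ≠ ∞) (ν : ℝ) :
    IsClosed {u₀ : L2σ | HasBoundedSolution r s ν n (u₀ : Lp E3 2 (volume : Measure E3))} :=
  IsSeqClosed.isClosed fun _ _ hu huw => .of_tendsto hr hn hu fun _ hΦ hΦc =>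
    tendsto_integral_of_tendsto_Lp ((continuous_subtype_val.tendsto _).comp huw)
      (hΦ.memLp_of_hasCompactSupport hΦc)

section Ball

variable {r s n : ℝ≥0∞} {ν ε : ℝ} {v₀ : L2σ} (hr : r ≠ 0)
  (hball : ∀ u₀ ∈ Metric.ball v₀ ε,
    HasBoundedSolution r s ν n (u₀ : Lp E3 2 (volume : Measure E3)))
  {w : E3 → E3} (hw : MemLp w 2 volume) (hwd : IsDivFree w)
  (hwε : eLpNorm w 2 volume < ENNReal.ofReal ε)
include hball hw hwd hwε

lemma hasBoundedSolution_add_of_ball : HasBoundedSolution r s ν n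
    fun x => (v₀ : Lp E3 2 (volume : Measure E3)) x + w x := by
  set V : Lp E3 2 (volume : Measure E3) := v₀.1 with hV
  have hadd : (V + hw.toLp w : Lp E3 2 (volume : Measure E3)) =ᵐ[volume] fun x => V x + w x := by
    filter_upwards [Lp.coeFn_add V (hw.toLp w), hw.coeFn_toLp] with x hx hwx
    rw [hx, Pi.add_apply, hwx]
  have hmem : V + hw.toLp w ∈ L2σ :=
    (IsDivFree.add (Lp.memLp V) hw v₀.2 hwd).congr hadd.symm
  refine (hball ⟨V + hw.toLp w, hmem⟩ ?_).congr hadd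
  rw [Metric.mem_ball, Subtype.dist_eq, dist_eq_norm, ← hV, add_sub_cancel_left, Lp.norm_toLp]
  exact ENNReal.toReal_lt_of_lt_ofReal hwε

include hr in
/-- The solution with datum `v₀(· + z) + w` inherits its bounds from a datum in the ball, and as
`z → ∞` this datum converges weakly to `w`. -/
lemma hasBoundedSolution_of_ball (hn : n ≠ ∞) : HasBoundedSolution r s ν n w := by
  let z : ℕ → E3 := fun k => EuclideanSpace.single 0 (k : ℝ)
  have hz : Tendsto z atTop (cocompact E3) := by
    rw [← Metric.cobounded_eq_cocompact, ← tendsto_norm_atTop_iff_cobounded]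
    simpa [z] using tendsto_natCast_atTop_atTop (R := ℝ)
  refine HasBoundedSolution.of_tendsto
    (u₀ := fun k x => (v₀ : Lp E3 2 (volume : Measure E3)) (x + z k) + w x) hr hn (fun k => ?_)
    fun Φ hΦ hΦc => tendsto_integral_translate_add (Lp.memLp v₀.1) hw hz
      (hΦ.memLp_of_hasCompactSupport hΦc) hΦc
  have hmp := measurePreserving_add_right (volume : Measure E3) (-z k)
  have hwd' : IsDivFree fun x => w (x + -z k) := by
    simpa using hwd.smul_comp_smul_add one_pos 1 (-z k)
  have hε' : eLpNorm (fun x => w (x + -z k)) 2 volume < ENNReal.ofReal ε := by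
    rwa [show eLpNorm (fun x => w (x + -z k)) 2 volume = eLpNorm w 2 volume from
      eLpNorm_comp_measurePreserving hw.1 hmp]
  simpa using (hasBoundedSolution_add_of_ball hball (hw.comp_measurePreserving hmp) hwd'
    hε').translate hr (z k)

end Ball

lemma exists_uniform_bound {r s : ℝ≥0∞} (hr : r ≠ 0) {ν : ℝ}
    (h : ¬ IsMeagre {u₀ : L2σ | ∃ u G,
        IsWeakNS ν ((u₀ : Lp E3 2 (volume : Measure E3)) : E3 → E3) u G ∧
        mixedNorm r s (Ioi 0) u < ∞}) :
    ∃ (n : ℕ) (ε : ℝ), 0 < ε ∧ ∀ w : E3 → E3, MemLp w 2 volume → IsDivFree w →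
      eLpNorm w 2 volume < ENNReal.ofReal ε → HasBoundedSolution r s ν n w := by
  let A : ℕ → Set L2σ := fun n =>
    {u₀ | HasBoundedSolution r s ν n (u₀ : Lp E3 2 (volume : Measure E3))}
  have hA (n : ℕ) : IsClosed (A n) :=
    isClosed_hasBoundedSolution hr s (ENNReal.natCast_ne_top n) ν
  obtain ⟨n, v₀, hv₀⟩ : ∃ n, (interior (A n)).Nonempty := by
    by_contra! hempty
    refine h (IsMeagre.mono ?_ (isMeagre_iUnion fun n =>
      ((hA n).isNowhereDense_iff.2 (hempty n)).isMeagre))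
    rintro u₀ ⟨u, G, hu, hrs⟩
    obtain ⟨n, hn⟩ := ENNReal.exists_nat_gt (max_lt (max_lt hu.2.1 hu.2.2.2.2.1) hrs).ne
    rw [max_lt_iff, max_lt_iff] at hn
    exact mem_iUnion.2 ⟨n, u, G, hu, hn.1.1.le, hn.1.2.le, hn.2.le⟩
  obtain ⟨ε, hε, hball⟩ := Metric.mem_nhds_iff.1 (mem_interior_iff_mem_nhds.1 hv₀)
  exact ⟨n, ε, hε, fun w hw hwd hwε =>
    hasBoundedSolution_of_ball hr hball hw hwd hwε (ENNReal.natCast_ne_top n)⟩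

/-! ### Normalisation of viscosity and datum -/

lemma gradL2_rescale {a β : ℝ} (ha : 0 < a) (hβ : 0 < β) {G : ℝ → E3 → Fin 3 → Fin 3 → ℝ}
    (hG : AEStronglyMeasurable (Function.uncurry G) μST) (z : E3) :
    gradL2 (rescale (a * β) β (a * β) z G) = ENNReal.ofReal (√a / β) * gradL2 G := by
  have hfactor : (a * β) ^ 2 * ((a * β)⁻¹ * β⁻¹ ^ 3) = (√a / β) ^ 2 := by
    rw [div_pow, Real.sq_sqrt ha.le]
    field_simp
  rw [gradL2, lintegral_gradSq_rescale (mul_pos ha hβ) hβ hG, hfactor,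
    ENNReal.mul_rpow_of_nonneg _ _ (by norm_num),
    ENNReal.ofReal_rpow_of_nonneg (by positivity) (by norm_num), ← Real.sqrt_eq_rpow,
    Real.sqrt_sq (by positivity), gradL2]

lemma HasBoundedSolution.exists_rescaled {r s n : ℝ≥0∞} {ν a β : ℝ} (hr : r ≠ 0) (ha : 0 < a)
    (hβ : 0 < β) {U : E3 → E3} (h : HasBoundedSolution r s ν n fun x => a⁻¹ • U (β⁻¹ • x)) :
    ∃ u G, IsWeakNS (ν * a / β) U u G ∧
      mixedNorm ∞ 2 (Ioi 0) u ≤ ENNReal.ofReal (a * (β⁻¹ ^ 3) ^ (1 / 2 : ℝ)) * n ∧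
      gradL2 G ≤ ENNReal.ofReal (√a / β) * n ^ (1 / 2 : ℝ) ∧
      mixedNorm r s (Ioi 0) u ≤
        ENNReal.ofReal (a * (β⁻¹ ^ 3) ^ (1 / s).toReal * (a * β)⁻¹ ^ (1 / r).toReal) * n := by
  obtain ⟨v, G, hv, hv2, hvG, hvrs⟩ := h
  have haβ : 0 < a * β := mul_pos ha hβ
  have hsol := hv.rescale ha hβ 0
  simp only [add_zero, inv_smul_smul₀ hβ.ne', smul_inv_smul₀ ha.ne'] at hsol
  refine ⟨_, _, hsol, ?_, ?_, ?_⟩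
  · simpa using (mixedNorm_rescale_le haβ hβ top_ne_zero 2 v ha.le 0).trans
      (mul_le_mul_right hv2 _)
  · rw [gradL2_rescale ha hβ hv.2.2.2.1, gradL2]
    gcongr
  · exact (mixedNorm_rescale_le haβ hβ hr s v ha.le 0).trans (mul_le_mul_right hvrs _)

/-- The parameters are forced by the first two identities: `β = (δ * ν / (ν₀ * N)) ^ 2`. -/
lemma exists_scaling_parameters {ν ν₀ δ N : ℝ} (hν : 0 < ν) (hν₀ : 0 < ν₀) (hδ : 0 < δ)
    (hN : 0 < N) : ∃ a β : ℝ, 0 < a ∧ 0 < β ∧ ν₀ * a / β = ν ∧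
      a * (β⁻¹ ^ 3) ^ (1 / 2 : ℝ) = N / δ ∧ √ν * (√a / β) = √ν₀ * (N / δ) ∧
      ∀ ρ σ : ℝ, a * (β⁻¹ ^ 3) ^ σ * (a * β)⁻¹ ^ ρ
        = ν₀ ^ (5 * ρ + 6 * σ - 3) * δ ^ (2 - 4 * ρ - 6 * σ) *
          (ν ^ (-(3 : ℝ) * (5 / 3 * ρ + 2 * σ - 1)) * N ^ ((2 : ℝ) * (2 * ρ + 3 * σ - 1))) := by
  obtain ⟨x, rfl⟩ : ∃ x, Real.exp x = ν := ⟨_, Real.exp_log hν⟩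
  obtain ⟨x₀, rfl⟩ : ∃ x, Real.exp x = ν₀ := ⟨_, Real.exp_log hν₀⟩
  obtain ⟨d, rfl⟩ : ∃ x, Real.exp x = δ := ⟨_, Real.exp_log hδ⟩
  obtain ⟨m, rfl⟩ : ∃ x, Real.exp x = N := ⟨_, Real.exp_log hN⟩
  refine ⟨Real.exp (3 * x + 2 * d - 3 * x₀ - 2 * m), Real.exp (2 * (d + x - x₀ - m)),
    Real.exp_pos _, Real.exp_pos _, ?_, ?_, ?_, fun ρ σ => ?_⟩
  all_goals
    simp only [Real.sqrt_eq_rpow, ← Real.exp_add, ← Real.exp_sub, ← Real.exp_mul, ← Real.exp_neg,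
      ← Real.exp_nat_mul]
    congr 1
    push_cast
    ring

lemma exists_isWeakNS_of_norm_eq {r s : ℝ≥0∞} (hr : r ≠ 0) {ν ν₀ δ N b : ℝ} (hν : 0 < ν)
    (hν₀ : 0 < ν₀) (hδ : 0 < δ) (hN : 0 < N) (hb : 0 ≤ b)
    (h : ∀ w : E3 → E3, MemLp w 2 volume → IsDivFree w →
      eLpNorm w 2 volume = ENNReal.ofReal δ → HasBoundedSolution r s ν₀ (ENNReal.ofReal b) w)
    {U : E3 → E3} (hU : MemLp U 2 volume) (hUd : IsDivFree U)
    (hUN : eLpNorm U 2 volume = ENNReal.ofReal N) :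
    ∃ u G, IsWeakNS ν U u G ∧ mixedNorm ∞ 2 (Ioi 0) u ≤ ENNReal.ofReal (b / δ * N) ∧
      ENNReal.ofReal √ν * gradL2 G ≤ ENNReal.ofReal (√(ν₀ * b) / δ * N) ∧
      mixedNorm r s (Ioi 0) u ≤ ENNReal.ofReal
        (ν₀ ^ (5 * (1 / r).toReal + 6 * (1 / s).toReal - 3) *
          δ ^ (2 - 4 * (1 / r).toReal - 6 * (1 / s).toReal) * b *
          (ν ^ (-(3 : ℝ) * (5 / 3 * (1 / r).toReal + 2 * (1 / s).toReal - 1)) *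
            N ^ ((2 : ℝ) * (2 * (1 / r).toReal + 3 * (1 / s).toReal - 1)))) := by
  obtain ⟨a, β, ha, hβ, rfl, hamp, hgrad, hscal⟩ := exists_scaling_parameters hν hν₀ hδ hN
  have hβ' : 0 < β⁻¹ := inv_pos.2 hβ
  have hnorm : eLpNorm (fun x => a⁻¹ • U (β⁻¹ • x)) 2 volume = ENNReal.ofReal δ := by
    have hamp' : a⁻¹ * (β⁻¹⁻¹ ^ 3) ^ (1 / 2 : ℝ) * N = δ := by
      rw [inv_pow β⁻¹, Real.inv_rpow (by positivity), ← mul_inv, hamp]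
      field_simp
    have := eLpNorm_smul_comp_smul_add hβ' (inv_pos.2 ha).le U 0 2
    simp only [add_zero, hUN] at this
    rw [this, ← ENNReal.ofReal_mul (by positivity), ← hamp']
    simp
  obtain ⟨u, G, hu, hu2, hG, hrs⟩ := HasBoundedSolution.exists_rescaled hr ha hβ
    (h _ (by simpa using memLp_smul_comp_smul_add hβ' hU (inv_pos.2 ha).le 0)
      (by simpa using hUd.smul_comp_smul_add hβ' a⁻¹ 0) hnorm)
  refine ⟨u, G, hu, ?_, ?_, ?_⟩
  · rwa [hamp, ← ENNReal.ofReal_mul (by positivity), div_mul_comm] at hu2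
  · calc ENNReal.ofReal √(ν₀ * a / β) * gradL2 G
        ≤ ENNReal.ofReal √(ν₀ * a / β) *
            (ENNReal.ofReal (√a / β) * ENNReal.ofReal b ^ (1 / 2 : ℝ)) := by gcongr
      _ = ENNReal.ofReal (√(ν₀ * a / β) * (√a / β) * √b) := by
          rw [ENNReal.ofReal_rpow_of_nonneg hb (by norm_num), ← Real.sqrt_eq_rpow, ← mul_assoc,
            ← ENNReal.ofReal_mul (by positivity), ← ENNReal.ofReal_mul (by positivity)]
      _ = ENNReal.ofReal (√(ν₀ * b) / δ * N) := by
          rw [hgrad, Real.sqrt_mul hν₀.le]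
          ring_nf
  · rwa [hscal, ← ENNReal.ofReal_mul (by positivity), mul_right_comm] at hrs

lemma mixedNorm_zero {r : ℝ≥0∞} (hr : r ≠ 0) (s : ℝ≥0∞) (I : Set ℝ) : mixedNorm r s I 0 = 0 := by
  rcases eq_or_ne r ∞ with rfl | hr'
  · exact nonpos_iff_eq_zero.1 (mixedNorm_top_le_iff.2 (.of_forall fun t => by simp))
  · simp [mixedNorm, hr', ENNReal.toReal_pos hr hr']

lemma gradL2_zero : gradL2 0 = 0 := by simp [gradL2, gradSq]

lemma isWeakNS_zero (ν : ℝ) : IsWeakNS ν 0 0 0 := by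
  refine ⟨aestronglyMeasurable_zero, ?_, .of_forall fun _ => isDivFree_zero,
    aestronglyMeasurable_zero, ?_, fun ψ _ _ _ i j => ?_, fun φ _ => ?_⟩
  · simp [mixedNorm_zero]
  all_goals simp [gradSq]

lemma exists_bounds_of_uniform_bound {r s : ℝ≥0∞} (hr : r ≠ 0) {ν₀ ε b : ℝ} (hν₀ : 0 < ν₀)
    (hε : 0 < ε) (hb : 0 ≤ b)
    (h : ∀ w : E3 → E3, MemLp w 2 volume → IsDivFree w →
      eLpNorm w 2 volume < ENNReal.ofReal ε → HasBoundedSolution r s ν₀ (ENNReal.ofReal b) w) :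
    ∃ C : ℝ, 0 < C ∧ ∀ ν : ℝ, 0 < ν → ∀ u₀ : L2σ, ∃ u G,
      IsWeakNS ν ((u₀ : Lp E3 2 (volume : Measure E3)) : E3 → E3) u G ∧
      mixedNorm ∞ 2 (Ioi 0) u + ENNReal.ofReal (Real.sqrt ν) * gradL2 G
        ≤ ENNReal.ofReal (C * ‖(u₀ : Lp E3 2 (volume : Measure E3))‖) ∧
      mixedNorm r s (Ioi 0) u
        ≤ ENNReal.ofReal (C * ν ^ (-(3 : ℝ) * (5 / 3 * (1 / r).toReal + 2 * (1 / s).toReal - 1)) *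
            ‖(u₀ : Lp E3 2 (volume : Measure E3))‖ ^
              ((2 : ℝ) * (2 * (1 / r).toReal + 3 * (1 / s).toReal - 1))) := by
  set δ := ε / 2
  have hδ : 0 < δ := half_pos hε
  have hδlt : ENNReal.ofReal δ < ENNReal.ofReal ε :=
    (ENNReal.ofReal_lt_ofReal_iff hε).2 (half_lt_self hε)
  set K := ν₀ ^ (5 * (1 / r).toReal + 6 * (1 / s).toReal - 3) *
    δ ^ (2 - 4 * (1 / r).toReal - 6 * (1 / s).toReal)
  have hK : 0 ≤ K * b := by positivity
  have hδb : 0 ≤ b / δ + √(ν₀ * b) / δ := by positivity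
  refine ⟨b / δ + √(ν₀ * b) / δ + K * b + 1, by positivity, fun ν hν ⟨U, hUd⟩ => ?_⟩
  rcases eq_or_ne U 0 with rfl | hU0
  · refine ⟨0, 0, (isWeakNS_zero ν).congr (Lp.coeFn_zero E3 2 volume).symm, ?_, ?_⟩
    · simp [mixedNorm_zero, gradL2_zero]
    · simp [mixedNorm_zero hr]
  have hN : 0 < ‖U‖ := norm_pos_iff.2 hU0
  obtain ⟨u, G, hu, hu2, hG, hrs⟩ := exists_isWeakNS_of_norm_eq hr hν hν₀ hδ hN hb
    (fun w hw hwd hwδ => h w hw hwd (hwδ ▸ hδlt)) (Lp.memLp U) hUd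
    ((Lp.enorm_def U).symm.trans (ofReal_norm U).symm)
  refine ⟨u, G, hu, (add_le_add hu2 hG).trans ?_, hrs.trans (ENNReal.ofReal_le_ofReal ?_)⟩
  · rw [← ENNReal.ofReal_add (by positivity) (by positivity), ← add_mul]
    exact ENNReal.ofReal_le_ofReal (mul_le_mul_of_nonneg_right (by linarith) hN.le)
  · rw [mul_assoc (_ + 1)]
    exact mul_le_mul_of_nonneg_right (by linarith) (by positivity)

lemma toReal_two_div_add_three_div {r s : ℝ≥0∞} (hr : r ≠ 0) (hs : s ≠ 0) :
    (2 / r + 3 / s).toReal = 2 * (1 / r).toReal + 3 * (1 / s).toReal := by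
  rw [ENNReal.toReal_add (by finiteness) (by finiteness)]
  simp [div_eq_mul_inv]

lemma toReal_five_div_add_two_div {r s : ℝ≥0∞} (hr : r ≠ 0) (hs : s ≠ 0) :
    (5 / (3 * r) + 2 / s).toReal = 5 / 3 * (1 / r).toReal + 2 * (1 / s).toReal := by
  rw [ENNReal.toReal_add (by finiteness) (by finiteness)]
  simp only [div_eq_mul_inv, toReal_mul, toReal_ofNat, toReal_inv, mul_inv_rev, one_mul]
  ring

theorem stmt_3_general (r s : ℝ≥0∞) (hr : r ≠ 0) (hs : s ≠ 0)
    (hyp : ∃ ν : ℝ, 0 < ν ∧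
      ¬ IsMeagre {u₀ : L2σ | ∃ u G,
        IsWeakNS ν ((u₀ : Lp E3 2 (volume : Measure E3)) : E3 → E3) u G ∧
        mixedNorm r s (Ioi 0) u < ∞}) :
    ∃ C : ℝ, 0 < C ∧ ∀ ν : ℝ, 0 < ν → ∀ u₀ : L2σ, ∃ u G,
      IsWeakNS ν ((u₀ : Lp E3 2 (volume : Measure E3)) : E3 → E3) u G ∧
      mixedNorm ∞ 2 (Ioi 0) u + ENNReal.ofReal (Real.sqrt ν) * gradL2 G
        ≤ ENNReal.ofReal (C * ‖(u₀ : Lp E3 2 (volume : Measure E3))‖) ∧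
      mixedNorm r s (Ioi 0) u
        ≤ ENNReal.ofReal (C * ν ^ (-(3:ℝ) * ((5/(3*r) + 2/s).toReal - 1)) *
            ‖(u₀ : Lp E3 2 (volume : Measure E3))‖ ^ ((2:ℝ) * ((2/r + 3/s).toReal - 1))) := by
  obtain ⟨ν₀, hν₀, hmeagre⟩ := hyp
  obtain ⟨n, ε, hε, hbound⟩ := exists_uniform_bound hr hmeagre
  rw [toReal_two_div_add_three_div hr hs, toReal_five_div_add_two_div hr hs]
  rw [← ENNReal.ofReal_natCast] at hbound
  exact exists_bounds_of_uniform_bound hr hν₀ hε n.cast_nonneg hbound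

/-- Implication (i) ⇒ (ii) of the main theorem, for `X = L^s(ℝ³;ℝ³)`, `Z = L²_σ`:
if for some viscosity a non-meagre set of `L²_σ` data admits a weak solution in
`L^r(0,∞;L^s)`, then the a priori estimates hold for all viscosities and all data. -/
theorem stmt_3 (r s : ℝ≥0∞) (hr : 4/3 < r) (hs : 4/3 < s)
    (h1 : 1 < 2/r + 3/s) (h2 : 2/r + 3/s < 3/2)
    (hyp : ∃ ν : ℝ, 0 < ν ∧
      ¬ IsMeagre {u₀ : L2σ | ∃ u G,
        IsWeakNS ν ((u₀ : Lp E3 2 (volume : Measure E3)) : E3 → E3) u G ∧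
        mixedNorm r s (Ioi 0) u < ∞}) :
    ∃ C : ℝ, 0 < C ∧ ∀ ν : ℝ, 0 < ν → ∀ u₀ : L2σ, ∃ u G,
      IsWeakNS ν ((u₀ : Lp E3 2 (volume : Measure E3)) : E3 → E3) u G ∧
      mixedNorm ∞ 2 (Ioi 0) u + ENNReal.ofReal (Real.sqrt ν) * gradL2 G
        ≤ ENNReal.ofReal (C * ‖(u₀ : Lp E3 2 (volume : Measure E3))‖) ∧
      mixedNorm r s (Ioi 0) u
        ≤ ENNReal.ofReal (C * ν ^ (-(3:ℝ) * ((5/(3*r) + 2/s).toReal - 1)) *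
            ‖(u₀ : Lp E3 2 (volume : Measure E3))‖ ^ ((2:ℝ) * ((2/r + 3/s).toReal - 1))) :=
  stmt_3_general r s (ne_bot_of_gt hr) (ne_bot_of_gt hs) hyp
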